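/- For every t ≥ 1, the space J^{w,Co₀}_{*,Λ,t} of Conway invariant weak Jacobi forms of integral weight and index t is a free module of rank s(t) over M_*(SL₂(ℤ)) = ℂ[E₄,E₆]; the q⁰-terms of any set of free generators are ℂ-linear combinations of the basic Conway orbits of index t and are linearly independent over ℂ; and J^{Co₀}_{*,Λ,t} is also a free module of the same rank s(t) over ℂ[E₄,E₆]. -/

import Mathlib

open Complex Matrix UpperHalfPlane
open scoped Manifold MatrixGroups Real Topology BigOperators

noncomputable section

/-- Vectors of the rank-24 lattice (coordinates w.r.t. a fixed basis). -/
abbrev LV := Fin 24 → ℤ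

/-- Complexified vectors. -/
abbrev CV := Fin 24 → ℂ

/-- The bilinear form attached to a Gram matrix `B`. -/
def pairZ (B : Matrix (Fin 24) (Fin 24) ℤ) (v u : LV) : ℤ := v ⬝ᵥ B.mulVec u

/-- The complex bilinear extension of the form. -/
def pairC (B : Matrix (Fin 24) (Fin 24) ℤ) (z w : CV) : ℂ :=
  z ⬝ᵥ ((B.map (Int.cast : ℤ → ℂ)).mulVec w)

/-- Inclusion of lattice vectors into complexified vectors. -/
def liftC (v : LV) : CV := fun i => (v i : ℂ)

/-- `B` is a Gram matrix of the Leech lattice: even, unimodular, positive definite of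
rank 24, with no vectors of norm 2 (no roots). -/
def IsLeech (B : Matrix (Fin 24) (Fin 24) ℤ) : Prop :=
  B.IsSymm ∧ B.det = 1 ∧ (∀ v : LV, v ≠ 0 → 0 < pairZ B v v) ∧
    (∀ v : LV, Even (pairZ B v v)) ∧ (∀ v : LV, pairZ B v v ≠ 2)

/-- The automorphism group `Co₀ = Aut(Λ)` of the lattice, as a set of integral matrices. -/
def ConwayGroup (B : Matrix (Fin 24) (Fin 24) ℤ) : Set (Matrix (Fin 24) (Fin 24) ℤ) :=
  {σ | IsUnit σ.det ∧ σᵀ * B * σ = B}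

/-- Action of an integral matrix on complexified vectors. -/
def actC (σ : Matrix (Fin 24) (Fin 24) ℤ) (z : CV) : CV :=
  (σ.map (Int.cast : ℤ → ℂ)).mulVec z

/-- `e(x) = exp(2πix)`. -/
def eC (x : ℂ) : ℂ := Complex.exp (2 * (Real.pi : ℂ) * Complex.I * x)

/-- The Fourier term `qⁿ ζ^ℓ`. -/
def fterm (B : Matrix (Fin 24) (Fin 24) ℤ) (n : ℕ) (ℓ : LV) (τ : UpperHalfPlane) (z : CV) : ℂ :=
  eC ((n : ℂ) * (τ : ℂ)) * eC (pairC B (liftC ℓ) z)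

/-- Lower-left entry of `A ∈ SL(2,ℤ)`, as a complex number. -/
def slc (A : SL(2, ℤ)) : ℂ := ((A : Matrix (Fin 2) (Fin 2) ℤ) 1 0 : ℤ)

/-- Lower-right entry of `A ∈ SL(2,ℤ)`, as a complex number. -/
def sld (A : SL(2, ℤ)) : ℂ := ((A : Matrix (Fin 2) (Fin 2) ℤ) 1 1 : ℤ)

/-- The automorphy factor `cτ + d`. -/
def jfactor (A : SL(2, ℤ)) (τ : UpperHalfPlane) : ℂ := slc A * (τ : ℂ) + sld A

/-- `φ : ℍ × (Λ⊗ℂ) → ℂ` is a Conway invariant weak Jacobi form of weight `k` and index `t`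
with Fourier coefficients `f`. -/
structure IsJacobiFormWith (B : Matrix (Fin 24) (Fin 24) ℤ) (k : ℤ) (t : ℕ)
    (φ : UpperHalfPlane → CV → ℂ) (f : ℕ → LV → ℂ) : Prop where
  holo_tau : ∀ z : CV, MDifferentiable 𝓘(ℂ) 𝓘(ℂ) fun τ : UpperHalfPlane => φ τ z
  holo_z : ∀ τ : UpperHalfPlane, Differentiable ℂ (φ τ)
  conway_invar : ∀ σ ∈ ConwayGroup B, ∀ (τ : UpperHalfPlane) (z : CV), φ τ (actC σ z) = φ τ z
  quasi_periodic : ∀ (x y : LV) (τ : UpperHalfPlane) (z : CV),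
    φ τ (z + (τ : ℂ) • liftC x + liftC y) =
      Complex.exp (-(t : ℂ) * (Real.pi : ℂ) * Complex.I * (pairZ B x x : ℂ) * (τ : ℂ)
        - 2 * (t : ℂ) * (Real.pi : ℂ) * Complex.I * pairC B (liftC x) z) * φ τ z
  modular : ∀ (A : SL(2, ℤ)) (τ : UpperHalfPlane) (z : CV),
    φ (A • τ) ((jfactor A τ)⁻¹ • z) =
      (jfactor A τ) ^ k *
        Complex.exp ((t : ℂ) * (Real.pi : ℂ) * Complex.I * slc A * pairC B z z / jfactor A τ) *
        φ τ z
  expansion : ∀ (τ : UpperHalfPlane) (z : CV),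
    HasSum (fun p : ℕ × LV => f p.1 p.2 * fterm B p.1 p.2 τ z) (φ τ z)

/-- Conway invariant weak Jacobi forms. -/
def IsWeakJacobiForm (B : Matrix (Fin 24) (Fin 24) ℤ) (k : ℤ) (t : ℕ)
    (φ : UpperHalfPlane → CV → ℂ) : Prop :=
  ∃ f, IsJacobiFormWith B k t φ f

/-- Conway invariant holomorphic Jacobi forms. -/
def IsHolJacobiForm (B : Matrix (Fin 24) (Fin 24) ℤ) (k : ℤ) (t : ℕ)
    (φ : UpperHalfPlane → CV → ℂ) : Prop :=
  ∃ f, IsJacobiFormWith B k t φ f ∧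
    ∀ (n : ℕ) (ℓ : LV), 2 * (n : ℤ) * t - pairZ B ℓ ℓ < 0 → f n ℓ = 0

/-- Modular forms of weight `k` on `SL₂(ℤ)`; the ring of all of them is `ℂ[E₄,E₆]`. -/
abbrev MForm (k : ℤ) := ModularForm (CongruenceSubgroup.Gamma 1) k

/-- The family `φ i` (of weights `w i`) freely generates the module of all forms satisfying
`P` over the ring `M_*(SL₂(ℤ)) = ℂ[E₄,E₆]` of modular forms on `SL₂(ℤ)`. -/
def FreelyGenerates (P : ℤ → (UpperHalfPlane → CV → ℂ) → Prop) {n : ℕ}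
    (w : Fin n → ℤ) (φ : Fin n → UpperHalfPlane → CV → ℂ) : Prop :=
  (∀ i, P (w i) (φ i)) ∧
  ∀ (k : ℤ) (ψ : UpperHalfPlane → CV → ℂ), P k ψ →
    ∃! g : (i : Fin n) → MForm (k - w i),
      ∀ (τ : UpperHalfPlane) (z : CV), ψ τ z = ∑ i, (g i) τ * φ i τ z

/-- The point `(aτ+b)/d` of the upper half-plane (for `a, d > 0`). -/
def heckePt (a d b : ℕ) (τ : UpperHalfPlane) : UpperHalfPlane :=
  if h : 0 < ((((a : ℂ) * (τ : ℂ) + (b : ℂ)) / (d : ℂ)).im) then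
    ⟨((a : ℂ) * (τ : ℂ) + (b : ℂ)) / (d : ℂ), h⟩ else τ

/-- The Hecke operator `T₋(m)` on Jacobi forms of weight `k`. -/
def heckeOp (k : ℤ) (m : ℕ) (φ : UpperHalfPlane → CV → ℂ) : UpperHalfPlane → CV → ℂ :=
  fun τ z => (m : ℂ)⁻¹ * ∑ d ∈ m.divisors, ∑ b ∈ Finset.range d,
    ((m / d : ℕ) : ℂ) ^ k * φ (heckePt (m / d) d b τ) (((m / d : ℕ) : ℂ) • z)

/-- The Jacobi theta function `Θ_Λ = A₁` of the lattice. -/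
def thetaLeech (B : Matrix (Fin 24) (Fin 24) ℤ) : UpperHalfPlane → CV → ℂ := fun τ z =>
  ∑' ℓ : LV, Complex.exp ((Real.pi : ℂ) * Complex.I * (pairZ B ℓ ℓ : ℂ) * (τ : ℂ)
    + 2 * (Real.pi : ℂ) * Complex.I * pairC B (liftC ℓ) z)

/-- `σ_k(n) = Σ_{d ∣ n} d^k`. -/
def sigmaNat (k n : ℕ) : ℕ := ∑ d ∈ n.divisors, d ^ k

/-- `A_t = σ₁₁(t)⁻¹ (A₁ | T₋(t))`, a holomorphic Jacobi form of weight 12 and index `t`. -/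
def Aform (B : Matrix (Fin 24) (Fin 24) ℤ) (t : ℕ) : UpperHalfPlane → CV → ℂ := fun τ z =>
  ((sigmaNat 11 t : ℂ))⁻¹ * heckeOp 12 t (thetaLeech B) τ z

/-- The quasimodular Eisenstein series `E₂`. -/
def E2 : UpperHalfPlane → ℂ := fun τ =>
  1 - 24 * ∑' n : ℕ, (sigmaNat 1 (n + 1) : ℂ) * eC (((n : ℂ) + 1) * (τ : ℂ))

/-- The discriminant cusp form `Δ(τ) = q ∏ (1-qⁿ)^24`. -/
def DeltaForm : UpperHalfPlane → ℂ := fun τ =>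
  eC (τ : ℂ) * ∏' n : ℕ, (1 - eC (((n : ℂ) + 1) * (τ : ℂ))) ^ 24

/-- `aτ`. -/
def scaleH (a : ℕ) (τ : UpperHalfPlane) : UpperHalfPlane := heckePt a 1 0 τ

/-- `(τ+j)/t`. -/
def sliceH (t j : ℕ) (τ : UpperHalfPlane) : UpperHalfPlane := heckePt 1 t j τ

/-- `f₂(τ) = (tE₂(tτ) - E₂(τ))/(t-1)`, a modular form of weight 2 on `Γ₀(t)`. -/
def f2w (t : ℕ) (τ : UpperHalfPlane) : ℂ := ((t : ℂ) * E2 (scaleH t τ) - E2 τ) / ((t : ℂ) - 1)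

/-- `B_t`, a holomorphic Jacobi form of weight 14 and index `t` (for `t` prime). -/
def Bform (B : Matrix (Fin 24) (Fin 24) ℤ) (t : ℕ) : UpperHalfPlane → CV → ℂ := fun τ z =>
  ((t : ℂ) ^ 12 / ((t : ℂ) ^ 12 - 1)) *
    (f2w t τ * thetaLeech B (scaleH t τ) ((t : ℂ) • z)
      - (t : ℂ) ^ (-13 : ℤ) *
        ∑ j ∈ Finset.range t, f2w t (sliceH t j τ) * thetaLeech B (sliceH t j τ) z)

/-- Fourier coefficients of `E₂`. -/
def e2coeff : ℕ → ℂ := fun m => if m = 0 then 1 else -24 * (sigmaNat 1 m : ℂ)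

/-- Fourier coefficients of the image `H_k(φ)` of the modified heat operator applied to a
Jacobi form of weight `k` and index `t` with Fourier coefficients `f`:
`H_k(φ) = 𝓗(φ) + ((12-k)/12)E₂φ` where `𝓗` multiplies `f(n,ℓ)` by `n - (ℓ,ℓ)/(2t)`. -/
def heatCoeff (B : Matrix (Fin 24) (Fin 24) ℤ) (k : ℤ) (t : ℕ) (f : ℕ → LV → ℂ) :
    ℕ → LV → ℂ := fun n ℓ =>
  ((n : ℂ) - (pairZ B ℓ ℓ : ℂ) / (2 * (t : ℂ))) * f n ℓ +
    ((12 - k : ℤ) : ℂ) / 12 * ∑ m ∈ Finset.range (n + 1), e2coeff m * f (n - m) ℓ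

/-- The function with Fourier coefficients `f`. -/
def fourierSeries (B : Matrix (Fin 24) (Fin 24) ℤ) (f : ℕ → LV → ℂ) :
    UpperHalfPlane → CV → ℂ := fun τ z =>
  ∑' p : ℕ × LV, f p.1 p.2 * fterm B p.1 p.2 τ z

/-- The family `Φ m = Φ_{12,m}` of Fourier–Jacobi coefficients of the Borcherds form `Φ₁₂`
at the Leech cusp:
`Δ(τ)·exp(−Σ_{m≥1}((Δ⁻¹A₁)|T₋(m))(τ,𝔷)e^{2πimω}) = Σ_{m≥0} Φ_{12,m}(τ,𝔷)e^{2πimω}`. -/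
def IsFJExpansionOfPhi12 (B : Matrix (Fin 24) (Fin 24) ℤ)
    (Φ : ℕ → UpperHalfPlane → CV → ℂ) : Prop :=
  ∀ (τ ω : UpperHalfPlane) (z : CV),
    HasSum (fun m : ℕ => Φ m τ z * eC ((m : ℂ) * (ω : ℂ)))
      (DeltaForm τ * Complex.exp
        (- ∑' m : ℕ, heckeOp 0 (m + 1) (fun σ w => thetaLeech B σ w / DeltaForm σ) τ z *
            eC (((m : ℂ) + 1) * (ω : ℂ))))

/-- `S_t`: the set of lattice vectors of minimal norm in their coset modulo `tΛ`. -/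
def minimalSet (B : Matrix (Fin 24) (Fin 24) ℤ) (t : ℕ) : Set LV :=
  {v | ∀ u : LV, (∃ w : LV, u = v + (t : ℤ) • w) → pairZ B v v ≤ pairZ B u u}

/-- `v` and `u` are conjugate modulo `tΛ` up to the Conway group. -/
def conjModT (B : Matrix (Fin 24) (Fin 24) ℤ) (t : ℕ) (v u : LV) : Prop :=
  ∃ σ ∈ ConwayGroup B, ∃ w : LV, v - σ.mulVec u = (t : ℤ) • w

/-- `s(t) = |(S_t/Co₀)/tΛ|`. -/
def sRank (B : Matrix (Fin 24) (Fin 24) ℤ) (t : ℕ) : ℕ :=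
  Nat.card (Quot (fun v u : minimalSet B t => conjModT B t v.1 u.1))

/-- `R` is a system of representatives for `(S_t/Co₀)/tΛ` (of minimal length). -/
def IsRepSystem (B : Matrix (Fin 24) (Fin 24) ℤ) (t : ℕ) (R : Finset LV) : Prop :=
  (↑R ⊆ minimalSet B t) ∧ ∀ v ∈ minimalSet B t, ∃! r, r ∈ R ∧ conjModT B t v r

/-- The Conway orbit of a lattice vector. -/
def orbitOf (B : Matrix (Fin 24) (Fin 24) ℤ) (v : LV) : Set LV :=
  {u | ∃ σ ∈ ConwayGroup B, u = σ.mulVec v}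

/-- `O` is a Conway orbit of Leech vectors of type `x` (i.e. norm `2x`) with `c` elements. -/
def OrbitData (B : Matrix (Fin 24) (Fin 24) ℤ) (O : Set LV) (x c : ℕ) : Prop :=
  (∃ v : LV, O = orbitOf B v) ∧ (∀ v ∈ O, pairZ B v v = 2 * (x : ℤ)) ∧ Nat.card O = c

/-- `W` is a `d`-dimensional subspace of the space of functions `ℍ × (Λ⊗ℂ) → ℂ`. -/
def SpanDimIs (W : (UpperHalfPlane → CV → ℂ) → Prop) (d : ℕ) : Prop :=
  ∃ φ : Fin d → UpperHalfPlane → CV → ℂ, (∀ i, W (φ i)) ∧ LinearIndependent ℂ φ ∧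
    ∀ ψ, W ψ → ∃ c : Fin d → ℂ, ψ = ∑ i, c i • φ i


set_option linter.unusedSectionVars false
set_option linter.unusedSimpArgs false
set_option linter.unusedVariables false

section
section Fourier
open MeasureTheory UnitAddTorus

local instance instMS1 : MeasureSpace UnitAddCircle := ⟨AddCircle.haarAddCircle⟩
local instance instHaar1 : Measure.IsAddHaarMeasure (volume : Measure UnitAddCircle) :=
  inferInstanceAs (Measure.IsAddHaarMeasure AddCircle.haarAddCircle)
local instance instProb1 : IsProbabilityMeasure (volume : Measure UnitAddCircle) :=
  inferInstanceAs (IsProbabilityMeasure AddCircle.haarAddCircle)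

variable {d : Type*} [Fintype d]

lemma eC_add (x y : ℂ) : eC (x + y) = eC x * eC y := by
  unfold eC; rw [← Complex.exp_add]; congr 1; ring

lemma eC_zero : eC 0 = 1 := by simp [eC]

lemma eC_int (n : ℤ) : eC n = 1 := by
  unfold eC; rw [Complex.exp_eq_one_iff]; exact ⟨n, by ring⟩

lemma eC_sum {ι : Type*} (s : Finset ι) (f : ι → ℂ) : eC (∑ i ∈ s, f i) = ∏ i ∈ s, eC (f i) := by
  unfold eC; rw [Finset.mul_sum, Complex.exp_sum]

lemma eC_real_norm (x : ℝ) : ‖eC x‖ = 1 := by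
  unfold eC
  rw [show 2 * (π : ℂ) * Complex.I * x = ((2 * π * x : ℝ) : ℂ) * Complex.I by push_cast; ring]
  exact Complex.norm_exp_ofReal_mul_I _

lemma mFourier_coe (n : d → ℤ) (x : d → ℝ) :
    mFourier n (fun i => (x i : UnitAddCircle)) = eC (∑ i, (n i : ℂ) * (x i : ℂ)) := by
  rw [eC_sum]
  simp only [mFourier, ContinuousMap.coe_mk]
  refine Finset.prod_congr rfl fun i _ => ?_
  rw [fourier_coe_apply]; unfold eC; congr 1; push_cast; ring

lemma torus_surj (y : UnitAddTorus d) : ∃ x : d → ℝ, (fun i => (x i : UnitAddCircle)) = y := by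
  choose x hx using fun i => QuotientAddGroup.mk_surjective (y i)
  exact ⟨x, funext hx⟩

lemma mFourierCoeff_mFourier [DecidableEq d] (m n : d → ℤ) :
    mFourierCoeff (mFourier n) m = if m = n then 1 else 0 := by
  have h := (orthonormal_iff_ite.mp (orthonormal_mFourier (d := d))) m n
  simp only [ContinuousMap.inner_toLp, ← mFourier_neg] at h
  rw [← h, mFourierCoeff]
  congr 1; ext t; simp [mul_comm]

lemma fourier_coeff_bound (c : (d → ℤ) → ℂ) (hc : Summable (fun l => ‖c l‖)) (M : ℝ)
    (h : ∀ x : d → ℝ, ‖∑' l, c l * eC (∑ i, (l i : ℂ) * (x i : ℂ))‖ ≤ M) (l : d → ℤ) :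
    ‖c l‖ ≤ M := by
  classical
  have hs : Summable (fun l => c l • mFourier (d := d) l) := by
    apply Summable.of_norm; simpa [norm_smul, mFourier_norm] using hc
  set F := ∑' l, c l • mFourier (d := d) l with hF
  have hev : ∀ y, HasSum (fun l => c l * mFourier l y) (F y) := fun y => by
    have := (ContinuousMap.evalCLM ℂ y).hasSum hs.hasSum
    simpa using! this
  have hb : ∀ y, ‖F y‖ ≤ M := by
    intro y
    obtain ⟨x, rfl⟩ := torus_surj y
    have := h x
    rw [← (hev _).tsum_eq]
    simpa only [mFourier_coe] using this
  have hcoef : mFourierCoeff F l = c l := by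
    have h1 : HasSum (fun m => ∫ t, mFourier (-l) t • (c m * mFourier m t))
        (∫ t, ∑' m, mFourier (-l) t • (c m * mFourier m t)) := by
      apply hasSum_integral_of_summable_integral_norm
      · intro m
        apply Continuous.integrable_of_hasCompactSupport
        · fun_prop
        · exact HasCompactSupport.of_compactSpace _
      · refine hc.of_nonneg_of_le (fun m => integral_nonneg fun _ => norm_nonneg _) fun m => ?_
        have : ∀ t, ‖mFourier (-l) t • (c m * mFourier m t)‖ ≤ ‖c m‖ := fun t => by
          have a1 := (mFourier (d := d) (-l)).norm_coe_le_norm t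
          have a2 := (mFourier (d := d) m).norm_coe_le_norm t
          rw [mFourier_norm] at a1 a2
          rw [norm_smul, norm_mul]
          calc _ ≤ 1 * (‖c m‖ * 1) := by gcongr
            _ = _ := by ring
        calc _ ≤ ∫ t : UnitAddTorus d, ‖c m‖ := by
              apply integral_mono_of_nonneg
              · exact Filter.Eventually.of_forall fun _ => norm_nonneg _
              · exact integrable_const _
              · exact Filter.Eventually.of_forall this
          _ = _ := by simp
    have h2 : ∀ m, ∫ t, mFourier (-l) t • (c m * mFourier m t) = c m * (if l = m then 1 else 0) := by
      intro m
      rw [← mFourierCoeff_mFourier, mFourierCoeff, ← integral_const_mul]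
      congr 1; ext t; simp; ring
    have h3 : ∫ t, ∑' m, mFourier (-l) t • (c m * mFourier m t) = mFourierCoeff F l := by
      rw [mFourierCoeff]; congr 1; ext t
      rw [← (hev t).tsum_eq]; simp only [smul_eq_mul]; rw [tsum_mul_left]
    rw [h3] at h1
    simp only [h2] at h1
    have h4 := h1.unique (hasSum_single l (fun m hm => by simp [hm.symm]))
    simpa using h4
  rw [← hcoef, mFourierCoeff]
  calc _ ≤ ∫ t : UnitAddTorus d, M := by
        apply norm_integral_le_of_norm_le (integrable_const _)
        refine Filter.Eventually.of_forall fun t => ?_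
        have a1 := (mFourier (d := d) (-l)).norm_coe_le_norm t
        rw [mFourier_norm] at a1
        rw [norm_smul]
        calc _ ≤ 1 * ‖F t‖ := by gcongr
          _ ≤ M := by rw [one_mul]; exact hb t
    _ = M := by simp

lemma box_iUnion : (⋃ l : d → ℤ, {x : d → ℝ | ∀ i, x i ∈ Set.Ioc ((l i : ℝ)) (l i + 1)}) = Set.univ := by
  ext x
  simp only [Set.mem_iUnion, Set.mem_ofPred_eq, Set.mem_univ, iff_true]
  refine ⟨fun i => ⌈x i⌉ - 1, fun i => ⟨?_, ?_⟩⟩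
  · push_cast; have := Int.ceil_lt_add_one (x i); linarith
  · push_cast; have := Int.le_ceil (x i); linarith

lemma box_disj : Pairwise (Function.onFun Disjoint
    (fun l : d → ℤ => {x : d → ℝ | ∀ i, x i ∈ Set.Ioc ((l i : ℝ)) (l i + 1)})) := by
  intro l m hlm
  rw [Function.onFun, Set.disjoint_left]
  intro x hx hy
  apply hlm
  funext i
  have h1 := hx i
  have h2 := hy i
  simp only [Set.mem_Ioc] at h1 h2
  have h3 : (l i : ℝ) < m i + 1 := by linarith
  have h4 : (m i : ℝ) < l i + 1 := by linarith
  norm_cast at h3 h4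
  omega

lemma box_meas (l : d → ℝ) : MeasurableSet {x : d → ℝ | ∀ i, x i ∈ Set.Ioc ((l i : ℝ)) (l i + 1)} := by
  have : {x : d → ℝ | ∀ i, x i ∈ Set.Ioc ((l i : ℝ)) (l i + 1)}
      = Set.pi Set.univ (fun i => Set.Ioc (l i) (l i + 1)) := by ext; simp
  rw [this]
  exact MeasurableSet.univ_pi fun i => measurableSet_Ioc

lemma box_integral {E : Type*} [NormedAddCommGroup E] [NormedSpace ℝ E] (h : (d → ℝ) → E) (l : d → ℤ) :
    ∫ x in {x : d → ℝ | ∀ i, x i ∈ Set.Ioc (((0 : d → ℝ) i : ℝ)) ((0 : d → ℝ) i + 1)}, h (x + fun i => (l i : ℝ))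
      = ∫ x in {x : d → ℝ | ∀ i, x i ∈ Set.Ioc ((l i : ℝ)) (l i + 1)}, h x := by
  have mp : MeasurePreserving (fun x : d → ℝ => x + fun i => (l i : ℝ)) volume volume :=
    measurePreserving_add_right _ _
  rw [← mp.setIntegral_preimage_emb (measurableEmbedding_addRight _) h]
  congr 2
  ext x
  simp
  refine forall_congr' fun i => and_congr_right fun _ => ?_
  constructor <;> intro h <;> linarith

lemma poisson_gen (g F : (d → ℝ) → ℂ) (gh : (d → ℤ) → ℂ) (hg : Integrable g) (hF : Continuous F)
    (hs : ∀ x, HasSum (fun l : d → ℤ => g (x + fun i => (l i : ℝ))) (F x))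
    (hgh : ∀ m : d → ℤ, ∫ x, eC (-∑ i, (m i : ℂ) * (x i : ℂ)) * g x = gh m)
    (hsum : Summable gh) (x : d → ℝ) :
    HasSum (fun m : d → ℤ => gh m * eC (∑ i, (m i : ℂ) * (x i : ℂ))) (F x) := by
  let p : (d → ℝ) → UnitAddTorus d := fun x i => (x i : UnitAddCircle)
  have hq : IsOpenQuotientMap p := IsOpenQuotientMap.piMap (fun i => QuotientAddGroup.isOpenQuotientMap_mk)
  have hper : ∀ x (l : d → ℤ), F (x + fun i => (l i : ℝ)) = F x := by
    intro x l
    have h1 := hs (x + fun i => (l i : ℝ))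
    have h2 := (Equiv.addLeft l).hasSum_iff.mpr (hs x)
    refine h1.unique ?_
    convert! h2 using 1
    ext m
    simp only [Function.comp, Equiv.coe_addLeft]
    congr 1; ext i; simp; ring
  have hsur : Function.Surjective p := torus_surj
  let Ft : UnitAddTorus d → ℂ := fun y => F (Function.surjInv hsur y)
  have hFt : ∀ x, Ft (p x) = F x := by
    intro x
    have h := Function.surjInv_eq hsur (p x)
    have : ∀ i, ∃ n : ℤ, Function.surjInv hsur (p x) i = x i + n := by
      intro i
      have := congrFun h i
      have h2 := (QuotientAddGroup.eq_iff_sub_mem).mp this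
      obtain ⟨n, hn⟩ := AddSubgroup.mem_zmultiples_iff.mp h2
      refine ⟨n, ?_⟩
      simp at hn
      linarith
    choose n hn using this
    have : Function.surjInv hsur (p x) = x + fun i => (n i : ℝ) := funext hn
    simp only [Ft]; rw [this, hper]
  have hcont : Continuous Ft := by
    rw [hq.isQuotientMap.continuous_iff]
    convert! hF using 1
    ext x; exact hFt x
  let Fc : C(UnitAddTorus d, ℂ) := ⟨Ft, hcont⟩
  have hcoef : ∀ m, mFourierCoeff Fc m = gh m := by
    intro m
    rw [mFourierCoeff_eq_integral _ _ 0, ← hgh m]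
    set h : (d → ℝ) → ℂ := fun x => eC (-∑ i, (m i : ℂ) * (x i : ℂ)) * g x with hh
    have hhn : ∀ x, ‖h x‖ = ‖g x‖ := fun x => by
      rw [hh]; simp only [norm_mul]
      have := eC_real_norm (-∑ i, (m i : ℝ) * (x i : ℝ))
      push_cast at this
      rw [this, one_mul]
    have hhi : Integrable h := by
      refine hg.mono ?_ (Filter.Eventually.of_forall fun x => (hhn x).le)
      refine AEStronglyMeasurable.mul ?_ hg.1
      apply Continuous.aestronglyMeasurable
      unfold eC; fun_prop
    set bx := {x : d → ℝ | ∀ i, x i ∈ Set.Ioc (((0 : d → ℝ) i : ℝ)) ((0 : d → ℝ) i + 1)} with hbx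
    have hint : ∀ l : d → ℤ, Integrable (fun x : d → ℝ => h (x + fun i => (l i : ℝ))) := fun l =>
      hhi.comp_add_right _
    have key : HasSum (fun l : d → ℤ => ∫ x in bx, h (x + fun i => (l i : ℝ)))
        (∫ x in bx, ∑' l : d → ℤ, h (x + fun i => (l i : ℝ))) := by
      apply hasSum_integral_of_summable_integral_norm
      · intro l; exact (hint l).integrableOn
      · simp only [hbx]
        have : ∀ l : d → ℤ, _ := fun l => box_integral (fun x => ‖h x‖) l
        simp only [this]
        exact (hasSum_integral_iUnion (fun l => box_meas _) box_disj (hhi.norm.integrableOn)).summable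
    have key2 : HasSum (fun l : d → ℤ => ∫ x in bx, h (x + fun i => (l i : ℝ))) (∫ x, h x) := by
      simp only [hbx]
      have : ∀ l : d → ℤ, _ := fun l => box_integral h l
      simp only [this]
      have := hasSum_integral_iUnion (fun l => box_meas _) box_disj
        (f := h) (μ := volume) (hhi.integrableOn)
      rw [box_iUnion, setIntegral_univ] at this
      exact this
    rw [← key2.unique key |>.symm]
    refine integral_congr_ae (Filter.Eventually.of_forall fun x => ?_)
    simp only
    have e1 : mFourier (-m) (fun i => (x i : UnitAddCircle)) = eC (-∑ i, (m i : ℂ) * (x i : ℂ)) := by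
      rw [mFourier_coe]; simp
    rw [e1]
    change _ • Ft (p x) = _
    rw [hFt, smul_eq_mul, ← (hs x).tsum_eq, ← tsum_mul_left]
    refine tsum_congr fun l => ?_
    simp only [hh]
    congr 1
    have : (-∑ i, (m i : ℂ) * (((x + fun i => (l i : ℝ)) i : ℝ) : ℂ)) = (-∑ i, (m i : ℂ) * (x i : ℂ)) + ((-∑ i, m i * l i : ℤ) : ℂ) := by
      push_cast; simp only [Pi.add_apply, Complex.ofReal_add, mul_add, Finset.sum_add_distrib]; push_cast; ring
    rw [this, eC_add, eC_int, mul_one]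
  have := hasSum_mFourier_series_apply_of_summable (f := Fc) (by simpa only [hcoef, funext hcoef] using hsum) (p x)
  simp only [hcoef] at this
  have e2 : Fc (p x) = F x := hFt x
  rw [e2] at this
  convert! this using 2 with m
  rw [smul_eq_mul]; congr 1; exact (mFourier_coe m x).symm

end Fourier

end

section
section Pairs
variable (B : Matrix (Fin 24) (Fin 24) ℤ)

lemma pairC_add_left (x y z : CV) : pairC B (x + y) z = pairC B x z + pairC B y z := by
  simp [pairC, add_dotProduct]
lemma pairC_add_right (x y z : CV) : pairC B z (x + y) = pairC B z x + pairC B z y := by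
  simp [pairC, mulVec_add, dotProduct_add]
lemma pairC_smul_left (a : ℂ) (x z : CV) : pairC B (a • x) z = a * pairC B x z := by
  simp [pairC, smul_dotProduct]
lemma pairC_smul_right (a : ℂ) (x z : CV) : pairC B z (a • x) = a * pairC B z x := by
  simp [pairC, mulVec_smul, dotProduct_smul]
lemma pairC_zero_left (z : CV) : pairC B 0 z = 0 := by simp [pairC]
lemma pairC_zero_right (z : CV) : pairC B z 0 = 0 := by simp [pairC]
lemma pairC_neg_right (x z : CV) : pairC B z (-x) = - pairC B z x := by
  simp [pairC, mulVec_neg]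
lemma pairC_neg_left (x z : CV) : pairC B (-x) z = - pairC B x z := by
  simp [pairC]

variable {B}
lemma pairC_comm (hB : B.IsSymm) (x y : CV) : pairC B x y = pairC B y x := by
  unfold pairC
  rw [dotProduct_mulVec, ← mulVec_transpose, ← transpose_map, hB.eq, dotProduct_comm]

lemma pairZ_comm (hB : B.IsSymm) (x y : LV) : pairZ B x y = pairZ B y x := by
  unfold pairZ
  rw [dotProduct_mulVec, ← mulVec_transpose, hB.eq, dotProduct_comm]

variable (B)
lemma liftC_add (x y : LV) : liftC (x + y) = liftC x + liftC y := by ext i; simp [liftC]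
lemma liftC_zero : liftC 0 = 0 := by ext i; simp [liftC]
lemma liftC_neg (x : LV) : liftC (-x) = - liftC x := by ext i; simp [liftC]
lemma liftC_smul (a : ℤ) (x : LV) : liftC (a • x) = (a : ℂ) • liftC x := by ext i; simp [liftC]

lemma pairC_lift (x y : LV) : pairC B (liftC x) (liftC y) = (pairZ B x y : ℂ) := by
  simp [pairC, pairZ, liftC, dotProduct, mulVec]

lemma pairZ_add_left (x y z : LV) : pairZ B (x + y) z = pairZ B x z + pairZ B y z := by
  simp [pairZ, add_dotProduct]
lemma pairZ_add_right (x y z : LV) : pairZ B z (x + y) = pairZ B z x + pairZ B z y := by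
  simp [pairZ, mulVec_add, dotProduct_add]
lemma pairZ_smul_left (a : ℤ) (x z : LV) : pairZ B (a • x) z = a * pairZ B x z := by
  rw [pairZ, smul_dotProduct]; rfl
lemma pairZ_smul_right (a : ℤ) (x z : LV) : pairZ B z (a • x) = a * pairZ B z x := by
  rw [pairZ, mulVec_smul, dotProduct_smul]; rfl
lemma pairZ_zero_left (z : LV) : pairZ B 0 z = 0 := by simp [pairZ]
lemma pairZ_neg_left (x z : LV) : pairZ B (-x) z = -pairZ B x z := by simp [pairZ]
lemma pairZ_neg_right (x z : LV) : pairZ B z (-x) = -pairZ B z x := by simp [pairZ, mulVec_neg]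

lemma actC_lift (σ : Matrix (Fin 24) (Fin 24) ℤ) (v : LV) :
    actC σ (liftC v) = liftC (σ.mulVec v) := by
  ext i; simp [actC, liftC, dotProduct, mulVec]
lemma actC_add (σ : Matrix (Fin 24) (Fin 24) ℤ) (v w : CV) :
    actC σ (v + w) = actC σ v + actC σ w := by simp [actC, mulVec_add]
lemma actC_smul (σ : Matrix (Fin 24) (Fin 24) ℤ) (a : ℂ) (w : CV) :
    actC σ (a • w) = a • actC σ w := by simp [actC, mulVec_smul]
lemma actC_mul (σ ρ : Matrix (Fin 24) (Fin 24) ℤ) (w : CV) :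
    actC (σ * ρ) w = actC σ (actC ρ w) := by
  unfold actC
  rw [mulVec_mulVec]; congr 1
  exact Matrix.map_mul (f := Int.castRingHom ℂ)
lemma actC_one (w : CV) : actC 1 w = w := by
  simp [actC]

variable {B}
lemma pairC_act {σ : Matrix (Fin 24) (Fin 24) ℤ} (hσ : σ ∈ ConwayGroup B) (v w : CV) :
    pairC B (actC σ v) (actC σ w) = pairC B v w := by
  obtain ⟨_, h⟩ := hσ
  unfold pairC actC
  have h2 : (σ.map (Int.cast : ℤ → ℂ))ᵀ * (B.map (Int.cast : ℤ → ℂ)) * (σ.map (Int.cast : ℤ → ℂ))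
      = B.map (Int.cast : ℤ → ℂ) := by
    conv_rhs => rw [← h]
    change _ = (σᵀ * B * σ).map (Int.castRingHom ℂ)
    rw [Matrix.map_mul, Matrix.map_mul, transpose_map]; rfl
  conv_rhs => rw [← h2, ← mulVec_mulVec, ← mulVec_mulVec]
  rw [dotProduct_mulVec _ ((σ.map (Int.cast : ℤ → ℂ))ᵀ), vecMul_transpose]

lemma pairZ_act {σ : Matrix (Fin 24) (Fin 24) ℤ} (hσ : σ ∈ ConwayGroup B) (v w : LV) :
    pairZ B (σ.mulVec v) (σ.mulVec w) = pairZ B v w := by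
  have := pairC_act hσ (liftC v) (liftC w)
  rw [actC_lift, actC_lift, pairC_lift, pairC_lift] at this
  exact_mod_cast this

lemma conway_one : (1 : Matrix (Fin 24) (Fin 24) ℤ) ∈ ConwayGroup B := by
  constructor <;> simp

lemma conway_neg_one : (-1 : Matrix (Fin 24) (Fin 24) ℤ) ∈ ConwayGroup B := by
  constructor
  · rw [det_neg]; simp
  · simp

lemma conway_mul {σ ρ : Matrix (Fin 24) (Fin 24) ℤ} (h : σ ∈ ConwayGroup B) (h' : ρ ∈ ConwayGroup B) :
    σ * ρ ∈ ConwayGroup B := by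
  refine ⟨by rw [det_mul]; exact h.1.mul h'.1, ?_⟩
  have : (σ * ρ)ᵀ * B * (σ * ρ) = ρᵀ * (σᵀ * B * σ) * ρ := by
    rw [transpose_mul]; simp only [Matrix.mul_assoc]
  rw [this, h.2, h'.2]

lemma conway_inv {σ : Matrix (Fin 24) (Fin 24) ℤ} (h : σ ∈ ConwayGroup B) :
    σ⁻¹ ∈ ConwayGroup B := by
  have hu := h.1
  refine ⟨by rw [det_nonsing_inv]; exact IsUnit.ringInverse hu, ?_⟩
  calc (σ⁻¹)ᵀ * B * σ⁻¹ = (σ⁻¹)ᵀ * (σᵀ * B * σ) * σ⁻¹ := by rw [h.2]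
    _ = (σ * σ⁻¹)ᵀ * B * (σ * σ⁻¹) := by rw [transpose_mul]; simp only [Matrix.mul_assoc]
    _ = B := by rw [mul_nonsing_inv _ hu]; simp

lemma conway_mul_inv {σ : Matrix (Fin 24) (Fin 24) ℤ} (h : σ ∈ ConwayGroup B) : σ * σ⁻¹ = 1 :=
  mul_nonsing_inv _ h.1
lemma conway_inv_mul {σ : Matrix (Fin 24) (Fin 24) ℤ} (h : σ ∈ ConwayGroup B) : σ⁻¹ * σ = 1 :=
  nonsing_inv_mul _ h.1

/-- real form -/
def pairR (B : Matrix (Fin 24) (Fin 24) ℤ) (x y : Fin 24 → ℝ) : ℝ :=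
  x ⬝ᵥ ((B.map (Int.cast : ℤ → ℝ)).mulVec y)

def ofR (x : Fin 24 → ℝ) : CV := fun i => (x i : ℂ)

lemma pairC_ofR (x y : Fin 24 → ℝ) : pairC B (ofR x) (ofR y) = (pairR B x y : ℂ) := by
  simp [pairC, pairR, ofR, dotProduct, mulVec]

lemma pairR_int (x y : LV) : pairR B (fun i => (x i : ℝ)) (fun i => (y i : ℝ)) = (pairZ B x y : ℝ) := by
  simp [pairZ, pairR, dotProduct, mulVec]

lemma pairR_nonneg (hB : IsLeech B) (x : Fin 24 → ℝ) : 0 ≤ pairR B x x := by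
  have hfl : ∀ a : ℝ, Filter.Tendsto (fun N : ℕ => (⌊(N : ℝ) * a⌋ : ℝ) / N) Filter.atTop (𝓝 a) := by
    intro a
    have h1 : Filter.Tendsto (fun N : ℕ => a - (1 : ℝ) / N) Filter.atTop (𝓝 a) := by
      simpa using (tendsto_const_nhds (x := a)).sub (tendsto_one_div_atTop_nhds_zero_nat (𝕜 := ℝ))
    refine tendsto_of_tendsto_of_tendsto_of_le_of_le' h1 tendsto_const_nhds ?_ ?_
    · filter_upwards [Filter.eventually_gt_atTop 0] with N hN
      have hN' : (0 : ℝ) < N := by exact_mod_cast hN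
      rw [le_div_iff₀ hN', sub_mul, div_mul_cancel₀ _ hN'.ne']
      have := Int.lt_floor_add_one ((N : ℝ) * a)
      linarith
    · filter_upwards [Filter.eventually_gt_atTop 0] with N hN
      have hN' : (0 : ℝ) < N := by exact_mod_cast hN
      rw [div_le_iff₀ hN']
      have := Int.floor_le ((N : ℝ) * a)
      linarith
  have hc : Continuous (fun x : Fin 24 → ℝ => pairR B x x) := by
    unfold pairR dotProduct mulVec dotProduct; fun_prop
  have ht := (hc.tendsto x).comp (tendsto_pi_nhds.mpr fun i => hfl (x i))
  refine ge_of_tendsto' ht fun N => ?_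
  have : (fun i => (⌊(N : ℝ) * x i⌋ : ℝ) / N) = (N : ℝ)⁻¹ • (fun i => ((⌊(N : ℝ) * x i⌋ : ℤ) : ℝ)) := by
    ext i; simp; ring
  simp only [Function.comp]
  rw [this]
  have h2 : ∀ (a : ℝ) (y : Fin 24 → ℝ), pairR B (a • y) (a • y) = a ^ 2 * pairR B y y := by
    intro a y; simp [pairR, mulVec_smul, dotProduct_smul, smul_dotProduct]; ring
  rw [h2, pairR_int (fun i => ⌊(N : ℝ) * x i⌋)]
  apply mul_nonneg (by positivity)
  by_cases h0 : (fun i => ⌊(N : ℝ) * x i⌋) = (0 : LV)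
  · rw [h0]; simp [pairZ]
  · exact_mod_cast (hB.2.2.1 _ h0).le

lemma detR (hB : IsLeech B) : (B.map (Int.cast : ℤ → ℝ)).det = 1 := by
  have := (Int.castRingHom ℝ).map_det B
  rw [hB.2.1, map_one] at this
  exact this.symm
lemma detC (hB : IsLeech B) : (B.map (Int.cast : ℤ → ℂ)).det = 1 := by
  have := (Int.castRingHom ℂ).map_det B
  rw [hB.2.1, map_one] at this
  exact this.symm

lemma exists_sqrt (hB : IsLeech B) : ∃ C : Matrix (Fin 24) (Fin 24) ℝ,
    B.map (Int.cast : ℤ → ℝ) = Cᵀ * C ∧ |C.det| = 1 := by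
  have hps : (B.map (Int.cast : ℤ → ℝ)).PosSemidef := by
    apply Matrix.PosSemidef.of_dotProduct_mulVec_nonneg
    · ext i j; simp [conjTranspose]; exact_mod_cast hB.1.apply i j
    · intro x; exact pairR_nonneg hB x
  open scoped MatrixOrder in
  obtain ⟨C, hC⟩ := CStarAlgebra.nonneg_iff_eq_star_mul_self.mp hps.nonneg
  have hC' : B.map (Int.cast : ℤ → ℝ) = Cᵀ * C := by
    rw [hC]; congr 1
  refine ⟨C, hC', ?_⟩
  have := congrArg Matrix.det hC'
  rw [detR hB, det_mul, det_transpose] at this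
  have h2 : |C.det| * |C.det| = 1 := by rw [abs_mul_abs_self]; exact this.symm
  nlinarith [abs_nonneg C.det]

lemma pairR_sqrt {C : Matrix (Fin 24) (Fin 24) ℝ} (hC : B.map (Int.cast : ℤ → ℝ) = Cᵀ * C)
    (x y : Fin 24 → ℝ) : pairR B x y = C.mulVec x ⬝ᵥ C.mulVec y := by
  unfold pairR; rw [hC, ← mulVec_mulVec, dotProduct_mulVec, vecMul_transpose]

lemma pairR_lower (hB : IsLeech B) : ∃ κ > 0, ∀ x : Fin 24 → ℝ, κ * ∑ i, x i ^ 2 ≤ pairR B x x := by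
  obtain ⟨C, hC, hd⟩ := exists_sqrt hB
  have hu : IsUnit C.det := by
    rw [isUnit_iff_ne_zero]; intro h; rw [h] at hd; simp at hd
  set K := ∑ i, ∑ j, (C⁻¹ i j) ^ 2 with hK
  have hK0 : 0 ≤ K := Finset.sum_nonneg fun i _ => Finset.sum_nonneg fun j _ => sq_nonneg _
  have key : ∀ x : Fin 24 → ℝ, ∑ i, x i ^ 2 ≤ K * pairR B x x := by
    intro x
    rw [pairR_sqrt hC]
    set y := C.mulVec x with hy
    have hx : x = C⁻¹.mulVec y := by rw [hy, mulVec_mulVec, nonsing_inv_mul _ hu, one_mulVec]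
    rw [hK, Finset.sum_mul]
    refine Finset.sum_le_sum fun i _ => ?_
    have := Finset.sum_mul_sq_le_sq_mul_sq Finset.univ (fun j => C⁻¹ i j) y
    conv_lhs => rw [hx]
    simp only [mulVec, dotProduct] at this ⊢
    refine this.trans (le_of_eq ?_)
    congr 1
    exact Finset.sum_congr rfl fun j _ => by ring
  refine ⟨(K + 1)⁻¹, by positivity, fun x => ?_⟩
  rw [inv_mul_le_iff₀ (by positivity)]
  have := key x
  have := pairR_nonneg hB x
  nlinarith

lemma pairZ_lower (hB : IsLeech B) : ∃ κ > 0, ∀ x : LV, κ * ∑ i, (x i : ℝ) ^ 2 ≤ pairZ B x x := by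
  obtain ⟨κ, h, h'⟩ := pairR_lower hB
  exact ⟨κ, h, fun x => by rw [← pairR_int]; exact h' _⟩

lemma finite_norm_le (hB : IsLeech B) (M : ℤ) : {v : LV | pairZ B v v ≤ M}.Finite := by
  obtain ⟨κ, hκ, h⟩ := pairZ_lower hB
  obtain ⟨N, hN⟩ := exists_nat_ge ((M : ℝ) / κ)
  refine (Set.Finite.pi (fun _ : Fin 24 => Set.finite_Icc (-(N : ℤ)) N)).subset ?_
  intro v hv i _
  have h1 := h v
  have h2 : (pairZ B v v : ℝ) ≤ M := by exact_mod_cast hv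
  have h3 : (v i : ℝ) ^ 2 ≤ ∑ i, (v i : ℝ) ^ 2 :=
    Finset.single_le_sum (f := fun i => (v i : ℝ) ^ 2) (fun _ _ => sq_nonneg _) (Finset.mem_univ i)
  have h4 : (v i : ℝ) ^ 2 ≤ N := by
    refine h3.trans (le_trans ?_ hN)
    rw [le_div_iff₀ hκ]; linarith
  have h5 : (v i) ^ 2 ≤ (N : ℤ) := by exact_mod_cast h4
  rw [Set.mem_Icc]
  have h6 : |v i| ≤ |v i| ^ 2 := by
    rcases eq_or_ne (v i) 0 with h | h
    · simp [h]
    · have := Int.one_le_abs h; nlinarith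
  rw [sq_abs] at h6
  exact abs_le.mp (h6.trans h5)

lemma conway_finite (hB : IsLeech B) : (ConwayGroup B).Finite := by
  classical
  set M := ∑ j, |pairZ B (Pi.single j 1) (Pi.single j 1)|
  have hf := Set.Finite.pi (fun _ : Fin 24 => finite_norm_le hB M)
  refine Set.Finite.of_finite_image (f := fun σ : Matrix (Fin 24) (Fin 24) ℤ => σᵀ)
    (hf.subset ?_) (fun a _ b _ h => transpose_injective h)
  rintro _ ⟨σ, hσ, rfl⟩ j _
  have : (σᵀ) j = σ.mulVec (Pi.single j 1) := by
    ext i; simp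
  change pairZ B (σᵀ j) (σᵀ j) ≤ M
  rw [this, pairZ_act hσ]
  exact (le_abs_self _).trans (Finset.single_le_sum (f := fun j : Fin 24 => |pairZ B (Pi.single j 1) (Pi.single j 1)|)
    (fun _ _ => abs_nonneg _) (Finset.mem_univ j))

lemma pairZ_posdef_nonneg (hB : IsLeech B) (v : LV) : 0 ≤ pairZ B v v := by
  have := pairR_nonneg hB (fun i => (v i : ℝ))
  rw [pairR_int] at this; exact_mod_cast this

/-- solving `B z = w` -/
def binv (B : Matrix (Fin 24) (Fin 24) ℤ) (w : CV) : CV := ((B.map (Int.cast : ℤ → ℂ))⁻¹).mulVec w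

lemma binv_spec (hB : IsLeech B) (w : CV) : (B.map (Int.cast : ℤ → ℂ)).mulVec (binv B w) = w := by
  unfold binv
  rw [mulVec_mulVec, mul_nonsing_inv _ (by rw [detC hB]; exact isUnit_one), one_mulVec]

lemma pairC_binv (hB : IsLeech B) (x w : CV) : pairC B x (binv B w) = ∑ i, x i * w i := by
  unfold pairC; rw [binv_spec hB]; rfl

def n1 (l : LV) : ℝ := ∑ i, |(l i : ℝ)|
lemma n1_nonneg (l : LV) : 0 ≤ n1 l := Finset.sum_nonneg fun _ _ => abs_nonneg _

lemma pairC_bound (z : CV) (l : LV) :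
    ‖pairC B (liftC l) z‖ ≤ (∑ i, ‖(B.map (Int.cast : ℤ → ℂ)).mulVec z i‖) * n1 l := by
  unfold pairC dotProduct n1
  refine (norm_sum_le _ _).trans ?_
  rw [Finset.mul_sum]
  refine Finset.sum_le_sum fun i _ => ?_
  rw [norm_mul, mul_comm]
  have : ‖liftC l i‖ = |(l i : ℝ)| := by simp [liftC]
  rw [this]
  gcongr
  exact Finset.single_le_sum (f := fun i => ‖(B.map (Int.cast : ℤ → ℂ)).mulVec z i‖) (fun _ _ => norm_nonneg _) (Finset.mem_univ i)

/-- products of absolutely convergent series -/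
lemma hasSum_pi_prod {ι : Type*} : ∀ (N : ℕ) (f : Fin N → ι → ℂ) (_ : ∀ i, Summable (fun x => ‖f i x‖)),
    Summable (fun j : Fin N → ι => ‖∏ i, f i (j i)‖) ∧
    HasSum (fun j : Fin N → ι => ∏ i, f i (j i)) (∏ i, ∑' x, f i x) := by
  intro N
  induction N with
  | zero => intro f _; simp [Summable.of_finite]
  | succ N ih =>
    intro f hf
    obtain ⟨h1, h2⟩ := ih (fun i => f i.succ) (fun i => hf _)
    have e := Fin.consEquiv (fun _ : Fin (N + 1) => ι)
    constructor
    · rw [← (Fin.consEquiv (fun _ : Fin (N + 1) => ι)).summable_iff]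
      have h3 := (hf 0).mul_norm h1
      refine h3.congr fun p => ?_
      simp [Fin.consEquiv, Fin.prod_univ_succ]
    · rw [← (Fin.consEquiv (fun _ : Fin (N + 1) => ι)).hasSum_iff]
      have hs : Summable (fun x : ι × (Fin N → ι) => f 0 x.1 * ∏ i, f i.succ (x.2 i)) :=
        ((hf 0).mul_norm h1).of_norm
      have h3 := (hf 0).of_norm.hasSum.mul h2 hs
      rw [Fin.prod_univ_succ]
      have e : (fun j : Fin (N + 1) → ι => ∏ i, f i (j i)) ∘ (Fin.consEquiv (fun _ : Fin (N + 1) => ι)) =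
          fun x : ι × (Fin N → ι) => f 0 x.1 * ∏ i, f i.succ (x.2 i) := by
        ext p
        simp [Fin.consEquiv, Fin.prod_univ_succ]
      rw [e]
      exact h3

lemma summable_gauss1 (a R : ℝ) (ha : 0 < a) : Summable (fun n : ℤ => Real.exp (-a * (n : ℝ) ^ 2 + R * |(n : ℝ)|)) := by
  have h0 : Summable (fun n : ℕ => Real.exp (-a * (n : ℝ) ^ 2 + R * |(n : ℝ)|)) := by
    have hg : Summable (fun n : ℕ => Real.exp ((R + 1) ^ 2 / (4 * a)) * Real.exp (-1) ^ n) :=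
      (summable_geometric_of_lt_one (Real.exp_pos _).le (by rw [Real.exp_lt_one_iff]; norm_num)).mul_left _
    refine hg.of_nonneg_of_le (fun _ => (Real.exp_pos _).le) fun n => ?_
    rw [← Real.exp_nat_mul, ← Real.exp_add]
    apply Real.exp_le_exp.mpr
    rw [abs_of_nonneg (by positivity : (0 : ℝ) ≤ n)]
    have : (R + 1) ^ 2 / (4 * a) + (n : ℝ) * (-1) - (-a * (n : ℝ) ^ 2 + R * n)
        = ((R + 1) - 2 * a * n) ^ 2 / (4 * a) := by field_simp; ring
    have h2 : 0 ≤ ((R + 1) - 2 * a * n) ^ 2 / (4 * a) := by positivity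
    linarith
  refine Summable.of_nat_of_neg (by simpa using h0) ?_
  convert! h0 using 2 with n
  simp

lemma summable_gauss (a R : ℝ) (ha : 0 < a) :
    Summable (fun l : LV => Real.exp (-a * ∑ i, (l i : ℝ) ^ 2 + R * n1 l)) := by
  have h := (hasSum_pi_prod 24 (fun _ (n : ℤ) => ((Real.exp (-a * (n : ℝ) ^ 2 + R * |(n : ℝ)|) : ℝ) : ℂ))
    (fun i => by
      have := summable_gauss1 a R ha
      simpa only [Complex.norm_real, Real.norm_eq_abs, Real.abs_exp] using this)).1
  convert! h using 2 with l
  rw [norm_prod]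
  simp only [Complex.norm_real, Real.norm_eq_abs, Real.abs_exp]
  rw [← Real.exp_sum]
  congr 1
  rw [Finset.sum_add_distrib, Finset.mul_sum, n1, Finset.mul_sum]

lemma summable_theta (hB : IsLeech B) (v R : ℝ) (hv : 0 < v) :
    Summable (fun l : LV => Real.exp (-π * v * pairZ B l l + R * n1 l)) := by
  obtain ⟨κ, hκ, h⟩ := pairZ_lower hB
  refine (summable_gauss (π * v * κ) R (by positivity)).of_nonneg_of_le (fun _ => (Real.exp_pos _).le) fun l => ?_
  apply Real.exp_le_exp.mpr
  have h1 := h l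
  have h2 : 0 < π * v := by positivity
  nlinarith
end Pairs

end

section
section Expansions
variable {B : Matrix (Fin 24) (Fin 24) ℤ}

lemma eC_norm (x : ℂ) : ‖eC x‖ = Real.exp (-2 * π * x.im) := by
  unfold eC
  rw [Complex.norm_exp]
  congr 1
  simp [mul_re, mul_im]

lemma eC_ne_zero (x : ℂ) : eC x ≠ 0 := Complex.exp_ne_zero _
lemma eC_neg (x : ℂ) : eC (-x) = (eC x)⁻¹ := by
  unfold eC; rw [← Complex.exp_neg]; congr 1; ring
lemma eC_nat_mul (n : ℕ) (x : ℂ) : eC (n * x) = eC x ^ n := by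
  unfold eC; rw [← Complex.exp_nat_mul]; congr 1; ring

/-- the size of `z` -/
def zsize (B : Matrix (Fin 24) (Fin 24) ℤ) (z : CV) : ℝ :=
  2 * π * ∑ i, ‖(B.map (Int.cast : ℤ → ℂ)).mulVec z i‖

lemma zsize_nonneg (z : CV) : 0 ≤ zsize B z :=
  mul_nonneg (by positivity) (Finset.sum_nonneg fun _ _ => norm_nonneg _)

lemma eC_pair_le (l : LV) (z : CV) : ‖eC (pairC B (liftC l) z)‖ ≤ Real.exp (zsize B z * n1 l) := by
  rw [eC_norm]
  apply Real.exp_le_exp.mpr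
  have h1 := pairC_bound (B := B) z l
  have h2 := Complex.abs_im_le_norm (pairC B (liftC l) z)
  have h3 := neg_abs_le (pairC B (liftC l) z).im
  unfold zsize
  have : 0 < 2 * π := by positivity
  nlinarith

lemma exp_pair_le (l : LV) (z : CV) : Real.exp (-2 * π * (pairC B (liftC l) z).im) ≤ Real.exp (zsize B z * n1 l) := by
  rw [← eC_norm]; exact eC_pair_le l z

lemma fterm_norm (n : ℕ) (l : LV) (τ : ℍ) (z : CV) :
    ‖fterm B n l τ z‖ = Real.exp (-2 * π * n * τ.im) * ‖eC (pairC B (liftC l) z)‖ := by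
  unfold fterm
  rw [norm_mul, eC_norm (_ * _)]
  congr 2
  simp [mul_im]
  ring

lemma exp_n1_le : ∃ E : Finset (Fin 24 → ℝ), ∀ (R : ℝ) (l : LV), Real.exp (R * n1 l) ≤
    ∑ ε ∈ E, Real.exp (R * ∑ i, ε i * (l i : ℝ)) := by
  have hfin : (Set.univ.pi (fun _ : Fin 24 => ({1, -1} : Set ℝ))).Finite :=
    Set.Finite.pi (fun _ => Set.toFinite _)
  refine ⟨hfin.toFinset, fun R l => ?_⟩
  have hmem : (fun i => if 0 ≤ l i then (1 : ℝ) else -1) ∈ hfin.toFinset := by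
    rw [Set.Finite.mem_toFinset]
    intro i _
    by_cases h : 0 ≤ l i <;> simp [h]
  have : Real.exp (R * n1 l) = Real.exp (R * ∑ i, (fun i => if 0 ≤ l i then (1 : ℝ) else -1) i * (l i : ℝ)) := by
    congr 2
    unfold n1
    refine Finset.sum_congr rfl fun i _ => ?_
    by_cases h : 0 ≤ l i
    · have : (0 : ℝ) ≤ l i := by exact_mod_cast h
      simp [h, abs_of_nonneg this]
    · have : (l i : ℝ) < 0 := by exact_mod_cast (not_le.mp h)
      simp [h, abs_of_neg this]
  rw [this]
  exact Finset.single_le_sum (f := fun ε : Fin 24 → ℝ => Real.exp (R * ∑ i, ε i * (l i : ℝ)))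
    (fun _ _ => (Real.exp_pos _).le) hmem

lemma absSum (hB : IsLeech B) {f : ℕ → LV → ℂ}
    (h : ∀ (τ : ℍ) (z : CV), Summable (fun p : ℕ × LV => f p.1 p.2 * fterm B p.1 p.2 τ z))
    (v : ℝ) (hv : 0 < v) (R : ℝ) :
    Summable (fun p : ℕ × LV => ‖f p.1 p.2‖ * Real.exp (-2 * π * p.1 * v) * Real.exp (R * n1 p.2)) := by
  obtain ⟨E, hE⟩ := exp_n1_le
  obtain ⟨τ, hτ⟩ : ∃ τ : ℍ, τ.im = v := ⟨⟨Complex.I * v, by simpa using hv⟩, by simp [UpperHalfPlane.im]⟩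
  have hz : ∀ ε : Fin 24 → ℝ, ∃ z : CV, ∀ l : LV, ‖eC (pairC B (liftC l) z)‖ = Real.exp (R * ∑ i, ε i * (l i : ℝ)) := by
    intro ε
    refine ⟨binv B (fun i => -Complex.I * ((R / (2 * π) * ε i : ℝ) : ℂ)), fun l => ?_⟩
    rw [pairC_binv hB, eC_norm, Complex.im_sum, Finset.mul_sum, Finset.mul_sum]
    congr 1
    refine Finset.sum_congr rfl fun i _ => ?_
    have : liftC l i * (-Complex.I * ((R / (2 * π) * ε i : ℝ) : ℂ))
      = ((l i * (R / (2 * π)) * ε i : ℝ) : ℂ) * (-Complex.I) := by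
      simp only [liftC]; push_cast; ring
    rw [this, Complex.im_ofReal_mul]
    simp
    field_simp
  choose z hz using hz
  have h1 := summable_sum (s := E) (fun ε (_ : ε ∈ E) => (h τ (z ε)).norm)
  refine h1.of_nonneg_of_le (fun _ => by positivity) fun p => ?_
  refine (mul_le_mul_of_nonneg_left (hE R p.2) (by positivity)).trans (le_of_eq ?_)
  rw [Finset.mul_sum]
  refine Finset.sum_congr rfl fun ε _ => ?_
  rw [norm_mul, fterm_norm, mul_assoc, hz, hτ]

lemma pair_fderiv (B : Matrix (Fin 24) (Fin 24) ℤ) : ∃ K : ℝ, 0 ≤ K ∧ ∀ l : LV, ∃ L : CV →L[ℂ] ℂ,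
    (∀ z, L z = pairC B (liftC l) z) ∧ ‖L‖ ≤ K * n1 l := by
  refine ⟨∑ i, ∑ j, |(B i j : ℝ)|, by positivity, fun l => ?_⟩
  let L0 : CV →ₗ[ℂ] ℂ := { toFun := fun z => pairC B (liftC l) z, map_add' := fun x y => pairC_add_right B x y _, map_smul' := fun a x => pairC_smul_right B a x _ }
  refine ⟨LinearMap.toContinuousLinearMap L0, fun z => rfl, ?_⟩
  refine ContinuousLinearMap.opNorm_le_bound _ (mul_nonneg (by positivity) (n1_nonneg l)) fun z => ?_
  change ‖pairC B (liftC l) z‖ ≤ _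
  refine (pairC_bound z l).trans ?_
  rw [mul_right_comm]
  gcongr
  · exact n1_nonneg l
  rw [Finset.sum_mul]
  refine Finset.sum_le_sum fun i _ => ?_
  simp only [mulVec, dotProduct]
  refine (norm_sum_le _ _).trans ?_
  rw [Finset.sum_mul]
  refine Finset.sum_le_sum fun j _ => ?_
  rw [norm_mul]
  have : ‖(B.map (Int.cast : ℤ → ℂ)) i j‖ = |(B i j : ℝ)| := by simp
  rw [this]
  gcongr
  exact norm_le_pi_norm z j

lemma zsize_ball (B : Matrix (Fin 24) (Fin 24) ℤ) : ∃ K : ℝ, 0 ≤ K ∧ ∀ z : CV, zsize B z ≤ K * ‖z‖ := by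
  refine ⟨2 * π * ∑ i, ∑ j, |(B i j : ℝ)|, by positivity, fun z => ?_⟩
  unfold zsize
  rw [mul_assoc (2 * π)]
  refine mul_le_mul_of_nonneg_left ?_ (by positivity)
  rw [Finset.sum_mul]
  refine Finset.sum_le_sum fun i _ => ?_
  simp only [mulVec, dotProduct]
  refine (norm_sum_le _ _).trans ?_
  rw [Finset.sum_mul]
  refine Finset.sum_le_sum fun j _ => ?_
  rw [norm_mul]
  have : ‖(B.map (Int.cast : ℤ → ℂ)) i j‖ = |(B i j : ℝ)| := by simp
  rw [this]
  gcongr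
  exact norm_le_pi_norm z j

lemma diff_exp_series {ι : Type*} (c : ι → ℂ) (L : ι → LV)
    (hs : ∀ R : ℝ, Summable (fun i => ‖c i‖ * Real.exp (R * n1 (L i)))) :
    Differentiable ℂ (fun z => ∑' i, c i * eC (pairC B (liftC (L i)) z)) := by
  obtain ⟨K, hK0, hK⟩ := pair_fderiv B
  obtain ⟨K', hK0', hK'⟩ := zsize_ball B
  choose P hP hPn using hK
  intro z₀
  set r := ‖z₀‖ + 1
  have hr : z₀ ∈ Metric.ball (0 : CV) r := by simp [r]
  have hterm : ∀ i (x : CV), HasFDerivAt (fun z => c i * eC (pairC B (liftC (L i)) z))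
      ((c i * eC (pairC B (liftC (L i)) x) * (2 * π * Complex.I)) • P (L i)) x := by
    intro i x
    have h1 : HasFDerivAt (fun z => pairC B (liftC (L i)) z) (P (L i)) x := by
      exact (funext (hP (L i)) : (P (L i) : CV → ℂ) = _) ▸ (P (L i)).hasFDerivAt (x := x)
    have h2 : HasDerivAt (fun w => c i * eC w) (c i * (eC (pairC B (liftC (L i)) x) * (2 * π * Complex.I)))
        (pairC B (liftC (L i)) x) := by
      unfold eC
      refine HasDerivAt.const_mul _ ?_
      refine (HasDerivAt.cexp ?_)
      simpa using (hasDerivAt_id (pairC B (liftC (L i)) x)).const_mul (2 * π * Complex.I)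
    have h3 := h2.comp_hasFDerivAt x h1
    rw [← mul_assoc] at h3
    exact h3
  refine (hasFDerivAt_tsum_of_isPreconnected (u := fun i => (2 * π * K) * (‖c i‖ * Real.exp ((K' * r + 1) * n1 (L i))))
    (s := Metric.ball 0 r) (x₀ := 0) ((hs _).mul_left _) Metric.isOpen_ball
    (convex_ball _ _).isPreconnected (fun i x _ => hterm i x) ?_ ?_ ?_ hr).differentiableAt
  · intro i x hx
    rw [norm_smul, norm_mul, norm_mul]
    have e1 : ‖(2 * π * Complex.I : ℂ)‖ = 2 * π := by simp [abs_of_pos Real.pi_pos]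
    rw [e1]
    have hx' : ‖x‖ ≤ r := by simpa using (Metric.mem_ball.mp hx).le
    have h1 : ‖eC (pairC B (liftC (L i)) x)‖ ≤ Real.exp ((K' * r) * n1 (L i)) := by
      refine (eC_pair_le _ _).trans (Real.exp_le_exp.mpr ?_)
      refine mul_le_mul_of_nonneg_right ((hK' x).trans ?_) (n1_nonneg _)
      gcongr
    have h2 : n1 (L i) ≤ Real.exp (n1 (L i)) := by
      have := Real.add_one_le_exp (n1 (L i)); linarith
    have h0 := n1_nonneg (L i)
    calc _ ≤ ‖c i‖ * Real.exp ((K' * r) * n1 (L i)) * (2 * π) * (K * Real.exp (n1 (L i))) := by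
          have := hPn (L i)
          gcongr
          exact this.trans (by gcongr)
      _ = _ := by rw [show (K' * r + 1) * n1 (L i) = K' * r * n1 (L i) + n1 (L i) by ring, Real.exp_add]; ring
  · simp [r]; positivity
  · have := hs 0
    simp only [zero_mul, Real.exp_zero, mul_one] at this
    refine this.of_norm.congr fun i => ?_
    rw [pairC_zero_right, eC_zero, mul_one]

lemma exp_holo_tau (hB : IsLeech B) {f : ℕ → LV → ℂ} {φ : ℍ → CV → ℂ}
    (h : ∀ (τ : ℍ) (z : CV), HasSum (fun p : ℕ × LV => f p.1 p.2 * fterm B p.1 p.2 τ z) (φ τ z)) (z : CV) :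
    MDifferentiable 𝓘(ℂ) 𝓘(ℂ) fun τ : ℍ => φ τ z := by
  rw [UpperHalfPlane.mdifferentiable_iff]
  intro w hw
  have hw' : 0 < w.im := hw
  have ha := absSum hB (fun τ z => (h τ z).summable) (w.im / 2) (by positivity) (zsize B z)
  set U : Set ℂ := {y | w.im / 2 < y.im}
  have hU : IsOpen U := isOpen_lt continuous_const Complex.continuous_im
  have hd : DifferentiableOn ℂ (fun y : ℂ => ∑' p : ℕ × LV, f p.1 p.2 * (eC ((p.1 : ℂ) * y) * eC (pairC B (liftC p.2) z))) U := by
    refine Complex.differentiableOn_tsum_of_summable_norm ha ?_ hU ?_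
    · intro p; unfold eC; fun_prop
    · intro p y hy
      have hy' : w.im / 2 < y.im := hy
      rw [norm_mul, norm_mul, mul_assoc]
      have h2 := eC_pair_le (B := B) p.2 z
      gcongr
      rw [eC_norm]
      apply Real.exp_le_exp.mpr
      simp [mul_im]
      rw [mul_assoc]
      gcongr
  have hwU : w ∈ U := by change w.im / 2 < w.im; linarith
  have hdw := (hd w hwU).differentiableAt (hU.mem_nhds hwU)
  apply DifferentiableAt.differentiableWithinAt
  refine hdw.congr_of_eventuallyEq ?_
  filter_upwards [hU.mem_nhds hwU] with y hy
  have hy' : 0 < y.im := lt_trans (by positivity) (show w.im / 2 < y.im from hy)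
  simp only [Function.comp]
  rw [← (h _ z).tsum_eq]
  refine tsum_congr fun p => ?_
  unfold fterm
  rw [UpperHalfPlane.ofComplex_apply_of_im_pos hy']

lemma exp_holo_z (hB : IsLeech B) {f : ℕ → LV → ℂ} {φ : ℍ → CV → ℂ}
    (h : ∀ (τ : ℍ) (z : CV), HasSum (fun p : ℕ × LV => f p.1 p.2 * fterm B p.1 p.2 τ z) (φ τ z)) (τ : ℍ) :
    Differentiable ℂ (φ τ) := by
  have := diff_exp_series (B := B) (fun p : ℕ × LV => f p.1 p.2 * eC ((p.1 : ℂ) * τ)) (fun p => p.2) (fun R => by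
    have := absSum hB (fun τ z => (h τ z).summable) τ.im τ.im_pos R
    refine this.congr fun p => ?_
    rw [norm_mul, eC_norm]
    congr 3
    simp [mul_im]; ring)
  convert! this using 1
  ext z
  rw [← (h τ z).tsum_eq]
  refine tsum_congr fun p => ?_
  unfold fterm; ring

lemma coeff_bound_int (c : ℤ × LV → ℂ) (φ : ℝ → (Fin 24 → ℝ) → ℂ)
    (h : ∀ (u : ℝ) (x : Fin 24 → ℝ), HasSum (fun p : ℤ × LV => c p * eC ((p.1 : ℂ) * (u : ℂ) + ∑ i, (p.2 i : ℂ) * (x i : ℂ))) (φ u x))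
    (M : ℝ) (hM : ∀ u x, ‖φ u x‖ ≤ M) (p : ℤ × LV) : ‖c p‖ ≤ M := by
  have hs : Summable (fun p => ‖c p‖) := by
    have := (h 0 0).summable.norm
    simpa [eC_zero] using this
  let e : ℤ × LV ≃ (Fin 25 → ℤ) := Fin.consEquiv (fun _ : Fin 25 => ℤ)
  have key := fourier_coeff_bound (d := Fin 25) (fun q => c (e.symm q)) (by
    rw [← e.summable_iff]; simpa [Function.comp_def] using hs) M (fun x => by
      rw [← e.tsum_eq]
      have := h (x 0) (fun i => x i.succ)
      simp only [Equiv.symm_apply_apply]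
      have e2 : ∀ p : ℤ × LV, ∑ i, ((e p i : ℤ) : ℂ) * (x i : ℂ) = (p.1 : ℂ) * (x 0) + ∑ i, (p.2 i : ℂ) * (x i.succ : ℂ) := by
        intro p
        rw [Fin.sum_univ_succ]
        simp [e, Fin.consEquiv]
      simp only [e2]
      rw [this.tsum_eq]
      exact hM _ _) (e p)
  simpa using key

lemma tau_mk (u v : ℝ) (hv : 0 < v) : 0 < ((u : ℂ) + Complex.I * v).im := by simpa using hv

lemma coeff_bound (hB : IsLeech B) {f : ℕ → LV → ℂ} {φ : ℍ → CV → ℂ}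
    (v : ℝ) (hv : 0 < v)
    (h : ∀ (τ : ℍ) (z : CV), τ.im = v → HasSum (fun p : ℕ × LV => f p.1 p.2 * fterm B p.1 p.2 τ z) (φ τ z))
    (M : ℝ) (hM : ∀ (τ : ℍ) (b : Fin 24 → ℝ), τ.im = v → ‖φ τ (binv B (ofR b))‖ ≤ M) (n : ℕ) (l : LV) :
    ‖f n l‖ * Real.exp (-2 * π * n * v) ≤ M := by
  let g : ℕ × LV → ℤ × LV := fun p => (p.1, p.2)
  have hg : Function.Injective g := by
    rintro ⟨a, b⟩ ⟨c, d⟩ h; simpa [g] using h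
  let c : ℤ × LV → ℂ := Function.extend g (fun p => f p.1 p.2 * eC ((p.1 : ℂ) * (Complex.I * v))) 0
  have key := coeff_bound_int c (fun u x => φ ⟨(u : ℂ) + Complex.I * v, tau_mk u v hv⟩ (binv B (ofR x))) (by
    intro u x
    have h1 := h ⟨(u : ℂ) + Complex.I * v, tau_mk u v hv⟩ (binv B (ofR x)) (by simp [UpperHalfPlane.im])
    rw [← hg.hasSum_iff]
    · convert! h1 using 1
      ext p
      simp only [Function.comp, c, hg.extend_apply]
      rw [mul_assoc, fterm, ← eC_add, ← eC_add, pairC_binv hB]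
      congr 2
      simp [g, ofR, liftC]
      ring
    · intro q hq
      have : c q = 0 := by
        simp only [c]
        rw [Function.extend_apply' _ _ _ (by simpa using hq)]; rfl
      rw [this, zero_mul]) M (fun u x => hM _ _ (by simp [UpperHalfPlane.im])) (g (n, l))
  simp only [c, hg.extend_apply, norm_mul, eC_norm] at key
  convert! key using 3
  simp [mul_im]; ring

lemma coeff_zero (hB : IsLeech B) {f : ℕ → LV → ℂ}
    (h : ∀ (τ : ℍ) (z : CV), HasSum (fun p : ℕ × LV => f p.1 p.2 * fterm B p.1 p.2 τ z) 0) (n : ℕ) (l : LV) :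
    f n l = 0 := by
  have := coeff_bound hB (φ := fun _ _ => 0) 1 one_pos (fun τ z _ => h τ z) 0 (fun _ _ _ => by simp) n l
  have h2 : 0 < Real.exp (-2 * π * n * 1) := Real.exp_pos _
  rw [← norm_le_zero_iff]
  by_contra h3
  push Not at h3
  nlinarith [mul_pos h3 h2]

lemma coeff_unique (hB : IsLeech B) {f g : ℕ → LV → ℂ} {φ : ℍ → CV → ℂ}
    (h : ∀ (τ : ℍ) (z : CV), HasSum (fun p : ℕ × LV => f p.1 p.2 * fterm B p.1 p.2 τ z) (φ τ z))
    (h' : ∀ (τ : ℍ) (z : CV), HasSum (fun p : ℕ × LV => g p.1 p.2 * fterm B p.1 p.2 τ z) (φ τ z)) :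
    f = g := by
  ext n l
  have := coeff_zero hB (f := fun n l => f n l - g n l) (fun τ z => by
    have := (h τ z).sub (h' τ z)
    simpa [sub_mul] using this) n l
  exact sub_eq_zero.mp this
end Expansions

end

section
/-! ### theta -/
variable {B : Matrix (Fin 24) (Fin 24) ℤ}

lemma theta_term_norm (l : LV) (τ : ℍ) :
    ‖eC ((pairZ B l l : ℂ) * τ / 2)‖ = Real.exp (-π * τ.im * pairZ B l l) := by
  rw [eC_norm]; congr 1
  have : ((pairZ B l l : ℂ) * τ / 2).im = pairZ B l l * τ.im / 2 := by
    have : ((pairZ B l l : ℂ) * τ / 2) = (((pairZ B l l : ℝ) / 2 : ℝ) : ℂ) * τ := by push_cast; ring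
    rw [this, Complex.im_ofReal_mul, UpperHalfPlane.coe_im]; ring
  rw [this]; ring

lemma theta_abs (hB : IsLeech B) (τ : ℍ) (R : ℝ) :
    Summable (fun l : LV => ‖eC ((pairZ B l l : ℂ) * τ / 2)‖ * Real.exp (R * n1 l)) := by
  refine (summable_theta hB τ.im R τ.im_pos).congr fun l => ?_
  rw [theta_term_norm, ← Real.exp_add]

lemma theta_norm_summable (hB : IsLeech B) (τ : ℍ) (z : CV) :
    Summable (fun l : LV => ‖eC ((pairZ B l l : ℂ) * τ / 2) * eC (pairC B (liftC l) z)‖) := by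
  refine Summable.of_nonneg_of_le (fun _ => norm_nonneg _) (fun l => ?_) (theta_abs hB τ (zsize B z))
  rw [norm_mul]
  exact mul_le_mul_of_nonneg_left (eC_pair_le l z) (norm_nonneg _)

lemma thetaLeech_eq (τ : ℍ) (z : CV) :
    thetaLeech B τ z = ∑' l : LV, eC ((pairZ B l l : ℂ) * τ / 2) * eC (pairC B (liftC l) z) := by
  unfold thetaLeech
  refine tsum_congr fun l => ?_
  unfold eC
  rw [← Complex.exp_add]; congr 1; ring

lemma theta_hasSum (hB : IsLeech B) (τ : ℍ) (z : CV) :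
    HasSum (fun l : LV => eC ((pairZ B l l : ℂ) * τ / 2) * eC (pairC B (liftC l) z)) (thetaLeech B τ z) := by
  rw [thetaLeech_eq]
  exact (theta_norm_summable hB τ z).of_norm.hasSum

lemma theta_diff (hB : IsLeech B) (τ : ℍ) : Differentiable ℂ (thetaLeech B τ) := by
  have := diff_exp_series (B := B) (fun l : LV => eC ((pairZ B l l : ℂ) * τ / 2)) id (theta_abs hB τ)
  have h2 : thetaLeech B τ = fun z => ∑' l : LV, eC ((pairZ B l l : ℂ) * τ / 2) * eC (pairC B (liftC (id l)) z) := by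
    funext z; rw [thetaLeech_eq]; rfl
  rw [h2]; exact this

lemma theta_quasi (hB : IsLeech B) (τ : ℍ) (z : CV) (x y : LV) :
    thetaLeech B τ (z + (τ : ℂ) • liftC x + liftC y) =
      eC (-((pairZ B x x : ℂ) * τ / 2) - pairC B (liftC x) z) * thetaLeech B τ z := by
  have h1 := theta_hasSum hB τ (z + (τ : ℂ) • liftC x + liftC y)
  have h2 := (Equiv.addRight x).hasSum_iff.mpr (theta_hasSum hB τ z)
  have h3 := h2.mul_left (eC (-((pairZ B x x : ℂ) * τ / 2) - pairC B (liftC x) z))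
  refine h1.unique ?_
  refine h3.congr_fun ?_
  intro l
  simp only [Function.comp, Equiv.coe_addRight]
  rw [← eC_add, ← eC_add, ← eC_add]
  have : eC (pairZ B l y : ℂ) = 1 := eC_int _
  rw [pairC_add_right, pairC_add_right, pairC_smul_right, pairC_lift, pairC_lift,
    ← add_assoc, eC_add _ (pairZ B l y : ℂ), this, mul_one, liftC_add, pairC_add_left]
  congr 1
  rw [pairZ_add_left, pairZ_add_right, pairZ_add_right, pairZ_comm hB.1 x l]
  push_cast; ring

lemma theta_conway (hB : IsLeech B) {σ} (hσ : σ ∈ ConwayGroup B) (τ : ℍ) (z : CV) :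
    thetaLeech B τ (actC σ z) = thetaLeech B τ z := by
  have e : ∃ e : LV ≃ LV, ∀ l, e l = σ.mulVec l :=
    ⟨⟨fun l => σ.mulVec l, fun l => σ⁻¹.mulVec l,
      fun l => by simp [conway_inv_mul hσ], fun l => by simp [conway_mul_inv hσ]⟩, fun l => rfl⟩
  obtain ⟨e, he⟩ := e
  have h1 := e.hasSum_iff.mpr (theta_hasSum hB τ (actC σ z))
  refine h1.unique ?_
  refine (theta_hasSum hB τ z).congr_fun ?_
  intro l
  simp only [Function.comp, he]
  rw [pairZ_act hσ, ← actC_lift, pairC_act hσ]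

lemma theta_even (hB : IsLeech B) (τ : ℍ) (z : CV) :
    thetaLeech B τ (-z) = thetaLeech B τ z := by
  have := theta_conway hB (conway_neg_one (B := B)) τ z
  rw [← this]; congr 1
  have h : ((-1 : Matrix (Fin 24) (Fin 24) ℤ).map (Int.cast : ℤ → ℂ)) = -1 := by
    ext i j; simp [Matrix.one_apply]
  rw [actC, h]; simp [Matrix.neg_mulVec]

lemma theta_T (hB : IsLeech B) (τ τ' : ℍ) (h : (τ' : ℂ) = τ + 1) (z : CV) :
    thetaLeech B τ' z = thetaLeech B τ z := by
  refine (theta_hasSum hB τ' z).unique ?_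
  refine (theta_hasSum hB τ z).congr_fun ?_
  intro l
  congr 1
  obtain ⟨m, hm⟩ := hB.2.2.2.1 l
  rw [h, hm]
  have : ((m + m : ℤ) : ℂ) * ((τ : ℂ) + 1) / 2 = ((m + m : ℤ) : ℂ) * τ / 2 + (m : ℂ) := by push_cast; ring
  rw [this, eC_add, eC_int, mul_one]

end

section
variable {B : Matrix (Fin 24) (Fin 24) ℤ}

lemma gauss_int (hB : IsLeech B) (b : ℂ) (hb : 0 < b.re) (l : LV) :
    MeasureTheory.Integrable (fun x : Fin 24 → ℝ => Complex.exp (-b * (pairR B x x : ℂ) - 2 * π * Complex.I * pairC B (liftC l) (ofR x)))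
      MeasureTheory.volume ∧
    ∫ x : Fin 24 → ℝ, Complex.exp (-b * (pairR B x x : ℂ) - 2 * π * Complex.I * pairC B (liftC l) (ofR x)) =
      ((π : ℂ) / b) ^ 12 * Complex.exp (-((π : ℂ) ^ 2 * (pairZ B l l : ℂ)) / b) := by
  obtain ⟨C, hC, hd⟩ := exists_sqrt hB
  have hd0 : C.det ≠ 0 := by intro h; rw [h] at hd; simp at hd
  let c : Fin 24 → ℂ := fun i => -(2 * π * Complex.I * ((C.mulVec (fun i => (l i : ℝ))) i : ℂ))
  have hmp : MeasureTheory.MeasurePreserving (Matrix.toLin' C) MeasureTheory.volume MeasureTheory.volume := by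
    refine ⟨(LinearMap.continuous_of_finiteDimensional _).measurable, ?_⟩
    rw [Real.map_matrix_volume_pi_eq_smul_volume_pi hd0, abs_inv, hd]; simp
  have hemb : MeasurableEmbedding (Matrix.toLin' C) := by
    refine (LinearMap.continuous_of_finiteDimensional _).measurableEmbedding ?_
    intro x y hxy
    exact Matrix.mulVec_injective_of_isUnit ((Matrix.isUnit_iff_isUnit_det C).mpr (isUnit_iff_ne_zero.mpr hd0)) (by simpa using hxy)
  have key : ∀ x : Fin 24 → ℝ, Complex.exp (-b * (pairR B x x : ℂ) - 2 * π * Complex.I * pairC B (liftC l) (ofR x)) =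
      (fun v : Fin 24 → ℝ => Complex.exp (-b * ∑ i, (v i : ℂ) ^ 2 + ∑ i, c i * (v i : ℂ))) (Matrix.toLin' C x) := by
    intro x
    simp only [Matrix.toLin'_apply]
    have h1 : pairC B (liftC l) (ofR x) = ((pairR B (fun i => (l i : ℝ)) x : ℝ) : ℂ) := by
      rw [← pairC_ofR]; congr 1
    rw [h1, pairR_sqrt hC, pairR_sqrt hC]
    congr 1
    simp only [dotProduct, c]
    push_cast
    rw [sub_eq_add_neg]
    congr 1
    · congr 1; refine Finset.sum_congr rfl fun i _ => by ring
    · rw [Finset.mul_sum, ← Finset.sum_neg_distrib]; refine Finset.sum_congr rfl fun i _ => by ring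
  have hI := GaussianFourier.integrable_cexp_neg_mul_sum_add hb c
  constructor
  · have := (hmp.integrable_comp hI.aestronglyMeasurable).mpr hI
    refine this.congr (Filter.Eventually.of_forall fun x => (key x).symm)
  · rw [MeasureTheory.integral_congr_ae (Filter.Eventually.of_forall key)]
    rw [hmp.integral_comp hemb (fun v : Fin 24 → ℝ => Complex.exp (-b * ∑ i, (v i : ℂ) ^ 2 + ∑ i, c i * (v i : ℂ)))]
    rw [GaussianFourier.integral_cexp_neg_mul_sum_add hb c]
    congr 1
    · rw [show ((Fintype.card (Fin 24) : ℕ) : ℂ) / 2 = ((12 : ℕ) : ℂ) by simp; norm_num]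
      exact Complex.cpow_natCast _ _
    · have h2 : ∑ i, c i ^ 2 = -(4 * (π : ℂ) ^ 2 * (pairZ B l l : ℂ)) := by
        have h3 : (pairZ B l l : ℂ) = ((pairR B (fun i => (l i : ℝ)) (fun i => (l i : ℝ)) : ℝ) : ℂ) := by
          rw [pairR_int]; push_cast; rfl
        rw [h3, pairR_sqrt hC]
        simp only [dotProduct, c]
        push_cast
        rw [Finset.mul_sum, ← Finset.sum_neg_distrib]
        refine Finset.sum_congr rfl fun i _ => ?_
        have := Complex.I_sq
        linear_combination (4 * (π : ℂ) ^ 2 * ((C.mulVec (fun i => (l i : ℝ))) i : ℂ) ^ 2) * this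
      rw [h2]; congr 1
      have hb0 : b ≠ 0 := by rintro rfl; simp at hb
      field_simp

/-- two entire functions agreeing on the reals agree -/
lemma entire_eq_of_real {f g : ℂ → ℂ} (hf : Differentiable ℂ f) (hg : Differentiable ℂ g)
    (h : ∀ x : ℝ, f x = g x) : f = g := by
  refine AnalyticOnNhd.eq_of_frequently_eq (z₀ := 0) (fun z _ => hf.analyticAt z) (fun z _ => hg.analyticAt z) ?_
  have ht : Filter.Tendsto (fun x : ℝ => (x : ℂ)) (𝓝[≠] 0) (𝓝[≠] 0) := by
    refine tendsto_nhdsWithin_iff.mpr ⟨?_, ?_⟩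
    · refine tendsto_nhdsWithin_of_tendsto_nhds ?_
      have := Complex.continuous_ofReal.tendsto 0
      simpa using this
    · filter_upwards [self_mem_nhdsWithin] with x hx
      simpa using hx
  exact ht.frequently (Filter.Eventually.frequently (Filter.Eventually.of_forall h))

lemma entire_CV_eq {f g : CV → ℂ} (hf : Differentiable ℂ f) (hg : Differentiable ℂ g)
    (h : ∀ x : Fin 24 → ℝ, f (ofR x) = g (ofR x)) : f = g := by
  funext z
  let x : Fin 24 → ℝ := fun i => (z i).re
  let y : Fin 24 → ℝ := fun i => (z i).im
  have hl : Differentiable ℂ (fun s : ℂ => ofR x + s • ofR y) := by fun_prop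
  have := entire_eq_of_real (hf.comp hl) (hg.comp hl) (fun s => by
    have : ofR x + (s : ℂ) • ofR y = ofR (x + s • y) := by ext i; simp [ofR]
    simp only [Function.comp, this, h])
  have h2 := congrFun this Complex.I
  have h3 : ofR x + Complex.I • ofR y = z := by
    ext i; simp only [ofR, Pi.add_apply, Pi.smul_apply, smul_eq_mul, x, y]
    rw [mul_comm]; exact Complex.re_add_im _
  simpa [Function.comp, h3] using h2

lemma pairC_diff : Differentiable ℂ (fun z => pairC B z z) := by
  unfold pairC
  simp only [dotProduct, Matrix.mulVec]
  fun_prop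

lemma bLin (hB : IsLeech B) : ∃ e : LV ≃ LV, ∀ l, e l = B.mulVec l := by
  have hu : IsUnit B.det := by rw [hB.2.1]; exact isUnit_one
  exact ⟨⟨fun l => B.mulVec l, fun l => B⁻¹.mulVec l,
      fun l => by simp [Matrix.nonsing_inv_mul _ hu], fun l => by simp [Matrix.mul_nonsing_inv _ hu]⟩, fun l => rfl⟩

lemma theta_S_real (hB : IsLeech B) (τ τ' : ℍ) (h : (τ' : ℂ) = -(τ : ℂ)⁻¹) (x : Fin 24 → ℝ) :
    Complex.exp (-(π * Complex.I / τ) * (pairR B x x : ℂ)) * thetaLeech B τ' (-(τ : ℂ)⁻¹ • ofR x) =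
      (τ : ℂ) ^ 12 * thetaLeech B τ (ofR x) := by
  have hτ0 : (τ : ℂ) ≠ 0 := τ.ne_zero
  set b : ℂ := π * Complex.I / τ with hb
  have hbre : 0 < b.re := by
    have : b = (π : ℂ) * (Complex.I * (τ : ℂ)⁻¹) := by rw [hb]; ring
    rw [this, Complex.re_ofReal_mul]
    refine mul_pos Real.pi_pos ?_
    rw [Complex.I_mul_re, Complex.inv_im]
    have := τ.im_pos
    have h2 : 0 < Complex.normSq (τ : ℂ) := Complex.normSq_pos.mpr hτ0
    simp only [UpperHalfPlane.coe_im, neg_div, neg_neg]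
    positivity
  obtain ⟨e, he⟩ := bLin hB
  let g : (Fin 24 → ℝ) → ℂ := fun x => Complex.exp (-b * (pairR B x x : ℂ))
  let F : (Fin 24 → ℝ) → ℂ := fun x => Complex.exp (-b * (pairR B x x : ℂ)) * thetaLeech B τ' (-(τ : ℂ)⁻¹ • ofR x)
  let gh : LV → ℂ := fun m => (τ : ℂ) ^ 12 * eC ((pairZ B (e.symm m) (e.symm m) : ℂ) * τ / 2)
  have hofc : Continuous ofR := by unfold ofR; fun_prop
  have hm : ∀ (l : LV) (x : Fin 24 → ℝ), ∑ i, (e l i : ℂ) * (x i : ℂ) = pairC B (liftC l) (ofR x) := by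
    intro l x
    rw [pairC_comm hB.1, he]
    simp only [pairC, dotProduct, ofR]
    refine Finset.sum_congr rfl fun i _ => ?_
    rw [mul_comm]; congr 1
    simp [Matrix.mulVec, dotProduct, liftC]
  have hg : MeasureTheory.Integrable g MeasureTheory.volume := by
    have := (gauss_int hB b hbre 0).1
    simpa [g, liftC_zero, pairC_zero_left] using this
  have hF : Continuous F := by
    have h1 := (theta_diff hB τ').continuous
    have h2 : Continuous (fun x : Fin 24 → ℝ => pairR B x x) := by
      unfold pairR; simp only [dotProduct, Matrix.mulVec]; fun_prop
    have h3 : Continuous (fun x : Fin 24 → ℝ => -(τ : ℂ)⁻¹ • ofR x) := by fun_prop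
    exact (Complex.continuous_exp.comp (by fun_prop)).mul (h1.comp h3)
  have hs : ∀ x, HasSum (fun l : LV => g (x + fun i => (l i:ℝ))) (F x) := by
    intro x
    refine ((theta_hasSum hB τ' (-(τ : ℂ)⁻¹ • ofR x)).mul_left (Complex.exp (-b * (pairR B x x : ℂ)))).congr_fun ?_
    intro l
    simp only [g]
    unfold eC
    rw [← Complex.exp_add, ← Complex.exp_add]
    congr 1
    have h1 : (pairR B (x + fun i => (l i:ℝ)) (x + fun i => (l i:ℝ)) : ℂ) = (pairR B x x : ℂ) + 2 * pairC B (liftC l) (ofR x) + (pairZ B l l : ℂ) := by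
      rw [← pairC_ofR, ← pairC_ofR, ← pairC_lift]
      have : ofR (x + fun i => (l i:ℝ)) = ofR x + liftC l := by ext i; simp [ofR, liftC]
      rw [this, pairC_add_left, pairC_add_right, pairC_add_right, pairC_comm hB.1 (ofR x) (liftC l)]; ring
    rw [h1, h, pairC_smul_right, hb]
    field_simp
    ring
  have hgh : ∀ m : LV, ∫ x, eC (-∑ i, (m i:ℂ)*(x i:ℂ)) * g x = gh m := by
    intro m
    obtain ⟨l, rfl⟩ := e.surjective m
    have h1 := (gauss_int hB b hbre l).2
    simp only [gh, Equiv.symm_apply_apply]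
    have h2 : ∀ x : Fin 24 → ℝ, eC (-∑ i, (e l i:ℂ)*(x i:ℂ)) * g x = Complex.exp (-b * (pairR B x x : ℂ) - 2 * π * Complex.I * pairC B (liftC l) (ofR x)) := by
      intro x
      rw [hm]; simp only [g]; unfold eC; rw [← Complex.exp_add]; congr 1; ring
    simp only [h2]
    rw [h1]
    have hpi : (π : ℂ) ≠ 0 := by exact_mod_cast Real.pi_ne_zero
    congr 1
    · have : (π : ℂ) / b = -(Complex.I * τ) := by
        rw [hb]; field_simp; simp
      rw [this, neg_pow, mul_pow]
      have : Complex.I ^ 12 = 1 := by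
        rw [show (12:ℕ) = 4 * 3 by norm_num, pow_mul, Complex.I_pow_four, one_pow]
      rw [this]; norm_num
    · unfold eC; congr 1
      rw [hb]; field_simp
      have := Complex.I_sq
      linear_combination (-(pairZ B l l : ℂ)) * this
  have hsum : Summable gh := by
    refine (e.summable_iff).mp ?_
    have := (theta_norm_summable hB τ 0).of_norm.mul_left ((τ : ℂ) ^ 12)
    simpa [Function.comp_def, gh, pairC_zero_right, eC_zero] using this
  have hp := poisson_gen g F gh hg hF hs hgh hsum x
  have hp2 := e.hasSum_iff.mpr hp
  have h3 := ((theta_hasSum hB τ (ofR x)).mul_left ((τ : ℂ) ^ 12))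
  refine hp2.unique (h3.congr_fun ?_)
  intro l
  simp only [Function.comp, gh, Equiv.symm_apply_apply, hm]
  ring

lemma theta_S (hB : IsLeech B) (τ τ' : ℍ) (h : (τ' : ℂ) = -(τ : ℂ)⁻¹) (z : CV) :
    thetaLeech B τ' ((τ : ℂ)⁻¹ • z) =
      (τ : ℂ) ^ 12 * eC (pairC B z z / (2 * τ)) * thetaLeech B τ z := by
  have hq := pairC_diff (B := B)
  have h1 := entire_CV_eq (f := fun z => Complex.exp (-(π * Complex.I / τ) * (pairC B z z : ℂ)) * thetaLeech B τ' (-(τ : ℂ)⁻¹ • z))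
    (g := fun z => (τ : ℂ) ^ 12 * thetaLeech B τ z)
    (by
      have h1 := (theta_diff hB τ').comp (f := fun z : CV => -(τ : ℂ)⁻¹ • z) (by fun_prop)
      exact (Differentiable.cexp (by fun_prop)).mul h1)
    ((theta_diff hB τ).const_mul _)
    (fun x => by simp only [pairC_ofR]; exact theta_S_real hB τ τ' h x)
  have h2 := congrFun h1 z
  have h5 : -(τ : ℂ)⁻¹ • z = -((τ : ℂ)⁻¹ • z) := by ext i; simp
  simp only [h5] at h2
  rw [theta_even hB] at h2
  have h3 : Complex.exp (-(π * Complex.I / τ) * (pairC B z z : ℂ)) = eC (- (pairC B z z / (2 * τ))) := by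
    unfold eC; congr 1
    have := τ.ne_zero
    field_simp
  rw [h3, eC_neg] at h2
  have h4 := eC_ne_zero (pairC B z z / (2 * τ))
  field_simp at h2
  rw [← one_div]; exact h2

end

section
variable {B : Matrix (Fin 24) (Fin 24) ℤ}

lemma jfactor_eq (A : SL(2, ℤ)) (τ : ℍ) : jfactor A τ = UpperHalfPlane.denom A τ := by
  rw [ModularGroup.denom_apply]; rfl

lemma jfactor_ne (A : SL(2, ℤ)) (τ : ℍ) : jfactor A τ ≠ 0 := by
  rw [jfactor_eq]; exact UpperHalfPlane.denom_ne_zero _ _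

lemma coe_smul_eq (A : SL(2, ℤ)) (τ : ℍ) : ((A • τ : ℍ) : ℂ) =
    (((A : Matrix (Fin 2) (Fin 2) ℤ) 0 0 : ℤ) * (τ : ℂ) + ((A : Matrix (Fin 2) (Fin 2) ℤ) 0 1 : ℤ)) / jfactor A τ := by
  rw [UpperHalfPlane.coe_specialLinearGroup_apply]
  simp [jfactor, slc, sld]

lemma slc_mul (A A' : SL(2, ℤ)) : slc (A * A') = slc A * ((A' : Matrix (Fin 2) (Fin 2) ℤ) 0 0 : ℤ) + sld A * slc A' := by
  simp [slc, sld, Matrix.mul_apply, Fin.sum_univ_two]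

lemma sld_mul (A A' : SL(2, ℤ)) : sld (A * A') = slc A * ((A' : Matrix (Fin 2) (Fin 2) ℤ) 0 1 : ℤ) + sld A * sld A' := by
  simp [slc, sld, Matrix.mul_apply, Fin.sum_univ_two]

lemma sl_det (A : SL(2, ℤ)) : ((A : Matrix (Fin 2) (Fin 2) ℤ) 0 0 : ℂ) * sld A - ((A : Matrix (Fin 2) (Fin 2) ℤ) 0 1 : ℂ) * slc A = 1 := by
  have := A.det_coe
  rw [Matrix.det_fin_two] at this
  unfold sld slc
  exact_mod_cast this

lemma jfactor_mul (A A' : SL(2, ℤ)) (τ : ℍ) : jfactor (A * A') τ = jfactor A (A' • τ) * jfactor A' τ := by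
  have h := jfactor_ne A' τ
  conv_rhs => rw [jfactor]
  rw [coe_smul_eq, jfactor, slc_mul, sld_mul]
  field_simp
  rw [jfactor]; ring

lemma slc_cocycle (A A' : SL(2, ℤ)) (τ : ℍ) :
    slc A + slc A' * jfactor (A * A') τ = slc (A * A') * jfactor A' τ := by
  rw [jfactor, jfactor, slc_mul, sld_mul]
  linear_combination (-slc A) * sl_det A'

lemma jfactor_one (τ : ℍ) : jfactor 1 τ = 1 := by simp [jfactor, slc, sld]
lemma slc_inv (A : SL(2, ℤ)) : slc A⁻¹ = - slc A := by
  simp [slc, Matrix.SpecialLinearGroup.SL2_inv_expl]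

/-- Modular transformation law for one matrix -/
def ModAt (B : Matrix (Fin 24) (Fin 24) ℤ) (k : ℤ) (t : ℕ) (φ : ℍ → CV → ℂ) (A : SL(2, ℤ)) : Prop :=
  ∀ (τ : ℍ) (z : CV), φ (A • τ) ((jfactor A τ)⁻¹ • z) =
      (jfactor A τ) ^ k * eC (t * slc A * pairC B z z / (2 * jfactor A τ)) * φ τ z

lemma pairC_smul_smul (a : ℂ) (z w : CV) : pairC B (a • z) (a • w) = a ^ 2 * pairC B z w := by
  rw [pairC_smul_left, pairC_smul_right]; ring

lemma ModAt.mul {k : ℤ} {t : ℕ} {φ : ℍ → CV → ℂ} {A A' : SL(2, ℤ)} (h : ModAt B k t φ A) (h' : ModAt B k t φ A') :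
    ModAt B k t φ (A * A') := by
  intro τ z
  have h1 := h (A' • τ) ((jfactor A' τ)⁻¹ • z)
  rw [h' τ z, smul_smul, smul_smul, ← mul_inv, ← jfactor_mul] at h1
  rw [h1, pairC_smul_smul]
  have hj := jfactor_ne A (A' • τ)
  have hj' := jfactor_ne A' τ
  have hc := slc_cocycle A A' τ
  rw [jfactor_mul] at hc ⊢
  rw [mul_zpow]
  have : eC (t * slc (A * A') * pairC B z z / (2 * (jfactor A (A' • τ) * jfactor A' τ))) =
     eC (t * slc A * ((jfactor A' τ)⁻¹ ^ 2 * pairC B z z) / (2 * jfactor A (A' • τ))) *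
      eC (t * slc A' * pairC B z z / (2 * jfactor A' τ)) := by
    rw [← eC_add]; congr 1
    field_simp
    linear_combination (-(t : ℂ) * pairC B z z) * hc
  rw [this]; ring

lemma ModAt.inv {k : ℤ} {t : ℕ} {φ : ℍ → CV → ℂ} {A : SL(2, ℤ)} (h : ModAt B k t φ A) :
    ModAt B k t φ A⁻¹ := by
  intro τ z
  have hjj := jfactor_mul A A⁻¹ τ
  rw [mul_inv_cancel, jfactor_one] at hjj
  have hj' := jfactor_ne A⁻¹ τ
  have h1 := h (A⁻¹ • τ) ((jfactor A⁻¹ τ)⁻¹ • z)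
  rw [eq_inv_of_mul_eq_one_left hjj.symm, inv_inv, smul_inv_smul, smul_smul, mul_inv_cancel₀ hj', one_smul, pairC_smul_smul] at h1
  rw [h1, slc_inv]
  have h3 : eC (t * -slc A * pairC B z z / (2 * jfactor A⁻¹ τ)) * eC (t * slc A * ((jfactor A⁻¹ τ)⁻¹ ^ 2 * pairC B z z) / (2 * (jfactor A⁻¹ τ)⁻¹)) = 1 := by
    rw [← eC_add, ← eC_zero]; congr 1
    field_simp
    ring
  have h4 : jfactor A⁻¹ τ ^ k * (jfactor A⁻¹ τ)⁻¹ ^ k = 1 := by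
    rw [← mul_zpow, mul_inv_cancel₀ hj', _root_.one_zpow]
  calc _ = (jfactor A⁻¹ τ ^ k * (jfactor A⁻¹ τ)⁻¹ ^ k) * (eC (t * -slc A * pairC B z z / (2 * jfactor A⁻¹ τ)) * eC (t * slc A * ((jfactor A⁻¹ τ)⁻¹ ^ 2 * pairC B z z) / (2 * (jfactor A⁻¹ τ)⁻¹))) * φ (A⁻¹ • τ) ((jfactor A⁻¹ τ)⁻¹ • z) := by rw [h3, h4]; ring
    _ = _ := by ring

lemma theta_modular (hB : IsLeech B) (A : SL(2, ℤ)) : ModAt B 12 1 (thetaLeech B) A := by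
  have hA : A ∈ Subgroup.closure {ModularGroup.S, ModularGroup.T} := by
    rw [SpecialLinearGroup.SL2Z_generators]; trivial
  induction hA using Subgroup.closure_induction with
  | mem x hx =>
    rcases hx with rfl | rfl
    · intro τ z
      have hj : jfactor ModularGroup.S τ = τ := by simp [jfactor, slc, sld, ModularGroup.S]
      have hc : slc ModularGroup.S = 1 := by simp [slc, ModularGroup.S]
      rw [hj, hc]
      have := theta_S hB τ (ModularGroup.S • τ) (by rw [UpperHalfPlane.modular_S_smul]; simp [inv_neg]) z
      rw [this]; norm_num
    · intro τ z
      have hj : jfactor ModularGroup.T τ = 1 := by simp [jfactor, slc, sld, ModularGroup.T]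
      have hc : slc ModularGroup.T = 0 := by simp [slc, ModularGroup.T]
      rw [hj, hc]
      have := theta_T hB τ (ModularGroup.T • τ) (by rw [UpperHalfPlane.modular_T_smul, UpperHalfPlane.coe_vadd]; push_cast; ring) z
      rw [inv_one, one_smul, this, mul_zero, zero_mul, zero_div, eC_zero]; simp
  | one =>
    intro τ z
    have hc : slc 1 = 0 := by simp [slc]
    simp [jfactor_one, hc, eC_zero]
  | mul x y _ _ hx hy => exact hx.mul hy
  | inv x _ hx => exact hx.inv

end

section
/-! ### basics of Jacobi forms -/
variable {B : Matrix (Fin 24) (Fin 24) ℤ}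

lemma jf_mk (hB : IsLeech B) {k : ℤ} {t : ℕ} {φ : ℍ → CV → ℂ} {f : ℕ → LV → ℂ}
    (h1 : ∀ σ ∈ ConwayGroup B, ∀ (τ : ℍ) (z : CV), φ τ (actC σ z) = φ τ z)
    (h2 : ∀ (x y : LV) (τ : ℍ) (z : CV), φ τ (z + (τ : ℂ) • liftC x + liftC y) =
      eC (t * (-((pairZ B x x : ℂ) * τ / 2) - pairC B (liftC x) z)) * φ τ z)
    (h3 : ∀ A, ModAt B k t φ A)
    (h4 : ∀ (τ : ℍ) (z : CV), HasSum (fun p : ℕ × LV => f p.1 p.2 * fterm B p.1 p.2 τ z) (φ τ z)) :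
    IsJacobiFormWith B k t φ f where
  holo_tau := exp_holo_tau hB h4
  holo_z := exp_holo_z hB h4
  conway_invar := h1
  quasi_periodic := fun x y τ z => by
    rw [h2]; congr 1; unfold eC; congr 1; ring
  modular := fun A τ z => by
    rw [h3 A τ z]; congr 2; unfold eC; congr 1
    have := jfactor_ne A τ
    field_simp
  expansion := h4

lemma jf_quasi {k : ℤ} {t : ℕ} {φ : ℍ → CV → ℂ} {f : ℕ → LV → ℂ} (h : IsJacobiFormWith B k t φ f)
    (x y : LV) (τ : ℍ) (z : CV) : φ τ (z + (τ : ℂ) • liftC x + liftC y) =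
      eC (t * (-((pairZ B x x : ℂ) * τ / 2) - pairC B (liftC x) z)) * φ τ z := by
  rw [h.quasi_periodic]; congr 1; unfold eC; congr 1; ring

lemma jf_mod {k : ℤ} {t : ℕ} {φ : ℍ → CV → ℂ} {f : ℕ → LV → ℂ} (h : IsJacobiFormWith B k t φ f)
    (A : SL(2, ℤ)) : ModAt B k t φ A := by
  intro τ z
  rw [h.modular]; congr 2; unfold eC; congr 1
  have := jfactor_ne A τ
  field_simp

lemma coeff_zero_int (hB : IsLeech B) (c : ℤ × LV → ℂ)
    (h : ∀ (τ : ℍ) (z : CV), HasSum (fun p : ℤ × LV => c p * (eC (p.1 * τ) * eC (pairC B (liftC p.2) z))) 0) :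
    c = 0 := by
  funext p
  have := coeff_bound_int (fun p => c p * eC (p.1 * Complex.I)) (fun _ _ => 0) (fun u x => by
    obtain ⟨τ, hτ⟩ : ∃ τ : ℍ, (τ : ℂ) = u + Complex.I := ⟨⟨u + Complex.I, by simp⟩, rfl⟩
    refine (h τ (binv B (ofR x))).congr_fun fun p => ?_
    rw [hτ, pairC_binv hB, mul_add, eC_add, eC_add]
    simp only [liftC, ofR]
    ring) 0 (by simp) p
  have h2 := norm_le_zero_iff.mp this
  exact (mul_eq_zero.mp h2).resolve_right (eC_ne_zero _)

/-- extension of coefficients to integers -/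
def fz (f : ℕ → LV → ℂ) (n : ℤ) (l : LV) : ℂ := if 0 ≤ n then f n.toNat l else 0

lemma fz_nat (f : ℕ → LV → ℂ) (n : ℕ) (l : LV) : fz f n l = f n l := by simp [fz]
lemma fz_neg (f : ℕ → LV → ℂ) {n : ℤ} (hn : n < 0) (l : LV) : fz f n l = 0 := by
  simp [fz, not_le.mpr hn]

lemma fz_exp {f : ℕ → LV → ℂ} {τ : ℍ} {z : CV} {a : ℂ}
    (h : HasSum (fun p : ℕ × LV => f p.1 p.2 * fterm B p.1 p.2 τ z) a) :
    HasSum (fun p : ℤ × LV => fz f p.1 p.2 * (eC (p.1 * τ) * eC (pairC B (liftC p.2) z))) a := by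
  have hi : Function.Injective (fun p : ℕ × LV => ((p.1 : ℤ), p.2)) := by
    rintro ⟨a, b⟩ ⟨c, d⟩ hh; simp at hh; ext1 <;> simp [hh]
  refine (hi.hasSum_iff ?_).mp ?_
  · rintro ⟨n, l⟩ hn
    have : n < 0 := by
      by_contra hc
      exact hn ⟨(n.toNat, l), by simp [Int.toNat_of_nonneg (not_lt.mp hc)]⟩
    simp [fz_neg f this]
  · refine h.congr_fun fun p => ?_
    simp [fz_nat, fterm]

lemma half_norm (hB : IsLeech B) (x : LV) : ∃ h : ℤ, pairZ B x x = 2 * h := by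
  obtain ⟨m, hm⟩ := hB.2.2.2.1 x
  exact ⟨m, by rw [hm]; ring⟩

lemma fz_shift (hB : IsLeech B) {k : ℤ} {t : ℕ} {φ : ℍ → CV → ℂ} {f : ℕ → LV → ℂ} (hφ : IsJacobiFormWith B k t φ f)
    (x : LV) (m : ℤ) (hm : pairZ B x x = 2 * m) (n : ℤ) (l : LV) :
    fz f n l = fz f (n + pairZ B l x + t * m) (l + (t : ℤ) • x) := by
  let e1 : ℤ × LV ≃ ℤ × LV := ⟨fun p => (p.1 - pairZ B p.2 x, p.2), fun p => (p.1 + pairZ B p.2 x, p.2),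
    fun p => by simp, fun p => by simp⟩
  let e2 : ℤ × LV ≃ ℤ × LV := ⟨fun p => (p.1 + t * m, p.2 + (t : ℤ) • x), fun p => (p.1 - t * m, p.2 - (t : ℤ) • x),
    fun p => by simp, fun p => by simp⟩
  have := coeff_zero_int hB (fun p => fz f (e1 p).1 (e1 p).2 - fz f (e2 p).1 (e2 p).2) (fun τ z => by
    have h1 := e1.hasSum_iff.mpr (fz_exp (hφ.expansion τ (z + (τ : ℂ) • liftC x + liftC 0)))
    have h2 := e2.hasSum_iff.mpr ((fz_exp (hφ.expansion τ z)).mul_left (eC (t * (-((pairZ B x x : ℂ) * τ / 2) - pairC B (liftC x) z))))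
    rw [jf_quasi hφ] at h1
    have h3 := h1.sub h2
    rw [sub_self] at h3
    refine h3.congr_fun fun p => ?_
    simp only [Function.comp]
    rw [sub_mul]
    congr 1
    · congr 1
      rw [← eC_add, ← eC_add]; congr 1
      simp only [e1, Equiv.coe_fn_mk]
      rw [liftC_zero, add_zero, pairC_add_right, pairC_smul_right, pairC_lift]; push_cast; ring
    · rw [mul_left_comm (eC _) (fz f _ _)]; congr 1
      rw [← eC_add, ← eC_add, ← eC_add]; congr 1
      simp only [e2, Equiv.coe_fn_mk]
      rw [liftC_add, liftC_smul, pairC_add_left, pairC_smul_left, hm]; push_cast; ring)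
  have h := congrFun this (n + pairZ B l x, l)
  simp only [e1, e2, Equiv.coe_fn_mk, Pi.zero_apply, add_sub_cancel_right] at h
  exact sub_eq_zero.mp h

lemma f_conway (hB : IsLeech B) {k : ℤ} {t : ℕ} {φ : ℍ → CV → ℂ} {f : ℕ → LV → ℂ} (hφ : IsJacobiFormWith B k t φ f)
    {σ} (hσ : σ ∈ ConwayGroup B) (n : ℕ) (l : LV) : f n (σ.mulVec l) = f n l := by
  obtain ⟨e, he⟩ : ∃ e : LV ≃ LV, ∀ l, e l = σ.mulVec l :=
    ⟨⟨fun l => σ.mulVec l, fun l => σ⁻¹.mulVec l,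
      fun l => by simp [conway_inv_mul hσ], fun l => by simp [conway_mul_inv hσ]⟩, fun l => rfl⟩
  have := coeff_unique hB (f := fun n l => f n (σ.mulVec l)) (g := f) (φ := φ) (fun τ z => by
    have h1 := (Equiv.prodCongr (Equiv.refl ℕ) e).hasSum_iff.mpr (hφ.expansion τ (actC σ z))
    rw [hφ.conway_invar σ hσ] at h1
    refine h1.congr_fun fun p => ?_
    simp only [Function.comp, Equiv.prodCongr_apply, Prod.map, Equiv.refl_apply, he]
    congr 1
    unfold fterm
    rw [← actC_lift, pairC_act hσ]) hφ.expansion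
  exact congrFun (congrFun this n) l

lemma shift_norm (hB : IsLeech B) (t : ℕ) (l w : LV) (m : ℤ) (hm : pairZ B w w = 2 * m) :
    pairZ B (l + (t : ℤ) • w) (l + (t : ℤ) • w) = pairZ B l l + 2 * t * (pairZ B l w + t * m) := by
  rw [pairZ_add_left, pairZ_add_right, pairZ_add_right, pairZ_smul_left, pairZ_smul_right, pairZ_smul_left, pairZ_smul_right,
    pairZ_comm hB.1 w l, hm]; ring

lemma supp_min (hB : IsLeech B) {k : ℤ} {t : ℕ} (ht : 1 ≤ t) {φ : ℍ → CV → ℂ} {f : ℕ → LV → ℂ} (hφ : IsJacobiFormWith B k t φ f)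
    (l : LV) (hl : f 0 l ≠ 0) : l ∈ minimalSet B t := by
  rintro u ⟨w, rfl⟩
  obtain ⟨m, hm⟩ := half_norm hB w
  have h := fz_shift hB hφ w m hm 0 l
  rw [shift_norm hB t l w m hm]
  have h0 : fz f 0 l = f 0 l := fz_nat f 0 l
  rw [h0, zero_add] at h
  have : 0 ≤ pairZ B l w + t * m := by
    by_contra hc
    rw [fz_neg f (not_le.mp hc)] at h
    exact hl h
  have : (0 : ℤ) ≤ 2 * t * (pairZ B l w + t * m) := by positivity
  linarith

lemma min_conway {t : ℕ} {σ} (hσ : σ ∈ ConwayGroup B) {u : LV} (hu : u ∈ minimalSet B t) :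
    σ.mulVec u ∈ minimalSet B t := by
  rintro v ⟨w, rfl⟩
  rw [pairZ_act hσ]
  have := hu (u + (t : ℤ) • σ⁻¹.mulVec w) ⟨_, rfl⟩
  rw [← pairZ_act hσ (u + _) _] at this
  have h2 : σ.mulVec (u + (t : ℤ) • σ⁻¹.mulVec w) = σ.mulVec u + (t : ℤ) • w := by
    rw [Matrix.mulVec_add, Matrix.mulVec_smul, Matrix.mulVec_mulVec, conway_mul_inv hσ, Matrix.one_mulVec]
  rwa [h2] at this

lemma f0_class (hB : IsLeech B) {k : ℤ} {t : ℕ} (ht : 1 ≤ t) {φ : ℍ → CV → ℂ} {f : ℕ → LV → ℂ} (hφ : IsJacobiFormWith B k t φ f)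
    {v u : LV} (hv : v ∈ minimalSet B t) (hu : u ∈ minimalSet B t) (h : conjModT B t v u) : f 0 v = f 0 u := by
  obtain ⟨σ, hσ, w, hw⟩ := h
  have hv' : v = σ.mulVec u + (t : ℤ) • w := by rw [← hw]; abel
  obtain ⟨m, hm⟩ := half_norm hB w
  have h := fz_shift hB hφ w m hm 0 (σ.mulVec u)
  have hs := shift_norm hB t (σ.mulVec u) w m hm
  have hu' := min_conway hσ hu
  have a1 := hu' v ⟨w, hv'⟩
  have a2 := hv (σ.mulVec u) ⟨-w, by rw [hv']; simp⟩
  rw [← hv'] at hs h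
  have ht' : (0 : ℤ) < t := by exact_mod_cast ht
  have : 2 * (t : ℤ) * (pairZ B (σ.mulVec u) w + t * m) = 0 := by linarith
  have h0 : pairZ B (σ.mulVec u) w + t * m = 0 := by
    rcases mul_eq_zero.mp this with h | h
    · omega
    · exact h
  rw [zero_add, h0] at h
  have e1 : ∀ l, fz f 0 l = f 0 l := fun l => fz_nat f 0 l
  rw [e1, e1, f_conway hB hφ hσ] at h
  exact h.symm

lemma exists_min (hB : IsLeech B) (t : ℕ) (l : LV) : ∃ w : LV, l + (t : ℤ) • w ∈ minimalSet B t := by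
  classical
  have hne : ∃ n : ℕ, ∃ w : LV, (n : ℤ) = pairZ B (l + (t : ℤ) • w) (l + (t : ℤ) • w) := 
    ⟨(pairZ B (l + (t : ℤ) • 0) (l + (t : ℤ) • 0)).toNat, 0, Int.toNat_of_nonneg (pairZ_posdef_nonneg hB _)⟩
  obtain ⟨w, hw⟩ := Nat.find_spec hne
  refine ⟨w, ?_⟩
  rintro u ⟨w', rfl⟩
  rw [← hw]
  have h1 := pairZ_posdef_nonneg hB (l + (t : ℤ) • w + (t : ℤ) • w')
  have := Nat.find_min' hne (m := (pairZ B (l + (t : ℤ) • w + (t : ℤ) • w') (l + (t : ℤ) • w + (t : ℤ) • w')).toNat)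
    ⟨w + w', by rw [Int.toNat_of_nonneg h1, smul_add, add_assoc]⟩
  omega

lemma min_bound (hB : IsLeech B) (t : ℕ) (ht : 1 ≤ t) : ∃ C : ℤ, ∀ v ∈ minimalSet B t, pairZ B v v ≤ C := by
  have hfin : (Set.univ.pi (fun _ : Fin 24 => Set.Ico (0 : ℤ) t)).Finite :=
    Set.Finite.pi (fun _ => Set.finite_Ico _ _)
  obtain ⟨C, hC⟩ := (hfin.image (fun v => pairZ B v v)).bddAbove
  refine ⟨C, fun v hv => ?_⟩
  have ht' : (0 : ℤ) < t := by exact_mod_cast ht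
  refine (hv (fun i => v i % t) ⟨fun i => -(v i / t), ?_⟩).trans (hC ⟨fun i => v i % t, ?_, rfl⟩)
  · funext i
    simp only [Pi.add_apply, Pi.smul_apply, smul_eq_mul]
    have := Int.emod_add_mul_ediv (v i) t
    linarith
  · intro i _
    exact ⟨Int.emod_nonneg _ ht'.ne', Int.emod_lt_of_pos _ ht'⟩

lemma min_finite (hB : IsLeech B) (t : ℕ) (ht : 1 ≤ t) : (minimalSet B t).Finite := by
  obtain ⟨C, hC⟩ := min_bound hB t ht
  refine (finite_norm_le hB C).subset fun v hv => ?_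
  have := hC v hv
  exact_mod_cast this

lemma supp_weak (hB : IsLeech B) (t : ℕ) (ht : 1 ≤ t) : ∃ C : ℕ, ∀ {k : ℤ} {φ : ℍ → CV → ℂ} {f : ℕ → LV → ℂ},
    IsJacobiFormWith B k t φ f → ∀ n l, f n l ≠ 0 → -(C : ℤ) ≤ 2 * (n : ℤ) * t - pairZ B l l := by
  obtain ⟨C, hC⟩ := min_bound hB t ht
  refine ⟨C.toNat, fun {k φ f} hφ n l hf => ?_⟩
  obtain ⟨w, hw⟩ := exists_min hB t l
  obtain ⟨m, hm⟩ := half_norm hB w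
  have h := fz_shift hB hφ w m hm n l
  have hs := shift_norm hB t l w m hm
  have hc := hC _ hw
  rw [fz_nat] at h
  have h1 : 0 ≤ (n : ℤ) + pairZ B l w + t * m := by
    by_contra hc
    rw [fz_neg f (not_le.mp hc)] at h
    exact hf h
  have h2 : 0 ≤ 2 * (t : ℤ) * ((n : ℤ) + pairZ B l w + t * m) := by positivity
  have h3 := Int.self_le_toNat C
  have h4 : 2 * (t : ℤ) * ((n : ℤ) + pairZ B l w + t * m) = 2 * n * t + 2 * t * (pairZ B l w + t * m) := by ring
  linarith

end

section
/-! ### modular forms -/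

/-- `g` is a modular form of weight `k` -/
def IsMF (k : ℤ) (g : ℍ → ℂ) : Prop := ∃ G : ModularForm 𝒮ℒ k, ⇑G = g

def c0 (g : ℍ → ℂ) : ℂ := (qExpansion 1 g).coeff 0

lemma gamma1_eq : ((CongruenceSubgroup.Gamma 1 : Subgroup SL(2, ℤ)) : Subgroup (GL (Fin 2) ℝ)) = 𝒮ℒ := by
  rw [CongruenceSubgroup.Gamma_one_top, ← MonoidHom.range_eq_map]

lemma isMF_of_MForm {k : ℤ} (G : MForm k) : IsMF k G :=
  ⟨ModularForm.mcast rfl G gamma1_eq.symm, rfl⟩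

lemma IsMF.mform {k : ℤ} {g : ℍ → ℂ} (h : IsMF k g) : ∃ G : MForm k, ⇑G = g := by
  obtain ⟨G, rfl⟩ := h
  exact ⟨ModularForm.mcast rfl G gamma1_eq, rfl⟩

lemma IsMF.cast {k k' : ℤ} {g : ℍ → ℂ} (h : IsMF k g) (e : k = k') : IsMF k' g := e ▸ h

lemma IsMF.add {k : ℤ} {g g' : ℍ → ℂ} (h : IsMF k g) (h' : IsMF k g') : IsMF k (g + g') := by
  obtain ⟨G, rfl⟩ := h; obtain ⟨G', rfl⟩ := h'; exact ⟨G + G', rfl⟩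
lemma IsMF.smul {k : ℤ} {g : ℍ → ℂ} (h : IsMF k g) (c : ℂ) : IsMF k (c • g) := by
  obtain ⟨G, rfl⟩ := h; exact ⟨c • G, rfl⟩
lemma IsMF.mul {k k' : ℤ} {g g' : ℍ → ℂ} (h : IsMF k g) (h' : IsMF k' g') : IsMF (k + k') (g * g') := by
  obtain ⟨G, rfl⟩ := h; obtain ⟨G', rfl⟩ := h'; exact ⟨G.mul G', rfl⟩
lemma IsMF.zero (k : ℤ) : IsMF k 0 := ⟨0, rfl⟩
lemma IsMF.one : IsMF 0 1 := ⟨1, rfl⟩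
lemma IsMF.pow {k : ℤ} {g : ℍ → ℂ} (h : IsMF k g) (n : ℕ) : IsMF (n * k) (g ^ n) := by
  induction n with
  | zero => simpa using IsMF.one
  | succ n ih => rw [pow_succ]; exact (ih.mul h).cast (by push_cast; ring)

lemma c0_add {k : ℤ} {g g' : ℍ → ℂ} (h : IsMF k g) (h' : IsMF k g') : c0 (g + g') = c0 g + c0 g' := by
  obtain ⟨G, rfl⟩ := h; obtain ⟨G', rfl⟩ := h'
  have := ModularForm.qExpansion_add one_pos one_mem_strictPeriods_SL G G'
  unfold c0; rw [this]; simp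
lemma c0_smul {k : ℤ} {g : ℍ → ℂ} (h : IsMF k g) (c : ℂ) : c0 (c • g) = c * c0 g := by
  obtain ⟨G, rfl⟩ := h
  have := ModularForm.qExpansion_smul one_pos one_mem_strictPeriods_SL c G
  unfold c0; rw [this]; simp
lemma c0_mul {k k' : ℤ} {g g' : ℍ → ℂ} (h : IsMF k g) (h' : IsMF k' g') : c0 (g * g') = c0 g * c0 g' := by
  obtain ⟨G, rfl⟩ := h; obtain ⟨G', rfl⟩ := h'
  have := ModularForm.qExpansion_mul one_pos one_mem_strictPeriods_SL G G'
  unfold c0; 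
  have e : ⇑G * ⇑G' = ⇑(G.mul G') := rfl
  rw [e, this]; simp
lemma c0_pow {k : ℤ} {g : ℍ → ℂ} (h : IsMF k g) (n : ℕ) : c0 (g ^ n) = c0 g ^ n := by
  induction n with
  | zero => simp [c0, UpperHalfPlane.qExpansion_one]
  | succ n ih => rw [pow_succ, c0_mul (h.pow n) h, ih, pow_succ]

lemma qParam_eC (τ : ℂ) : Function.Periodic.qParam 1 τ = eC τ := by
  unfold Function.Periodic.qParam eC; simp

lemma IsMF.qexp {k : ℤ} {g : ℍ → ℂ} (h : IsMF k g) : ∃ a : ℕ → ℂ, a 0 = c0 g ∧ ∀ τ : ℍ, HasSum (fun n : ℕ => a n * eC (n * τ)) (g τ) := by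
  obtain ⟨G, rfl⟩ := h
  refine ⟨fun n => (qExpansion 1 G).coeff n, rfl, fun τ => ?_⟩
  have := ModularForm.hasSum_qExpansion G one_pos one_mem_strictPeriods_SL τ
  refine this.congr_fun fun n => ?_
  rw [qParam_eC, eC_nat_mul]

lemma IsMF.trans {k : ℤ} {g : ℍ → ℂ} (h : IsMF k g) (A : SL(2, ℤ)) (τ : ℍ) : g (A • τ) = jfactor A τ ^ k * g τ := by
  obtain ⟨G, rfl⟩ := h.mform
  rw [jfactor_eq]
  exact SlashInvariantForm.slash_action_eqn_SL'' G (by rw [CongruenceSubgroup.Gamma_one_top]; trivial) τ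

/-- discriminant, Eisenstein series as functions -/
def DD : ℍ → ℂ := ModularForm.discriminant
def e4 : ℍ → ℂ := ModularForm.E₄
def e6 : ℍ → ℂ := ModularForm.E₆

lemma DD_mf : IsMF 12 DD := ⟨CuspForm.toModularFormₗ CuspForm.discriminant, rfl⟩
lemma e4_mf : IsMF 4 e4 := ⟨ModularForm.E₄, rfl⟩
lemma e6_mf : IsMF 6 e6 := ⟨ModularForm.E₆, rfl⟩
lemma DD_ne (τ : ℍ) : DD τ ≠ 0 := ModularForm.discriminant_ne_zero τ
lemma DD_eq (τ : ℍ) : 1728 * DD τ = e4 τ ^ 3 - e6 τ ^ 2 := by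
  unfold DD e4 e6; rw [ModularForm.discriminant_eq_E₄_cube_sub_E₆_sq]; ring
lemma c0_e4 : c0 e4 = 1 := EisensteinSeries.E_qExpansion_coeff_zero _ ⟨2, rfl⟩
lemma c0_e6 : c0 e6 = 1 := EisensteinSeries.E_qExpansion_coeff_zero _ ⟨3, rfl⟩
lemma c0_DD : c0 DD = 0 := CuspFormClass.qExpansion_coeff_zero CuspForm.discriminant one_pos one_mem_strictPeriods_SL

lemma IsMF.div {k : ℤ} {g : ℍ → ℂ} (h : IsMF k g) (h0 : c0 g = 0) : ∃ g', IsMF (k - 12) g' ∧ g = DD * g' := by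
  obtain ⟨G, rfl⟩ := h
  obtain ⟨F, hF⟩ := (ModularForm.isCuspForm_iff_coeffZero_eq_zero G).mpr h0
  refine ⟨CuspForm.discriminantEquiv F, ⟨_, rfl⟩, ?_⟩
  funext τ
  have := ModularForm.discriminant_mul_discriminantEquiv_apply F τ
  rw [Pi.mul_apply]; unfold DD; rw [this, ← hF]; rfl

lemma IsMF.neg_weight {k : ℤ} {g : ℍ → ℂ} (h : IsMF k g) (hk : k < 0) : g = 0 := by
  obtain ⟨G, rfl⟩ := h
  exact ModularFormClass.levelOne_neg_weight_eq_zero hk G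
lemma IsMF.odd {k : ℤ} {g : ℍ → ℂ} (h : IsMF k g) (hk : Odd k) : g = 0 := by
  obtain ⟨G, rfl⟩ := h
  rw [ModularForm.levelOne_odd_weight_eq_zero hk G]; rfl
lemma IsMF.two {g : ℍ → ℂ} (h : IsMF 2 g) : g = 0 := by
  obtain ⟨G, rfl⟩ := h
  have := rank_zero_iff.mp ModularForm.levelOne_weight_two_rank_zero
  rw [Subsingleton.elim G 0]; rfl
lemma IsMF.const {g : ℍ → ℂ} (h : IsMF 0 g) : ∃ c : ℂ, g = fun _ => c := by
  obtain ⟨G, rfl⟩ := h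
  exact ModularFormClass.levelOne_weight_zero_const G

lemma exists_wt {k : ℤ} (hk : 4 ≤ k) (he : Even k) : ∃ a b : ℕ, (4 * a + 6 * b : ℤ) = k := by
  obtain ⟨m, hm⟩ := he
  rcases Int.even_or_odd m with ⟨r, hr⟩ | ⟨r, hr⟩
  · exact ⟨r.toNat, 0, by omega⟩
  · exact ⟨(r - 1).toNat, 1, by omega⟩

lemma exists_eis {k : ℤ} (hk : 4 ≤ k) (he : Even k) : ∃ g, IsMF k g ∧ c0 g = 1 := by
  obtain ⟨a, b, h⟩ := exists_wt hk he
  exact ⟨e4 ^ a * e6 ^ b, ((e4_mf.pow a).mul (e6_mf.pow b)).cast (by linarith), by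
    rw [c0_mul (e4_mf.pow a) (e6_mf.pow b), c0_pow e4_mf, c0_pow e6_mf, c0_e4, c0_e6]; simp⟩

lemma inv_DD_exp : ∃ b : ℕ → ℂ, ∀ τ : ℍ, HasSum (fun n : ℕ => b n * eC (n * τ)) (eC τ * (DD τ)⁻¹) := by
  set P : ℂ → ℂ := fun q => ∏' i : ℕ, (1 - q ^ (i + 1)) ^ 24 with hP
  have hd : DifferentiableOn ℂ P (Metric.ball 0 1) := ModularForm.differentiableOn_tprod_one_sub_pow_pow 24
  have hper : Function.Periodic (ModularForm.discriminant ∘ ofComplex) (1 : ℝ) := by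
    have := SlashInvariantFormClass.periodic_comp_ofComplex CuspForm.discriminant (h := 1) one_mem_strictPeriods_SL
    exact this
  have hval : ∀ τ : ℍ, DD τ = eC τ * P (eC τ) := by
    intro τ
    have h1 := ModularForm.discriminant_cuspFunction_eqOn (x := Function.Periodic.qParam 1 τ)
      (by simpa using Function.Periodic.norm_qParam_lt_one one_pos τ.im_pos)
    rw [eq_cuspFunction τ one_ne_zero hper] at h1
    unfold DD
    rw [h1, qParam_eC]
  have hne : ∀ q ∈ Metric.ball (0 : ℂ) 1, P q ≠ 0 := by
    intro q hq
    by_cases hq0 : q = 0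
    · subst hq0; simp [hP]
    · have him := Function.Periodic.im_invQParam_pos_of_norm_lt_one one_pos
        (by simpa [dist_zero_right] using hq) hq0
      have h1 := hval ⟨_, him⟩
      rw [← qParam_eC] at h1
      simp only [Function.Periodic.qParam_right_inv one_ne_zero hq0] at h1
      intro h2
      rw [h2, mul_zero] at h1
      exact DD_ne _ h1
  have hd' : DifferentiableOn ℂ (fun q => (P q)⁻¹) (Metric.ball 0 1) := hd.inv hne
  refine ⟨fun n => (n.factorial : ℂ)⁻¹ * iteratedDeriv n (fun q => (P q)⁻¹) 0, fun τ => ?_⟩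
  have hq : eC τ ∈ Metric.ball (0 : ℂ) 1 := by
    rw [← qParam_eC]; simpa using Function.Periodic.norm_qParam_lt_one one_pos τ.im_pos
  have := Complex.hasSum_taylorSeries_on_ball hd' hq
  have e1 : eC τ * (DD τ)⁻¹ = (P (eC τ))⁻¹ := by
    rw [hval]; have := eC_ne_zero τ; field_simp
  rw [e1]
  refine this.congr_fun fun n => ?_
  rw [eC_nat_mul]; simp; ring

end

section
/-! ### closure properties -/
variable {B : Matrix (Fin 24) (Fin 24) ℤ}

def conv (a : ℕ → ℂ) (f : ℕ → LV → ℂ) : ℕ → LV → ℂ := fun n l =>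
  ∑ x ∈ Finset.HasAntidiagonal.antidiagonal n, a x.1 * f x.2 l

def sigEq : (Σ p : ℕ × LV, Finset.HasAntidiagonal.antidiagonal p.1) ≃ ℕ × (ℕ × LV) where
  toFun x := (x.2.1.1, (x.2.1.2, x.1.2))
  invFun y := ⟨(y.1 + y.2.1, y.2.2), ⟨(y.1, y.2.1), by simp⟩⟩
  left_inv := by
    rintro ⟨⟨n, l⟩, ⟨⟨a, b⟩, h⟩⟩
    simp only [Finset.HasAntidiagonal.mem_antidiagonal] at h
    subst h; rfl
  right_inv := by rintro ⟨a, b, l⟩; rfl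

lemma conv_exp {a : ℕ → ℂ} {g : ℍ → ℂ} {f : ℕ → LV → ℂ} {φ : ℍ → CV → ℂ} {τ : ℍ} {z : CV}
    (ha : HasSum (fun n : ℕ => a n * eC (n * τ)) (g τ))
    (hf : HasSum (fun p : ℕ × LV => f p.1 p.2 * fterm B p.1 p.2 τ z) (φ τ z)) :
    HasSum (fun p : ℕ × LV => conv a f p.1 p.2 * fterm B p.1 p.2 τ z) (g τ * φ τ z) := by
  have hs : Summable (fun x : ℕ × (ℕ × LV) => (a x.1 * eC (x.1 * τ)) * (f x.2.1 x.2.2 * fterm B x.2.1 x.2.2 τ z)) := by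
    exact summable_mul_of_summable_norm (f := fun n : ℕ => a n * eC (n * τ)) (g := fun p : ℕ × LV => f p.1 p.2 * fterm B p.1 p.2 τ z) ha.summable.norm hf.summable.norm
  have h1 := HasSum.mul ha hf hs
  have h0 := sigEq.hasSum_iff.mpr h1
  refine HasSum.sigma h0 ?_
  · rintro ⟨n, l⟩
    show HasSum (fun c : Finset.HasAntidiagonal.antidiagonal n => (a c.1.1 * eC (c.1.1 * τ) * (f c.1.2 l * fterm B c.1.2 l τ z))) _
    have : conv a f n l * fterm B n l τ z = ∑ c : Finset.HasAntidiagonal.antidiagonal n, (a c.1.1 * eC (c.1.1 * τ) * (f c.1.2 l * fterm B c.1.2 l τ z)) := by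
      rw [Finset.sum_coe_sort (Finset.HasAntidiagonal.antidiagonal n) (fun c => a c.1 * eC (c.1 * τ) * (f c.2 l * fterm B c.2 l τ z))]
      unfold conv
      rw [Finset.sum_mul]
      refine Finset.sum_congr rfl fun c hc => ?_
      rw [Finset.HasAntidiagonal.mem_antidiagonal] at hc
      subst hc
      unfold fterm
      push_cast
      rw [add_mul, eC_add]; ring
    rw [this]
    exact hasSum_fintype _

lemma conv_zero (a : ℕ → ℂ) (f : ℕ → LV → ℂ) (l : LV) : conv a f 0 l = a 0 * f 0 l := by simp [conv]

lemma jf_mul' (hB : IsLeech B) {k m : ℤ} {t : ℕ} {φ : ℍ → CV → ℂ} {f f' : ℕ → LV → ℂ} {g : ℍ → ℂ}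
    (hg : ∀ (A : SL(2, ℤ)) (τ : ℍ), g (A • τ) = jfactor A τ ^ m * g τ)
    (hφ : IsJacobiFormWith B k t φ f)
    (he : ∀ (τ : ℍ) (z : CV), HasSum (fun p : ℕ × LV => f' p.1 p.2 * fterm B p.1 p.2 τ z) (g τ * φ τ z)) :
    IsJacobiFormWith B (m + k) t (g • φ) f' := by
  refine jf_mk hB ?_ ?_ ?_ he
  · intro σ hσ τ z
    simp [hφ.conway_invar σ hσ]
  · intro x y τ z
    simp only [Pi.smul_apply', Pi.smul_apply, smul_eq_mul]
    rw [jf_quasi hφ]; ring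
  · intro A τ z
    simp only [Pi.smul_apply', Pi.smul_apply, smul_eq_mul]
    rw [hg, jf_mod hφ A, zpow_add₀ (jfactor_ne A τ)]; ring

lemma jf_mul (hB : IsLeech B) {k m : ℤ} {t : ℕ} {φ : ℍ → CV → ℂ} {f : ℕ → LV → ℂ} {g : ℍ → ℂ}
    (hg : IsMF m g) (hφ : IsJacobiFormWith B k t φ f) {a : ℕ → ℂ}
    (ha : ∀ τ : ℍ, HasSum (fun n : ℕ => a n * eC (n * τ)) (g τ)) :
    IsJacobiFormWith B (m + k) t (g • φ) (conv a f) :=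
  jf_mul' hB (hg.trans) hφ fun τ z => conv_exp (ha τ) (hφ.expansion τ z)

lemma jf_add (hB : IsLeech B) {k : ℤ} {t : ℕ} {φ ψ : ℍ → CV → ℂ} {f f' : ℕ → LV → ℂ}
    (hφ : IsJacobiFormWith B k t φ f) (hψ : IsJacobiFormWith B k t ψ f') :
    IsJacobiFormWith B k t (φ + ψ) (f + f') := by
  refine jf_mk hB ?_ ?_ ?_ ?_
  · intro σ hσ τ z
    simp [hφ.conway_invar σ hσ, hψ.conway_invar σ hσ]
  · intro x y τ z
    simp only [Pi.add_apply]
    rw [jf_quasi hφ, jf_quasi hψ]; ring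
  · intro A τ z
    simp only [Pi.add_apply]
    rw [jf_mod hφ A, jf_mod hψ A]; ring
  · intro τ z
    refine ((hφ.expansion τ z).add (hψ.expansion τ z)).congr_fun fun p => ?_
    simp only [Pi.add_apply]; ring

lemma jf_smul (hB : IsLeech B) {k : ℤ} {t : ℕ} {φ : ℍ → CV → ℂ} {f : ℕ → LV → ℂ}
    (hφ : IsJacobiFormWith B k t φ f) (c : ℂ) :
    IsJacobiFormWith B k t (c • φ) (c • f) := by
  refine jf_mk hB ?_ ?_ ?_ ?_
  · intro σ hσ τ z
    simp [hφ.conway_invar σ hσ]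
  · intro x y τ z
    simp only [Pi.smul_apply, smul_eq_mul]
    rw [jf_quasi hφ]; ring
  · intro A τ z
    simp only [Pi.smul_apply, smul_eq_mul]
    rw [jf_mod hφ A]; ring
  · intro τ z
    refine ((hφ.expansion τ z).mul_left c).congr_fun fun p => ?_
    simp only [Pi.smul_apply, smul_eq_mul]; ring

lemma jf_zero (hB : IsLeech B) (k : ℤ) (t : ℕ) : IsJacobiFormWith B k t 0 0 := by
  refine jf_mk hB (by simp) (by simp) (fun A τ z => by simp) ?_
  intro τ z
  simp

lemma jf_unique (hB : IsLeech B) {k k' : ℤ} {t t' : ℕ} {φ : ℍ → CV → ℂ} {f f' : ℕ → LV → ℂ}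
    (hφ : IsJacobiFormWith B k t φ f) (hφ' : IsJacobiFormWith B k' t' φ f') : f = f' :=
  coeff_unique hB hφ.expansion hφ'.expansion

lemma jf_eq_zero {k : ℤ} {t : ℕ} {φ : ℍ → CV → ℂ} {f : ℕ → LV → ℂ}
    (hφ : IsJacobiFormWith B k t φ f) (h : f = 0) : φ = 0 := by
  funext τ z
  have := hφ.expansion τ z
  subst h
  exact this.unique (by simp)

lemma jf_div (hB : IsLeech B) {k : ℤ} {t : ℕ} {φ : ℍ → CV → ℂ} {f : ℕ → LV → ℂ}
    (hφ : IsJacobiFormWith B k t φ f) (h0 : ∀ l, f 0 l = 0) :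
    ∃ ψ f', IsJacobiFormWith B (k - 12) t ψ f' ∧ φ = DD • ψ := by
  obtain ⟨b, hb⟩ := inv_DD_exp
  refine ⟨(DD⁻¹ : ℍ → ℂ) • φ, conv b (fun n l => f (n + 1) l), ?_, ?_⟩
  · have := jf_mul' hB (m := -12) (g := DD⁻¹) (f' := conv b (fun n l => f (n + 1) l)) ?_ hφ ?_
    · rw [sub_eq_neg_add]; exact this
    · intro A τ
      simp only [Pi.inv_apply]
      rw [DD_mf.trans, mul_inv, _root_.zpow_neg]
    · intro τ z
      have h1 := hφ.expansion τ z
      have hi : Function.Injective (fun p : ℕ × LV => (p.1 + 1, p.2)) := by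
        rintro ⟨a, b⟩ ⟨c, d⟩ h; simpa using h
      rw [← hi.hasSum_iff] at h1
      · have h2 := h1.mul_left (eC (-τ))
        have h3 : HasSum (fun p : ℕ × LV => f (p.1 + 1) p.2 * fterm B p.1 p.2 τ z) ((fun (τ : ℍ) z => eC (-(τ : ℂ)) * φ τ z) τ z) := by
          refine h2.congr_fun fun p => ?_
          simp only [Function.comp]
          unfold fterm
          push_cast
          rw [add_mul, eC_add, one_mul, eC_neg]
          have := eC_ne_zero (τ : ℂ)
          field_simp
        have h4 := conv_exp (B := B) (z := z) (φ := fun (τ : ℍ) z => eC (-(τ : ℂ)) * φ τ z) (g := fun τ : ℍ => eC τ * (DD τ)⁻¹) (f := fun n l => f (n + 1) l) (hb τ) h3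
        convert! h4 using 1
        rw [eC_neg]
        have := eC_ne_zero (τ : ℂ)
        simp only [Pi.inv_apply]
        field_simp
      · rintro ⟨n, l⟩ hn
        rcases n with _ | n
        · simp [h0]
        · exact absurd ⟨(n, l), rfl⟩ hn
  · funext τ z
    have := DD_ne τ
    simp only [Pi.smul_apply', Pi.smul_apply, smul_eq_mul, Pi.inv_apply]
    field_simp

lemma hol_mul_supp {t : ℕ} {a : ℕ → ℂ} {f : ℕ → LV → ℂ} {N C : ℕ}
    (ha : ∀ n < N, a n = 0) (hf : ∀ n l, f n l ≠ 0 → -(C : ℤ) ≤ 2 * (n : ℤ) * t - pairZ B l l)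
    (hN : C ≤ 2 * N * t) (n : ℕ) (l : LV) (h : 2 * (n : ℤ) * t - pairZ B l l < 0) : conv a f n l = 0 := by
  unfold conv
  refine Finset.sum_eq_zero fun x hx => ?_
  rw [Finset.HasAntidiagonal.mem_antidiagonal] at hx
  by_cases h1 : x.1 < N
  · rw [ha _ h1, zero_mul]
  · by_cases h2 : f x.2 l = 0
    · rw [h2, mul_zero]
    · have h3 := hf _ _ h2
      exfalso
      have h4 : N ≤ x.1 := not_lt.mp h1
      have h5 : 2 * (N : ℤ) * t ≤ 2 * (x.1 : ℤ) * t := by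
        exact_mod_cast Nat.mul_le_mul_right t (Nat.mul_le_mul_left 2 h4)
      have h6 : (C : ℤ) ≤ 2 * N * t := by exact_mod_cast hN
      have h7 : (n : ℤ) = x.1 + x.2 := by exact_mod_cast hx.symm
      rw [h7] at h
      nlinarith

lemma DD_qexp : ∃ a : ℕ → ℂ, a 0 = 0 ∧ ∀ τ : ℍ, HasSum (fun n : ℕ => a n * eC (n * τ)) (DD τ) := by
  obtain ⟨a, h0, h⟩ := DD_mf.qexp
  exact ⟨a, h0.trans c0_DD, h⟩

lemma hol_mul (hB : IsLeech B) {k m : ℤ} {t : ℕ} {φ : ℍ → CV → ℂ} {g : ℍ → ℂ} (hg : IsMF m g)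
    (h : IsHolJacobiForm B k t φ) : IsHolJacobiForm B (m + k) t (g • φ) := by
  obtain ⟨f, hf, hs⟩ := h
  obtain ⟨a, -, ha⟩ := hg.qexp
  refine ⟨_, jf_mul hB hg hf ha, fun n l h => ?_⟩
  refine hol_mul_supp (N := 0) (C := 0) (fun n hn => by omega) (fun n l h => ?_) (by simp) n l h
  by_contra h'
  exact h (hs n l (by push_cast at h'; omega))

lemma weak_to_hol (hB : IsLeech B) (t : ℕ) (ht : 1 ≤ t) : ∃ N : ℕ, ∀ k φ, IsWeakJacobiForm B k t φ →
    IsHolJacobiForm B (k + 12 * N) t ((DD ^ N) • φ) := by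
  obtain ⟨C, hC⟩ := supp_weak hB t ht
  obtain ⟨a, ha0, ha⟩ := DD_qexp
  refine ⟨C, fun k φ ⟨f, hf⟩ => ?_⟩
  have key : ∀ N : ℕ, ∃ f', IsJacobiFormWith B (k + 12 * N) t ((DD ^ N) • φ) f' ∧
      ∀ n l, f' n l ≠ 0 → -(C : ℤ) + 2 * N * t ≤ 2 * (n : ℤ) * t - pairZ B l l := by
    intro N
    induction N with
    | zero => exact ⟨f, by simpa using hf, fun n l h => by simpa using hC hf n l h⟩
    | succ N ih =>
      obtain ⟨f', hf', hs⟩ := ih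
      refine ⟨conv a f', ?_, ?_⟩
      · have := jf_mul hB DD_mf hf' ha
        have e : (12 + (k + 12 * N) : ℤ) = k + 12 * (N + 1 : ℕ) := by push_cast; ring
        rw [e] at this
        rw [pow_succ', mul_smul]; exact this
      · intro n l h
        obtain ⟨x, hx, hne⟩ := Finset.exists_ne_zero_of_sum_ne_zero (show ∑ x ∈ Finset.HasAntidiagonal.antidiagonal n, a x.1 * f' x.2 l ≠ 0 from h)
        rw [Finset.HasAntidiagonal.mem_antidiagonal] at hx
        have h1 : a x.1 ≠ 0 := left_ne_zero_of_mul hne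
        have h2 := hs _ _ (right_ne_zero_of_mul hne)
        have h3 : 1 ≤ x.1 := by
          rcases Nat.eq_zero_or_pos x.1 with h | h
          · rw [h] at h1; exact absurd ha0 h1
          · exact h
        have h5 : 2 * (1 : ℤ) * t ≤ 2 * (x.1 : ℤ) * t := by
          exact_mod_cast Nat.mul_le_mul_right t (Nat.mul_le_mul_left 2 h3)
        have h7 : (n : ℤ) = x.1 + x.2 := by exact_mod_cast hx.symm
        rw [h7]; push_cast
        nlinarith
  obtain ⟨f', h1, h2⟩ := key C
  refine ⟨f', h1, fun n l h => ?_⟩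
  by_contra h'
  have := h2 n l h'
  have h6 : (C : ℤ) ≤ 2 * C * t := by
    have : C * 1 ≤ C * (2 * t) := Nat.mul_le_mul_left C (by omega)
    have : C ≤ 2 * C * t := by linarith
    exact_mod_cast this
  linarith

lemma jf_odd (hB : IsLeech B) {k : ℤ} {t : ℕ} {φ : ℍ → CV → ℂ} {f : ℕ → LV → ℂ}
    (hφ : IsJacobiFormWith B k t φ f) (hk : Odd k) : φ = 0 := by
  funext τ z
  have h := jf_mod hφ (-1) τ z
  have e1 : ((-1 : SL(2, ℤ)) • τ) = τ := by
    ext; simp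
  have e2 : slc (-1) = 0 := by simp [slc]
  have e3 : jfactor (-1) τ = -1 := by simp [jfactor, slc, sld]
  rw [e1, e2, e3] at h
  have e4 : actC (-1) z = (-1 : ℂ)⁻¹ • z := by
    funext i; simp [actC, Matrix.mulVec, dotProduct, Matrix.one_apply]
  rw [← e4, hφ.conway_invar _ conway_neg_one, hk.neg_one_zpow] at h
  simp [eC_zero] at h
  simpa [self_eq_neg] using h

end

section
/-! ### holomorphic Jacobi forms of negative weight vanish -/
variable {B : Matrix (Fin 24) (Fin 24) ℤ}

def toR (l : LV) : Fin 24 → ℝ := fun i => (l i : ℝ)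
lemma liftC_toR (l : LV) : liftC l = ofR (toR l) := by funext i; simp [liftC, ofR, toR]

lemma pairR_add_left (x y z : Fin 24 → ℝ) : pairR B (x + y) z = pairR B x z + pairR B y z := by
  simp [pairR, add_dotProduct]
lemma pairR_add_right (x y z : Fin 24 → ℝ) : pairR B z (x + y) = pairR B z x + pairR B z y := by
  simp [pairR, mulVec_add, dotProduct_add]
lemma pairR_smul_left (c : ℝ) (x z : Fin 24 → ℝ) : pairR B (c • x) z = c * pairR B x z := by
  simp [pairR, smul_dotProduct]
lemma pairR_smul_right (c : ℝ) (x z : Fin 24 → ℝ) : pairR B z (c • x) = c * pairR B z x := by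
  simp [pairR, mulVec_smul, dotProduct_smul]
lemma pairR_comm (hB : IsLeech B) (x y : Fin 24 → ℝ) : pairR B x y = pairR B y x := by
  have := pairC_comm hB.1 (ofR x) (ofR y)
  rw [pairC_ofR, pairC_ofR] at this
  exact_mod_cast this
lemma ofR_add (x y : Fin 24 → ℝ) : ofR (x + y) = ofR x + ofR y := by funext i; simp [ofR]
lemma ofR_smul (c : ℝ) (x : Fin 24 → ℝ) : ofR (c • x) = (c : ℂ) • ofR x := by funext i; simp [ofR]

lemma red_bound0 (hB : IsLeech B) {k : ℤ} {t : ℕ} (ht : 1 ≤ t) {φ : ℍ → CV → ℂ} {f : ℕ → LV → ℂ}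
    (hφ : IsJacobiFormWith B k t φ f)
    (hs : ∀ (n : ℕ) (l : LV), 2 * (n : ℤ) * t - pairZ B l l < 0 → f n l = 0) :
    ∃ C : ℝ, 0 ≤ C ∧ ∀ (τ : ℍ) (x y : Fin 24 → ℝ), 1 / 2 ≤ τ.im → (∀ i, 0 ≤ x i ∧ x i ≤ 1) →
      ‖φ τ ((τ : ℂ) • ofR x + ofR y)‖ * Real.exp (-π * t * pairR B x x * τ.im) ≤ C := by
  obtain ⟨K, hK, hz⟩ := zsize_ball B
  have hsum := absSum hB (fun τ z => (hφ.expansion τ z).summable) (1 / 2) (by norm_num) K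
  refine ⟨∑' p : ℕ × LV, ‖f p.1 p.2‖ * Real.exp (-2 * π * p.1 * (1 / 2)) * Real.exp (K * n1 p.2), tsum_nonneg (fun p => by positivity), fun τ x y hv hx => ?_⟩
  have h1 := (hφ.expansion τ ((τ : ℂ) • ofR x + ofR y)).mul_right ((Real.exp (-π * t * pairR B x x * τ.im) : ℝ) : ℂ)
  have e1 : ‖φ τ ((τ : ℂ) • ofR x + ofR y)‖ * Real.exp (-π * t * pairR B x x * τ.im) = ‖φ τ ((τ : ℂ) • ofR x + ofR y) * ((Real.exp (-π * t * pairR B x x * τ.im) : ℝ) : ℂ)‖ := by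
    rw [norm_mul, Complex.norm_of_nonneg (Real.exp_pos _).le]
  rw [e1, ← h1.tsum_eq]
  refine tsum_of_norm_bounded hsum.hasSum fun p => ?_
  obtain ⟨n, l⟩ := p
  simp only
  by_cases h0 : f n l = 0
  · simp [h0]
  have hnl : pairZ B l l ≤ 2 * (n : ℤ) * t := by
    by_contra h; exact h0 (hs n l (by linarith))
  have hnl' : (pairZ B l l : ℝ) ≤ 2 * n * t := by exact_mod_cast hnl
  rw [norm_mul, norm_mul, fterm_norm, eC_norm, Complex.norm_of_nonneg (Real.exp_pos _).le]
  have him : (pairC B (liftC l) ((τ : ℂ) • ofR x + ofR y)).im = τ.im * pairR B (toR l) x := by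
    rw [pairC_add_right, pairC_smul_right, liftC_toR, pairC_ofR, pairC_ofR]
    simp
  rw [him]
  rw [mul_assoc ‖f n l‖, mul_assoc ‖f n l‖]
  refine mul_le_mul_of_nonneg_left ?_ (norm_nonneg _)
  rw [← Real.exp_add, ← Real.exp_add, ← Real.exp_add]
  apply Real.exp_le_exp.mpr
  set L := pairR B (toR l) x with hL
  set X := pairR B x x with hX
  have hX0 : 0 ≤ X := pairR_nonneg hB x
  have ht' : (1 : ℝ) ≤ t := by exact_mod_cast ht
  have hE : 0 ≤ n + L + t * X / 2 := by
    have h2 := pairR_nonneg hB (toR l + (t : ℝ) • x)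
    rw [pairR_add_left, pairR_add_right, pairR_add_right, pairR_smul_left, pairR_smul_left, pairR_smul_right, pairR_smul_right, pairR_comm hB x (toR l), ← hL, ← hX] at h2
    have h3 : pairR B (toR l) (toR l) = pairZ B l l := pairR_int l l
    rw [h3] at h2
    have : 0 ≤ (2 * t) * (n + L + t * X / 2) := by nlinarith
    exact nonneg_of_mul_nonneg_right this (by positivity)
  have hLb : -L * π ≤ K * n1 l := by
    have h2 := pairC_bound (B := B) (ofR x) l
    rw [liftC_toR, pairC_ofR, ← hL] at h2
    have h3 : zsize B (ofR x) ≤ K := by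
      refine (hz _).trans ?_
      have : ‖ofR x‖ ≤ 1 := by
        rw [pi_norm_le_iff_of_nonneg zero_le_one]
        intro i; simp only [ofR]; rw [Complex.norm_of_nonneg (hx i).1]; exact (hx i).2
      nlinarith
    unfold zsize at h3
    set S := ∑ i, ‖(B.map (Int.cast : ℤ → ℂ)).mulVec (ofR x) i‖
    have hS : 0 ≤ S := Finset.sum_nonneg fun _ _ => norm_nonneg _
    have h4 : -L ≤ S * n1 l := by
      refine le_trans (neg_le_abs L) ?_
      simpa using h2
    have h5 := n1_nonneg l
    have h6 : -L * π ≤ S * n1 l * π := mul_le_mul_of_nonneg_right h4 Real.pi_pos.le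
    have h7 : S * n1 l * π ≤ 2 * π * S * n1 l := by
      have : 0 ≤ S * n1 l * π := by positivity
      linarith
    have h8 : 2 * π * S * n1 l ≤ K * n1 l := mul_le_mul_of_nonneg_right h3 h5
    linarith
  have h9 : (n + L + t * X / 2) * (1 / 2) ≤ (n + L + t * X / 2) * τ.im := mul_le_mul_of_nonneg_left hv hE
  have h10 : 0 ≤ (t : ℝ) * X := by positivity
  have h11 := mul_le_mul_of_nonneg_left h9 (by positivity : 0 ≤ 2 * π)
  have h12 : 0 ≤ π * (t * X) := by positivity
  nlinarith

lemma red_bound (hB : IsLeech B) {k : ℤ} {t : ℕ} (ht : 1 ≤ t) {φ : ℍ → CV → ℂ} {f : ℕ → LV → ℂ}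
    (hφ : IsJacobiFormWith B k t φ f)
    (hs : ∀ (n : ℕ) (l : LV), 2 * (n : ℤ) * t - pairZ B l l < 0 → f n l = 0) :
    ∃ C : ℝ, 0 ≤ C ∧ ∀ (τ : ℍ) (x y : Fin 24 → ℝ), 1 / 2 ≤ τ.im →
      ‖φ τ ((τ : ℂ) • ofR x + ofR y)‖ * Real.exp (-π * t * pairR B x x * τ.im) ≤ C := by
  obtain ⟨C, hC, h⟩ := red_bound0 hB ht hφ hs
  refine ⟨C, hC, fun τ x y hv => ?_⟩
  obtain ⟨m, x', hxm, hx'⟩ : ∃ (m : LV) (x' : Fin 24 → ℝ), x = x' + toR m ∧ ∀ i, 0 ≤ x' i ∧ x' i ≤ 1 := by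
    refine ⟨fun i => ⌊x i⌋, fun i => Int.fract (x i), ?_, fun i => ⟨Int.fract_nonneg _, (Int.fract_lt_one _).le⟩⟩
    funext i; simp [toR]
  refine le_trans (le_of_eq ?_) (h τ x' y hv hx')
  have h1 := jf_quasi hφ m 0 τ ((τ : ℂ) • ofR x' + ofR y)
  have e1 : (τ : ℂ) • ofR x + ofR y = (τ : ℂ) • ofR x' + ofR y + (τ : ℂ) • liftC m + liftC 0 := by
    rw [hxm, ofR_add, liftC_toR, liftC_zero, smul_add, add_zero]; abel
  rw [e1, h1, norm_mul, eC_norm, mul_comm (Real.exp _), mul_assoc, ← Real.exp_add]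
  congr 2
  rw [pairC_add_right, pairC_smul_right, liftC_toR, pairC_ofR, pairC_ofR, hxm, pairR_add_left, pairR_add_right, pairR_add_right, pairR_comm hB x' (toR m)]
  have h3 : pairR B (toR m) (toR m) = pairZ B m m := pairR_int m m
  rw [h3]
  simp
  ring

lemma hol_neg (hB : IsLeech B) {k : ℤ} (hk : k < 0) {t : ℕ} (ht : 1 ≤ t) {φ : ℍ → CV → ℂ} {f : ℕ → LV → ℂ}
    (hφ : IsJacobiFormWith B k t φ f)
    (hs : ∀ (n : ℕ) (l : LV), 2 * (n : ℤ) * t - pairZ B l l < 0 → f n l = 0) : φ = 0 := by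
  obtain ⟨C, hC, h⟩ := red_bound hB ht hφ hs
  obtain ⟨m, hm⟩ : ∃ m : ℕ, k = -((m + 1 : ℕ) : ℤ) := ⟨(-k - 1).toNat, by push_cast; omega⟩
  have key : ∀ (τ : ℍ) (x : Fin 24 → ℝ), τ.im ≤ 1 / 2 → ‖φ τ (ofR x)‖ ≤ C * Real.sqrt (2 * τ.im) := by
    intro τ x hv
    obtain ⟨A, hA⟩ := ModularGroup.exists_smul_mem_fd τ
    have hA3 := ModularGroup.three_le_four_mul_im_sq_of_mem_fd hA
    have hv' : 1 / 2 ≤ (A • τ).im := by nlinarith [(A • τ).im_pos]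
    have him := ModularGroup.im_smul_eq_div_normSq A τ
    have hj := jfactor_ne A τ
    rw [← jfactor_eq] at him
    have hnj : 0 < ‖jfactor A τ‖ := norm_pos_iff.mpr hj
    have hj2 : ‖jfactor A τ‖ ≤ Real.sqrt (2 * τ.im) := by
      apply Real.le_sqrt_of_sq_le
      rw [Complex.normSq_eq_norm_sq] at him
      rw [him, le_div_iff₀ (by positivity)] at hv'
      linarith
    have hj1 : ‖jfactor A τ‖ ≤ 1 := hj2.trans (by
      rw [Real.sqrt_le_one]; linarith)
    obtain ⟨c, hc⟩ : ∃ c : ℝ, slc A = (c : ℂ) := ⟨((A : Matrix (Fin 2) (Fin 2) ℤ) 1 0 : ℤ), by simp [slc]⟩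
    obtain ⟨a, ha⟩ : ∃ a : ℝ, (((A : Matrix (Fin 2) (Fin 2) ℤ) 0 0 : ℤ) : ℂ) = (a : ℂ) := ⟨((A : Matrix (Fin 2) (Fin 2) ℤ) 0 0 : ℤ), by simp⟩
    have hinv : (jfactor A τ)⁻¹ = -(c : ℂ) * ((A • τ : ℍ) : ℂ) + a := by
      rw [coe_smul_eq, ha]
      have hd := sl_det A
      rw [ha, hc] at hd
      have : jfactor A τ = c * τ + sld A := by rw [jfactor, hc]
      field_simp
      rw [this]
      linear_combination (-1 : ℂ) * hd
    have hmod := jf_mod hφ A τ (ofR x)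
    have e1 : (jfactor A τ)⁻¹ • ofR x = ((A • τ : ℍ) : ℂ) • ofR ((-c) • x) + ofR (a • x) := by
      rw [hinv, ofR_smul, ofR_smul, add_smul, smul_smul]; push_cast; rw [mul_comm]
    have hb := h (A • τ) ((-c) • x) (a • x) hv'
    rw [← e1, hmod, norm_mul, norm_mul, eC_norm, norm_zpow, hc, pairC_ofR, pairR_smul_left, pairR_smul_right] at hb
    have e2 : ((t : ℂ) * c * (pairR B x x : ℝ) / (2 * jfactor A τ)).im = - (t * c ^ 2 * pairR B x x * (A • τ).im / 2) := by
      have : (t : ℂ) * c * (pairR B x x : ℝ) / (2 * jfactor A τ) = ((t * c * pairR B x x / 2 : ℝ) : ℂ) * (jfactor A τ)⁻¹ := by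
        push_cast; field_simp
      rw [this, hinv, Complex.im_ofReal_mul]
      simp
      ring
    rw [e2] at hb
    have e3 : ‖jfactor A τ‖ ^ k * Real.exp (-2 * π * -(t * c ^ 2 * pairR B x x * (A • τ).im / 2)) * ‖φ τ (ofR x)‖ *
      Real.exp (-π * t * (-c * (-c * pairR B x x)) * (A • τ).im) = ‖jfactor A τ‖ ^ k * ‖φ τ (ofR x)‖ := by
      have : Real.exp (-2 * π * -(t * c ^ 2 * pairR B x x * (A • τ).im / 2)) * Real.exp (-π * t * (-c * (-c * pairR B x x)) * (A • τ).im) = 1 := by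
        rw [← Real.exp_add, Real.exp_eq_one_iff]; ring
      linear_combination ‖jfactor A τ‖ ^ k * ‖φ τ (ofR x)‖ * this
    rw [e3, hm, _root_.zpow_neg, zpow_natCast, inv_mul_le_iff₀ (by positivity)] at hb
    calc _ ≤ ‖jfactor A τ‖ ^ (m + 1) * C := hb
      _ ≤ Real.sqrt (2 * τ.im) * C := by
        gcongr
        exact (pow_le_of_le_one hnj.le hj1 (by omega)).trans hj2
      _ = _ := mul_comm _ _
  refine jf_eq_zero hφ ?_
  ext n l
  have hreal : ∀ b : Fin 24 → ℝ, ∃ x : Fin 24 → ℝ, binv B (ofR b) = ofR x := by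
    intro b
    refine ⟨((B.map (Int.cast : ℤ → ℝ))⁻¹).mulVec b, ?_⟩
    have h1 : (B.map (Int.cast : ℤ → ℂ)).mulVec (ofR (((B.map (Int.cast : ℤ → ℝ))⁻¹).mulVec b)) = ofR b := by
      have h2 : (B.map (Int.cast : ℤ → ℝ)).mulVec (((B.map (Int.cast : ℤ → ℝ))⁻¹).mulVec b) = b := by
        rw [mulVec_mulVec, mul_nonsing_inv _ (by rw [detR hB]; exact isUnit_one), one_mulVec]
      funext i
      have h3 := congrFun h2 i
      have h4 : (((B.map (Int.cast : ℤ → ℝ)).mulVec (((B.map (Int.cast : ℤ → ℝ))⁻¹).mulVec b) i : ℝ) : ℂ) = (b i : ℂ) := by rw [h3]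
      rw [ofR, ← h4]
      simp [mulVec, dotProduct, ofR]
    rw [← h1, binv, mulVec_mulVec, nonsing_inv_mul _ (by rw [detC hB]; exact isUnit_one), one_mulVec]
  have hb : ∀ v : ℝ, 0 < v → v ≤ 1 / 2 → ‖f n l‖ * Real.exp (-2 * π * n) ≤ C * Real.sqrt (2 * v) := by
    intro v hv hv2
    have := coeff_bound hB v hv (fun τ z _ => hφ.expansion τ z) (C * Real.sqrt (2 * v)) (fun τ b hτ => by
      obtain ⟨x, hx⟩ := hreal b
      rw [hx, ← hτ]
      exact key τ x (hτ ▸ hv2)) n l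
    refine le_trans ?_ this
    refine mul_le_mul_of_nonneg_left (Real.exp_le_exp.mpr ?_) (norm_nonneg _)
    have : 0 ≤ π * n := by positivity
    nlinarith
  have hlim : Filter.Tendsto (fun v : ℝ => C * Real.sqrt (2 * v)) (𝓝[>] 0) (𝓝 0) := by
    have : Continuous (fun v : ℝ => C * Real.sqrt (2 * v)) := by fun_prop
    have h2 := this.tendsto 0
    simp only [mul_zero, Real.sqrt_zero] at h2
    exact h2.mono_left nhdsWithin_le_nhds
  have h3 : ‖f n l‖ * Real.exp (-2 * π * n) ≤ 0 := by
    refine ge_of_tendsto hlim ?_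
    filter_upwards [Ioc_mem_nhdsGT (show (0 : ℝ) < 1 / 2 by norm_num)] with v hv
    exact hb v hv.1 hv.2
  have h4 := Real.exp_pos (-2 * π * n)
  have h5 : ‖f n l‖ ≤ 0 := by
    by_contra h6
    have := mul_pos (not_le.mp h6) h4
    linarith
  simpa using norm_le_zero_iff.mp h5

lemma weak_low (hB : IsLeech B) (t : ℕ) (ht : 1 ≤ t) : ∃ K : ℤ, ∀ k φ, k < K → IsWeakJacobiForm B k t φ → φ = 0 := by
  obtain ⟨N, hN⟩ := weak_to_hol hB t ht
  refine ⟨-12 * N, fun k φ hk hw => ?_⟩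
  obtain ⟨f, hf, hs⟩ := hN k φ hw
  have h := hol_neg hB (by linarith) ht hf hs
  funext τ z
  have h1 := congrFun (congrFun h τ) z
  simpa [DD_ne τ] using h1

end

section
/-! ### graded modules over the ring of modular forms -/

abbrev FF := ℍ → CV → ℂ

structure GMod (P : ℤ → FF → Prop) : Prop where
  zero : ∀ k, P k 0
  add : ∀ {k φ ψ}, P k φ → P k ψ → P k (φ + ψ)
  mul : ∀ {k m φ g}, IsMF m g → P k φ → P (m + k) (g • φ)
  depth : ∀ {k φ ψ}, P (k - 6) φ → P (k - 4) ψ → e6 • φ = e4 • ψ → ∃ α, P (k - 10) α ∧ φ = e4 • α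
  tors : ∀ {k φ}, P k φ → e4 • φ = 0 → φ = 0
  low : ∃ K : ℤ, ∀ k φ, k < K → P k φ → φ = 0
  odd : ∀ {k φ}, Odd k → P k φ → φ = 0

variable {P : ℤ → FF → Prop}

lemma GMod.mul' (hP : GMod P) {k m k' : ℤ} {φ : FF} {g : ℍ → ℂ} (hg : IsMF m g) (hφ : P k φ) (h : m + k = k') : P k' (g • φ) :=
  h ▸ hP.mul hg hφ

lemma GMod.smul (hP : GMod P) {k : ℤ} {φ : FF} (hφ : P k φ) (c : ℂ) : P k (c • φ) := by
  have := hP.mul' (IsMF.one.smul c) hφ (zero_add k)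
  convert! this using 1
  funext τ z; simp

lemma GMod.sum (hP : GMod P) {ι : Type*} (s : Finset ι) {k : ℤ} {φ : ι → FF} (h : ∀ i ∈ s, P k (φ i)) : P k (∑ i ∈ s, φ i) := by
  classical
  induction s using Finset.induction_on with
  | empty => simpa using hP.zero k
  | insert a s ha ih =>
    rw [Finset.sum_insert ha]
    exact hP.add (h a (Finset.mem_insert_self a s)) (ih fun i hi => h i (Finset.mem_insert_of_mem hi))

lemma GMod.neg (hP : GMod P) {k : ℤ} {φ : FF} (hφ : P k φ) : P k (-φ) := by
  simpa using hP.smul hφ (-1)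

def RIndep {n : ℕ} (w : Fin n → ℤ) (φ : Fin n → FF) : Prop :=
  ∀ (k : ℤ) (g : Fin n → ℍ → ℂ), (∀ i, IsMF (k - w i) (g i)) → ∑ i, g i • φ i = 0 → ∀ i, g i = 0

def MIndep (P : ℤ → FF → Prop) {n : ℕ} (w : Fin n → ℤ) (φ : Fin n → FF) : Prop :=
  ∀ (k : ℤ) (c : Fin n → ℂ) (α β : FF), P (k - 4) α → P (k - 6) β → (∀ i, c i ≠ 0 → w i = k) →
    ∑ i, c i • φ i = e4 • α + e6 • β → ∀ i, c i = 0

lemma lemA (hP : GMod P) {n : ℕ} {w : Fin n → ℤ} {φ : Fin n → FF} (hφ : ∀ i, P (w i) (φ i))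
    (hi : MIndep P w φ) (m : ℕ) : ∀ (k : ℤ) (c : Fin n → ℂ) (a : Fin n → ℕ) (β : FF),
      (∀ i, c i ≠ 0 → a i < m ∧ 6 * a i + w i = k) → P (k - 4) β →
      ∑ i, c i • (e6 ^ a i • φ i) = e4 • β → ∀ i, c i = 0 := by
  induction m with
  | zero =>
    intro k c a β h _ _ i
    by_contra hc; exact absurd (h i hc).1 (by omega)
  | succ m ih =>
    intro k c a β h hβ hs
    -- the terms with a ≥ 1
    set X : FF := ∑ i, (if a i = 0 then 0 else c i) • (e6 ^ (a i - 1) • φ i) with hX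
    have hXP : P (k - 6) X := by
      refine hP.sum _ fun i _ => ?_
      by_cases hc : (if a i = 0 then 0 else c i) = 0
      · rw [hc, zero_smul]; exact hP.zero _
      · have h0 : a i ≠ 0 := fun h => hc (by simp [h])
        rw [if_neg h0] at hc
        refine hP.smul (hP.mul' (e6_mf.pow _) (hφ i) ?_) _
        have := (h i hc).2
        have h1 : ((a i - 1 : ℕ) : ℤ) = a i - 1 := by omega
        rw [h1]; linarith
    have h1 : ∑ i, (if a i = 0 then c i else 0) • φ i + e6 • X = e4 • β := by
      rw [← hs, hX, Finset.smul_sum, ← Finset.sum_add_distrib]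
      refine Finset.sum_congr rfl fun i _ => ?_
      by_cases h0 : a i = 0
      · simp [h0]
      · simp only [h0, if_false, zero_smul, zero_add]
        rw [smul_comm, ← mul_smul, ← pow_succ', Nat.sub_add_cancel (by omega)]
    have h2 := hi k (fun i => if a i = 0 then c i else 0) β (-X) hβ (hP.neg hXP) (fun i hc => by
      by_cases h0 : a i = 0
      · simp only [h0, if_true] at hc
        have := (h i hc).2
        rw [h0] at this; simpa using this
      · simp [h0] at hc) (by rw [← h1, smul_neg]; abel)
    have h3 : e6 • X = e4 • β := by
      rw [← h1]; simp only [h2, zero_smul, Finset.sum_const_zero, zero_add]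
    obtain ⟨α, hα, hXα⟩ := hP.depth hXP hβ h3
    have h4 := ih (k - 6) (fun i => if a i = 0 then 0 else c i) (fun i => a i - 1) α (fun i hc => by
      have h0 : a i ≠ 0 := fun h => hc (by simp [h])
      simp only [if_neg h0] at hc
      have := h i hc
      omega) (by convert hα using 1; ring) hXα
    intro i
    by_cases h0 : a i = 0
    · have := h2 i; simpa [h0] using this
    · have := h4 i; simpa [h0] using this

lemma lemB (m : ℕ) : ∀ (k : ℤ) (g : ℍ → ℂ), k < m → IsMF k g → ∃ (c : ℂ) (a : ℕ) (g' : ℍ → ℂ),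
    IsMF (k - 4) g' ∧ (c ≠ 0 → 6 * (a : ℤ) = k) ∧ g = c • e6 ^ a + e4 * g' := by
  induction m with
  | zero =>
    intro k g hk hg
    exact ⟨0, 0, 0, IsMF.zero _, by simp, by rw [hg.neg_weight (by simpa using hk)]; simp⟩
  | succ m ih =>
    intro k g hk hg
    have triv : g = 0 → ∃ (c : ℂ) (a : ℕ) (g' : ℍ → ℂ), IsMF (k - 4) g' ∧ (c ≠ 0 → 6 * (a : ℤ) = k) ∧ g = c • e6 ^ a + e4 * g' :=
      fun h => ⟨0, 0, 0, IsMF.zero _, by simp, by rw [h]; simp⟩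
    by_cases hneg : k < 0
    · exact triv (hg.neg_weight hneg)
    by_cases hev : Even k
    swap
    · exact triv (hg.odd (by simpa using hev))
    by_cases h0 : k = 0
    · subst h0
      obtain ⟨c, rfl⟩ := hg.const
      exact ⟨c, 0, 0, IsMF.zero _, by simp, by funext τ; simp⟩
    by_cases h2 : k = 2
    · subst h2; exact triv hg.two
    have hk4 : 4 ≤ k := by obtain ⟨r, hr⟩ := hev; omega
    obtain ⟨a, b, hab⟩ := exists_wt hk4 hev
    have hM : IsMF k (e4 ^ a * e6 ^ b) := ((e4_mf.pow a).mul (e6_mf.pow b)).cast (by linarith)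
    have hM0 : c0 (e4 ^ a * e6 ^ b) = 1 := by
      rw [c0_mul (e4_mf.pow a) (e6_mf.pow b), c0_pow e4_mf, c0_pow e6_mf, c0_e4, c0_e6]; simp
    obtain ⟨γ, hγ⟩ : ∃ γ, γ = c0 g := ⟨_, rfl⟩
    have hd : IsMF k (g + (-γ) • (e4 ^ a * e6 ^ b)) := hg.add (hM.smul _)
    obtain ⟨h, hh, hgh⟩ := hd.div (by rw [c0_add hg (hM.smul _), c0_smul hM, hM0, hγ]; ring)
    obtain ⟨c', a', h', hh', hc', rfl⟩ := ih (k - 12) h (by push_cast at hk; omega) hh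
    have hDD : DD = (1728⁻¹ : ℂ) • (e4 ^ 3 - e6 ^ 2) := by
      funext τ; have := DD_eq τ
      simp only [Pi.smul_apply, Pi.sub_apply, Pi.pow_apply, smul_eq_mul]; rw [← this]; ring
    -- the rest is divisible by e4
    obtain ⟨r, hr⟩ : ∃ r, r = (1728⁻¹ : ℂ) • (e4 ^ 2 * (c' • e6 ^ a' + e4 * h')) + (-(1728⁻¹ : ℂ)) • (e6 ^ 2 * h') := ⟨_, rfl⟩
    have hrM : IsMF (k - 4) r := by
      rw [hr]
      refine IsMF.add (IsMF.smul (((e4_mf.pow 2).mul hh).cast (by push_cast; ring)) _) (IsMF.smul (((e6_mf.pow 2).mul hh').cast (by push_cast; ring)) _)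
    have hg1 : g = γ • (e4 ^ a * e6 ^ b) + (-(1728⁻¹ : ℂ) * c') • e6 ^ (a' + 2) + e4 * r := by
      have : g = γ • (e4 ^ a * e6 ^ b) + DD * (c' • e6 ^ a' + e4 * h') := by
        rw [← hgh]; module
      rw [hDD] at this
      rw [this, hr]
      funext τ
      simp only [Pi.add_apply, Pi.mul_apply, Pi.smul_apply, Pi.sub_apply, Pi.pow_apply, smul_eq_mul]
      ring
    have hg2 : ∀ τ, g τ = γ * (e4 τ ^ a * e6 τ ^ b) + (-(1728⁻¹ : ℂ) * c') * e6 τ ^ (a' + 2) + e4 τ * r τ := by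
      intro τ
      have := congrFun hg1 τ
      simpa only [Pi.add_apply, Pi.mul_apply, Pi.smul_apply, Pi.sub_apply, Pi.pow_apply, smul_eq_mul] using this
    rcases Nat.eq_zero_or_pos a with ha | ha
    · subst ha
      by_cases hc : c' = 0
      · refine ⟨γ, b, r, hrM, fun _ => by push_cast at hab; linarith, ?_⟩
        funext τ
        simp only [Pi.add_apply, Pi.mul_apply, Pi.smul_apply, Pi.sub_apply, Pi.pow_apply, smul_eq_mul]
        rw [hg2, hc]; ring
      · have h3 := hc' hc
        have hb : b = a' + 2 := by push_cast at hab; omega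
        refine ⟨γ + -(1728⁻¹ : ℂ) * c', b, r, hrM, fun _ => by push_cast at hab; linarith, ?_⟩
        funext τ
        simp only [Pi.add_apply, Pi.mul_apply, Pi.smul_apply, Pi.sub_apply, Pi.pow_apply, smul_eq_mul]
        rw [hg2, hb]; ring
    · obtain ⟨a₁, rfl⟩ : ∃ a₁, a = a₁ + 1 := ⟨a - 1, by omega⟩
      refine ⟨-(1728⁻¹ : ℂ) * c', a' + 2, γ • (e4 ^ a₁ * e6 ^ b) + r, ?_, fun h => ?_, ?_⟩
      · refine IsMF.add (IsMF.smul (((e4_mf.pow a₁).mul (e6_mf.pow b)).cast ?_) _) hrM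
        push_cast at hab; linarith
      · have := hc' (right_ne_zero_of_mul h)
        push_cast; linarith
      · funext τ
        simp only [Pi.add_apply, Pi.mul_apply, Pi.smul_apply, Pi.sub_apply, Pi.pow_apply, smul_eq_mul]
        rw [hg2]; ring

lemma lemC (hP : GMod P) {n : ℕ} {w : Fin n → ℤ} {φ : Fin n → FF} (hφ : ∀ i, P (w i) (φ i))
    (hi : MIndep P w φ) : RIndep w φ := by
  have key : ∀ (m : ℕ) (k : ℤ) (g : Fin n → ℍ → ℂ), (∀ i, k - w i < m) → (∀ i, IsMF (k - w i) (g i)) →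
      ∑ i, g i • φ i = 0 → ∀ i, g i = 0 := by
    intro m
    induction m with
    | zero => intro k g hm hg _ i; exact (hg i).neg_weight (by simpa using hm i)
    | succ m ih =>
      intro k g hm hg hs
      choose c a g' hg' hc heq using fun i => lemB (m + 1) (k - w i) (g i) (hm i) (hg i)
      have hβ : P (k - 4) (-∑ i, g' i • φ i) := hP.neg (hP.sum _ fun i _ => hP.mul' (hg' i) (hφ i) (by ring))
      have h1 : ∑ i, c i • (e6 ^ a i • φ i) = e4 • (-∑ i, g' i • φ i) := by
        rw [smul_neg, eq_neg_iff_add_eq_zero, Finset.smul_sum, ← Finset.sum_add_distrib, ← hs]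
        refine Finset.sum_congr rfl fun i _ => ?_
        conv_rhs => rw [heq i]
        rw [add_smul, mul_smul, smul_assoc]
      have hc0 := lemA hP hφ hi (∑ i, a i + 1) k c a _ (fun i h => ⟨by
        have := Finset.single_le_sum (f := a) (fun j _ => Nat.zero_le _) (Finset.mem_univ i)
        omega, by have := hc i h; linarith⟩) hβ h1
      have h2 : e4 • (-∑ i, g' i • φ i) = 0 := by
        rw [← h1]; simp [hc0]
      have h3 := neg_eq_zero.mp (hP.tors hβ h2)
      have h4 := ih (k - 4) g' (fun i => by have := hm i; push_cast at this; linarith) (fun i => (hg' i).cast (by ring)) h3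
      intro i
      rw [heq i, hc0 i, h4 i]; simp
  intro k g hg hs
  obtain ⟨m, hm⟩ : ∃ m : ℕ, ∀ i, k - w i < m := by
    refine ⟨∑ i, ((k - w i).toNat + 1), fun i => ?_⟩
    have := Finset.single_le_sum (f := fun i => (k - w i).toNat + 1) (fun j _ => Nat.zero_le _) (Finset.mem_univ i)
    have h2 : k - w i < (((k - w i).toNat + 1 : ℕ) : ℤ) := by omega
    exact lt_of_lt_of_le h2 (by exact_mod_cast this)
  exact key m k g hm hg hs

lemma exists_free (hP : GMod P) (s : ℕ) (hs : ∀ (n : ℕ) (w : Fin n → ℤ) (φ : Fin n → FF), (∀ i, P (w i) (φ i)) → RIndep w φ → n ≤ s) :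
    ∃ (n : ℕ) (w : Fin n → ℤ) (φ : Fin n → FF), n ≤ s ∧ FreelyGenerates P w φ := by
  classical
  let Q : ℕ → Prop := fun n => ∃ (w : Fin n → ℤ) (φ : Fin n → FF), (∀ i, P (w i) (φ i)) ∧ MIndep P w φ
  have hQ0 : Q 0 := ⟨Fin.elim0, Fin.elim0, fun i => i.elim0, fun _ _ _ _ _ _ _ _ i => i.elim0⟩
  have hQs : ∀ n, Q n → n ≤ s := fun n ⟨w, φ, h1, h2⟩ => hs n w φ h1 (lemC hP h1 h2)
  obtain ⟨n, hn⟩ : ∃ n, n = Nat.findGreatest Q s := ⟨_, rfl⟩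
  obtain ⟨w, φ, hφ, hi⟩ : Q n := hn ▸ Nat.findGreatest_spec (Nat.zero_le s) hQ0
  have hmax : ¬ Q (n + 1) := by
    intro h
    have := Nat.le_findGreatest (hQs _ h) h
    omega
  have hR := lemC hP hφ hi
  -- spanning modulo (e4, e6)
  have hspan : ∀ k ψ, P k ψ → ∃ (c : Fin n → ℂ) (α β : FF), P (k - 4) α ∧ P (k - 6) β ∧ (∀ i, c i ≠ 0 → w i = k) ∧
      ψ = ∑ i, c i • φ i + e4 • α + e6 • β := by
    intro k ψ hψ
    by_contra hcon
    apply hmax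
    refine ⟨Fin.cons k w, Fin.cons ψ φ, fun i => Fin.cases hψ hφ i, ?_⟩
    intro k' c α β hα hβ hw hsum
    rw [Fin.sum_univ_succ] at hsum
    simp only [Fin.cons_zero, Fin.cons_succ] at hsum
    have hc0 : c 0 = 0 := by
      by_contra hc
      have hk : k = k' := by simpa using hw 0 hc
      subst hk
      apply hcon
      refine ⟨fun i => -(c 0)⁻¹ * c i.succ, (c 0)⁻¹ • α, (c 0)⁻¹ • β, hP.smul hα _, hP.smul hβ _, fun i h => by
        simpa using hw i.succ (right_ne_zero_of_mul h), ?_⟩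
      have h1 : ψ = (c 0)⁻¹ • (c 0 • ψ) := by rw [smul_smul, inv_mul_cancel₀ hc, one_smul]
      have h2 : c 0 • ψ = e4 • α + e6 • β - ∑ i : Fin n, c i.succ • φ i := by rw [← hsum]; abel
      rw [h1, h2, smul_sub, smul_add, smul_comm _ e4, smul_comm _ e6, Finset.smul_sum]
      simp only [mul_smul, _root_.neg_smul, Finset.sum_neg_distrib]
      abel
    rw [hc0, zero_smul, zero_add] at hsum
    have := hi k' (fun i => c i.succ) α β hα hβ (fun i h => by simpa using hw i.succ h) hsum
    intro i
    exact Fin.cases hc0 this i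
  obtain ⟨K, hK⟩ := hP.low
  have hgen : ∀ (m : ℕ) (k : ℤ) (ψ : FF), k < K + m → P k ψ → ∃ g : Fin n → ℍ → ℂ, (∀ i, IsMF (k - w i) (g i)) ∧ ψ = ∑ i, g i • φ i := by
    intro m
    induction m with
    | zero => intro k ψ hk hψ; exact ⟨fun _ => 0, fun _ => IsMF.zero _, by rw [hK k ψ (by simpa using hk) hψ]; simp⟩
    | succ m ih =>
      intro k ψ hk hψ
      obtain ⟨c, α, β, hα, hβ, hc, heq⟩ := hspan k ψ hψ
      obtain ⟨g1, hg1, h1⟩ := ih _ _ (by push_cast at hk; linarith) hα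
      obtain ⟨g2, hg2, h2⟩ := ih _ _ (by push_cast at hk; linarith) hβ
      refine ⟨fun i => c i • 1 + e4 * g1 i + e6 * g2 i, fun i => ?_, ?_⟩
      · refine IsMF.add (IsMF.add ?_ ((e4_mf.mul (hg1 i)).cast (by ring))) ((e6_mf.mul (hg2 i)).cast (by ring))
        by_cases h : c i = 0
        · rw [h, zero_smul]; exact IsMF.zero _
        · exact (IsMF.one.smul _).cast (by rw [hc i h]; ring)
      · rw [heq, h1, h2, Finset.smul_sum, Finset.smul_sum, ← Finset.sum_add_distrib, ← Finset.sum_add_distrib]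
        refine Finset.sum_congr rfl fun i _ => ?_
        rw [add_smul, add_smul, mul_smul, mul_smul, smul_assoc, one_smul]
  refine ⟨n, w, φ, hn ▸ Nat.findGreatest_le s, hφ, fun k ψ hψ => ?_⟩
  obtain ⟨g, hg, hgs⟩ := hgen (k - K + 1).toNat k ψ (by omega) hψ
  choose G hG using fun i => (hg i).mform
  refine ⟨G, fun τ z => ?_, fun G' hG' => ?_⟩
  · rw [hgs]; simp only [hG]; simp [Finset.sum_apply]
  · funext i
    have h0 := hR k (fun i => (G' i : ℍ → ℂ) + (-1 : ℂ) • (G i : ℍ → ℂ)) (fun i => (isMF_of_MForm _).add ((isMF_of_MForm _).smul _)) ?_ i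
    · apply DFunLike.coe_injective
      simp only [_root_.neg_smul, one_smul] at h0
      exact add_neg_eq_zero.mp h0
    · have e1 : ψ = ∑ i, (G' i : ℍ → ℂ) • φ i := by
        funext τ z; rw [hG']; simp [Finset.sum_apply]
      have e2 : ψ = ∑ i, (G i : ℍ → ℂ) • φ i := by rw [hgs]; simp only [hG]
      simp only [add_smul, _root_.neg_smul, one_smul, Finset.sum_add_distrib, Finset.sum_neg_distrib]
      rw [← e1, ← e2]; simp

end

section
/-! ### the two graded modules -/

variable {B : Matrix (Fin 24) (Fin 24) ℤ}

lemma conv_van {a : ℕ → ℂ} {f : ℕ → LV → ℂ} (h0 : a 0 = 1) (l : LV) (N : ℕ)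
    (h : ∀ n ≤ N, conv a f n l = 0) : ∀ n ≤ N, f n l = 0 := by
  intro n
  induction n using Nat.strong_induction_on with
  | _ n ih =>
    intro hn
    have h1 := h n hn
    unfold conv at h1
    rw [Finset.sum_eq_single (0, n)] at h1
    · simpa [h0] using h1
    · rintro ⟨x, y⟩ hx hne
      rw [Finset.HasAntidiagonal.mem_antidiagonal] at hx
      have hx' : x + y = n := hx
      have hlt : y < n := by
        rcases Nat.eq_zero_or_pos x with h | h
        · exact absurd (by simp [h]; omega) hne
        · omega
      simp [ih y hlt (by omega)]
    · intro hx; exact absurd (by simp) hx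

lemma weak_depth (hB : IsLeech B) {t : ℕ} {k : ℤ} {φ ψ : FF} (hφ : IsWeakJacobiForm B (k - 6) t φ)
    (hψ : IsWeakJacobiForm B (k - 4) t ψ) (he : e6 • φ = e4 • ψ) :
    ∃ α, IsWeakJacobiForm B (k - 10) t α ∧ φ = e4 • α := by
  obtain ⟨f, hf⟩ := hφ
  obtain ⟨g, hg⟩ := hψ
  obtain ⟨a, ha0, ha⟩ := e4_mf.qexp
  obtain ⟨b, hb0, hb⟩ := e6_mf.qexp
  rw [c0_e4] at ha0
  rw [c0_e6] at hb0
  have h1 := jf_mul hB e6_mf hf hb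
  have h2 := jf_mul hB e4_mf hg ha
  rw [he] at h1
  have h3 := jf_unique hB h1 h2
  have h4 : ∀ l, f 0 l = g 0 l := fun l => by
    have := congrFun (congrFun h3 0) l
    simpa [conv_zero, ha0, hb0] using this
  have h5 := jf_mul hB e4_mf (jf_mul hB e4_mf hf ha) ha
  have h6 := jf_smul hB (jf_mul hB e6_mf hg hb) (-1)
  have e5 : (4 : ℤ) + (4 + (k - 6)) = k + 2 := by ring
  have e6' : (6 : ℤ) + (k - 4) = k + 2 := by ring
  rw [e5] at h5
  rw [e6'] at h6
  have h7 := jf_smul hB (jf_add hB h5 h6) (1728⁻¹)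
  obtain ⟨α, f', hα, hd⟩ := jf_div hB h7 (fun l => by
    simp [conv_zero, ha0, hb0, h4])
  refine ⟨α, ⟨f', by convert! hα using 1; ring⟩, ?_⟩
  funext τ z
  have hd' := congrFun (congrFun hd τ) z
  have he' := congrFun (congrFun he τ) z
  simp only [Pi.smul_apply', Pi.smul_apply, smul_eq_mul, Pi.add_apply] at hd' he' ⊢
  have hD := DD_eq τ
  refine mul_left_cancel₀ (mul_ne_zero (by norm_num : (1728 : ℂ) ≠ 0) (DD_ne τ)) ?_
  have : 1728 * DD τ * (e4 τ * α τ z) = e4 τ * (1728 * (DD τ * α τ z)) := by ring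
  rw [this, ← hd', hD]
  linear_combination -e6 τ * he'

lemma weak_tors (hB : IsLeech B) {t : ℕ} {k : ℤ} {φ : FF} (hφ : IsWeakJacobiForm B k t φ)
    (he : e4 • φ = 0) : φ = 0 := by
  obtain ⟨f, hf⟩ := hφ
  obtain ⟨a, ha0, ha⟩ := e4_mf.qexp
  rw [c0_e4] at ha0
  have h1 := jf_mul hB e4_mf hf ha
  rw [he] at h1
  have h2 := jf_unique hB h1 (jf_zero hB k t)
  refine jf_eq_zero hf ?_
  funext n l
  exact conv_van ha0 l n (fun m _ => by rw [h2]; rfl) n le_rfl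

lemma gmod_weak (hB : IsLeech B) {t : ℕ} (ht : 1 ≤ t) : GMod (fun k φ => IsWeakJacobiForm B k t φ) where
  zero k := ⟨0, jf_zero hB k t⟩
  add := fun ⟨f, hf⟩ ⟨g, hg⟩ => ⟨_, jf_add hB hf hg⟩
  mul := fun hg ⟨f, hf⟩ => by
    obtain ⟨a, -, ha⟩ := hg.qexp
    exact ⟨_, jf_mul hB hg hf ha⟩
  depth := weak_depth hB
  tors := weak_tors hB
  low := weak_low hB t ht
  odd := fun hk ⟨f, hf⟩ => jf_odd hB hf hk

lemma hol_weak {t : ℕ} {k : ℤ} {φ : FF} (h : IsHolJacobiForm B k t φ) : IsWeakJacobiForm B k t φ := by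
  obtain ⟨f, hf, -⟩ := h
  exact ⟨f, hf⟩

lemma gmod_hol (hB : IsLeech B) {t : ℕ} (ht : 1 ≤ t) : GMod (fun k φ => IsHolJacobiForm B k t φ) where
  zero k := ⟨0, jf_zero hB k t, fun _ _ _ => rfl⟩
  add := fun ⟨f, hf, h1⟩ ⟨g, hg, h2⟩ => ⟨_, jf_add hB hf hg, fun n l h => by simp [h1 n l h, h2 n l h]⟩
  mul := fun hg h => hol_mul hB hg h
  depth := by
    intro k φ ψ h1 h2 he
    obtain ⟨α, ⟨f', hα⟩, h⟩ := weak_depth hB (hol_weak h1) (hol_weak h2) he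
    refine ⟨α, ⟨f', hα, ?_⟩, h⟩
    obtain ⟨f, hf, hs⟩ := h1
    obtain ⟨a, ha0, ha⟩ := e4_mf.qexp
    rw [c0_e4] at ha0
    have h3 := jf_mul hB e4_mf hα ha
    rw [← h] at h3
    have h4 := jf_unique hB h3 hf
    intro n l hn
    refine conv_van ha0 l n (fun m hm => ?_) n le_rfl
    rw [h4]
    refine hs m l ?_
    have : (2 : ℤ) * m * t ≤ 2 * n * t := by
      have : (m : ℤ) ≤ n := by exact_mod_cast hm
      nlinarith
    linarith
  tors := fun h => weak_tors hB (hol_weak h)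
  low := by
    obtain ⟨K, hK⟩ := weak_low hB t ht
    exact ⟨K, fun k φ hk h => hK k φ hk (hol_weak h)⟩
  odd := fun hk ⟨f, hf, _⟩ => jf_odd hB hf hk

end

section
/-! ### rank upper bound and the q^0-terms -/

variable {B : Matrix (Fin 24) (Fin 24) ℤ}

lemma mf_domain {k m : ℤ} {h G : ℍ → ℂ} (hh : IsMF k h) (hG : IsMF m G) (h0 : c0 G ≠ 0) (he : h * G = 0) : h = 0 := by
  obtain ⟨H, rfl⟩ := hh
  obtain ⟨G, rfl⟩ := hG
  have h1 := ModularForm.qExpansion_mul one_pos one_mem_strictPeriods_SL H G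
  have e0 : ⇑(H.mul G) = ⇑H * ⇑G := rfl
  rw [e0, he] at h1
  have h2 : qExpansion 1 (0 : ℍ → ℂ) = 0 := UpperHalfPlane.qExpansion_zero (h := 1)
  rw [h2] at h1
  rcases mul_eq_zero.mp h1.symm with h3 | h3
  · funext τ
    have := ModularForm.hasSum_qExpansion H one_pos one_mem_strictPeriods_SL τ
    rw [h3] at this
    exact this.unique (by simp)
  · exact absurd (by unfold c0; rw [h3]; simp) h0

lemma jf_sum (hB : IsLeech B) {t : ℕ} {k : ℤ} {ι : Type*} (s : Finset ι) {φ : ι → FF} {f : ι → ℕ → LV → ℂ}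
    (h : ∀ i ∈ s, IsJacobiFormWith B k t (φ i) (f i)) : IsJacobiFormWith B k t (∑ i ∈ s, φ i) (∑ i ∈ s, f i) := by
  classical
  induction s using Finset.induction_on with
  | empty => simpa using jf_zero hB k t
  | insert a s ha ih =>
    rw [Finset.sum_insert ha, Finset.sum_insert ha]
    exact jf_add hB (h a (Finset.mem_insert_self a s)) (ih fun i hi => h i (Finset.mem_insert_of_mem hi))

lemma kill (hB : IsLeech B) {t n : ℕ} {k : ℤ} {w : Fin n → ℤ} {φ : Fin n → FF} {f : Fin n → ℕ → LV → ℂ}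
    (hf : ∀ i, IsJacobiFormWith B (w i) t (φ i) (f i)) {Γ : Fin n → ℍ → ℂ} (hΓ : ∀ i, IsMF (k - w i) (Γ i))
    (h0 : ∀ l, ∑ i, c0 (Γ i) * f i 0 l = 0) : ∃ χ, IsWeakJacobiForm B (k - 12) t χ ∧ ∑ i, Γ i • φ i = DD • χ := by
  choose a ha0 ha using fun i => (hΓ i).qexp
  have h1 : ∀ i ∈ Finset.univ, IsJacobiFormWith B k t (Γ i • φ i) (conv (a i) (f i)) := fun i _ => by
    have := jf_mul hB (hΓ i) (hf i) (ha i)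
    rwa [sub_add_cancel] at this
  obtain ⟨χ, f', h2, h3⟩ := jf_div hB (jf_sum hB _ h1) (fun l => by
    simp only [Finset.sum_apply, conv_zero, ha0]; exact h0 l)
  exact ⟨χ, ⟨f', h2⟩, h3⟩

lemma exists_Gam {m : ℤ} (hm : Even m) (c : ℂ) (h : c ≠ 0 → 4 ≤ m) : ∃ Γ, IsMF m Γ ∧ c0 Γ = c := by
  by_cases hc : c = 0
  · refine ⟨(0 : ℂ) • 0, (IsMF.zero m).smul 0, ?_⟩
    rw [c0_smul (IsMF.zero m), hc, zero_mul]
  · obtain ⟨g, hg, h0⟩ := exists_eis (h hc) hm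
    exact ⟨c • g, hg.smul c, by rw [c0_smul hg, h0, mul_one]⟩

lemma RIndep.ne_zero {n : ℕ} {w : Fin n → ℤ} {φ : Fin n → FF} (h : RIndep w φ) (i : Fin n) : φ i ≠ 0 := by
  intro h0
  have := h (w i) (Pi.single i 1) (fun j => by
    by_cases hj : j = i
    · subst hj; simpa using IsMF.one
    · simpa [hj] using IsMF.zero _) (by
      rw [Finset.sum_eq_single i]
      · simp [h0]
      · intro j _ hj; simp [hj]
      · simp) i
  simp at this

lemma upper (hB : IsLeech B) {t : ℕ} (ht : 1 ≤ t) {n : ℕ} {w : Fin n → ℤ} {φ : Fin n → FF}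
    (hφ : ∀ i, IsWeakJacobiForm B (w i) t (φ i)) (hi : RIndep w φ) : n ≤ sRank B t := by
  by_contra! hn
  obtain ⟨K, hK⟩ := weak_low hB t ht
  have bnd : ∀ (w : Fin n → ℤ) (φ : Fin n → FF), (∀ i, IsWeakJacobiForm B (w i) t (φ i)) → RIndep w φ →
      ∀ i, K ≤ w i := fun w φ hφ hi i => by
    by_contra! h
    exact hi.ne_zero i (hK _ _ h (hφ i))
  have key : ∀ (M : ℕ) (w : Fin n → ℤ) (φ : Fin n → FF), (∀ i, IsWeakJacobiForm B (w i) t (φ i)) → RIndep w φ →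
      ∑ i, (w i - K) ≤ M → False := by
    intro M
    induction M using Nat.strong_induction_on with
    | _ M ih =>
    intro w φ hφ hi hM
    choose f hf using hφ
    have hev : ∀ i, Even (w i) := fun i => by
      by_contra h
      exact hi.ne_zero i (jf_odd hB (hf i) (Int.not_even_iff_odd.mp h))
    have : Finite (minimalSet B t) := min_finite hB t ht
    let F : Fin n → (Quot (fun v u : minimalSet B t => conjModT B t v.1 u.1)) → ℂ := fun i =>
      Quot.lift (fun v => f i 0 v.1) (fun v u h => f0_class hB ht (hf i) v.2 u.2 h)
    let _ := Fintype.ofFinite (Quot (fun v u : minimalSet B t => conjModT B t v.1 u.1))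
    have hdep : ¬ LinearIndependent ℂ F := fun h => by
      have := h.fintype_card_le_finrank
      rw [Fintype.card_fin, Module.finrank_fintype_fun_eq_card, ← Nat.card_eq_fintype_card] at this
      exact absurd hn (not_lt.mpr this)
    obtain ⟨c, hc, i1, hi1⟩ := Fintype.not_linearIndependent_iff.mp hdep
    have hcf : ∀ l, ∑ i, c i * f i 0 l = 0 := by
      intro l
      by_cases hl : l ∈ minimalSet B t
      · have := congrFun hc (Quot.mk _ ⟨l, hl⟩)
        simpa [F] using this
      · refine Finset.sum_eq_zero fun i _ => ?_
        have : f i 0 l = 0 := by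
          by_contra h
          exact hl (supp_min hB ht (hf i) l h)
        simp [this]
    obtain ⟨i0, hi0, hmax⟩ := Finset.exists_max_image (Finset.univ.filter fun i => c i ≠ 0) w ⟨i1, by simp [hi1]⟩
    simp only [Finset.mem_filter, Finset.mem_univ, true_and] at hi0 hmax
    choose Γ hΓ hΓ0 using fun i => exists_Gam (m := w i0 + 4 - w i) ((((hev i0).add (by decide)).sub (hev i))) (c i)
      (fun h => by have := hmax i h; linarith)
    obtain ⟨χ, hχ, hs⟩ := kill hB hf hΓ (by simpa [hΓ0] using hcf)
    have hφ' : ∀ i, IsWeakJacobiForm B (Function.update w i0 (w i0 - 8) i) t (Function.update φ i0 χ i) := by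
      intro i
      by_cases h : i = i0
      · subst h
        simp only [Function.update_self]
        convert! hχ using 1; ring
      · simp only [Function.update_of_ne h]; exact ⟨_, hf i⟩
    have hi' : RIndep (Function.update w i0 (w i0 - 8)) (Function.update φ i0 χ) := by
      intro k g hg hsum
      have h1 := hi (k + 12) (fun i => (if i = i0 then 0 else DD * g i) + g i0 * Γ i) (fun i => by
        refine IsMF.add ?_ ?_
        · by_cases h : i = i0
          · simpa [h] using IsMF.zero _
          · simp only [h, if_false]
            have := hg i
            rw [Function.update_of_ne h] at this
            exact (DD_mf.mul this).cast (by ring)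
        · have := hg i0
          rw [Function.update_self] at this
          exact (this.mul (hΓ i)).cast (by ring)) (by
        simp only [add_smul, Finset.sum_add_distrib, mul_smul]
        rw [← Finset.smul_sum, hs]
        have h2 : DD • (∑ i, g i • Function.update φ i0 χ i) = 0 := by rw [hsum, smul_zero]
        rw [← Finset.add_sum_erase _ _ (Finset.mem_univ i0), Function.update_self, smul_add, Finset.smul_sum] at h2
        rw [← Finset.add_sum_erase _ _ (Finset.mem_univ i0), if_pos rfl, zero_smul, zero_add, ← h2, add_comm, smul_comm]
        congr 1
        refine Finset.sum_congr rfl fun i hi => ?_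
        have hne := Finset.ne_of_mem_erase hi
        rw [if_neg hne, Function.update_of_ne hne, mul_smul])
      have h3 : g i0 = 0 := by
        have := h1 i0
        simp only [if_true, zero_add] at this
        exact mf_domain (hg i0) (hΓ i0) (by rw [hΓ0]; exact hi0) this
      intro i
      by_cases h : i = i0
      · rw [h, h3]
      · have := h1 i
        simp only [h, if_false, h3, zero_mul, add_zero] at this
        funext τ
        have := congrFun this τ
        simp only [Pi.mul_apply, Pi.zero_apply, mul_eq_zero, DD_ne, false_or] at this
        exact this
    have hsumw : ∑ i, (Function.update w i0 (w i0 - 8) i - K) = ∑ i, (w i - K) - 8 := by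
      rw [← Finset.add_sum_erase _ _ (Finset.mem_univ i0), ← Finset.add_sum_erase (Finset.univ) (fun i => w i - K) (Finset.mem_univ i0),
        Function.update_self]
      rw [Finset.sum_congr rfl (fun i hi => by rw [Function.update_of_ne (Finset.ne_of_mem_erase hi)])]
      ring
    have hnn : 0 ≤ ∑ i, (Function.update w i0 (w i0 - 8) i - K) :=
      Finset.sum_nonneg fun i _ => sub_nonneg.mpr (bnd _ _ hφ' hi' i)
    exact ih (M - 8) (by omega) _ _ hφ' hi' (by omega)
  exact key (∑ i, (w i - K)).toNat w φ hφ hi (Int.self_le_toNat _)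

lemma fg_rindep {P : ℤ → FF → Prop} (hP : GMod P) {n : ℕ} {w : Fin n → ℤ} {φ : Fin n → FF}
    (h : FreelyGenerates P w φ) : RIndep w φ := by
  intro k g hg hs
  choose G hG using fun i => (hg i).mform
  obtain ⟨g', -, hu⟩ := h.2 k 0 (hP.zero k)
  have h1 := hu G (fun τ z => by
    have := congrFun (congrFun hs τ) z
    simp only [hG]
    simpa [Finset.sum_apply] using this.symm)
  have h2 := hu 0 (fun τ z => by simp)
  intro i
  rw [← hG, h1, ← h2]; rfl

lemma claim2 (hB : IsLeech B) {t : ℕ} (ht : 1 ≤ t) {n : ℕ} {w : Fin n → ℤ} {φ : Fin n → FF} {f : Fin n → ℕ → LV → ℂ}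
    (hf : ∀ i, IsJacobiFormWith B (w i) t (φ i) (f i)) (h : FreelyGenerates (fun k φ => IsWeakJacobiForm B k t φ) w φ) :
    LinearIndependent ℂ (fun i => f i 0) := by
  have hi := fg_rindep (gmod_weak hB ht) h
  have hev : ∀ i, Even (w i) := fun i => by
    by_contra h
    exact hi.ne_zero i (jf_odd hB (hf i) (Int.not_even_iff_odd.mp h))
  rw [Fintype.linearIndependent_iff]
  intro c hc
  obtain ⟨k, hk, hkw⟩ : ∃ k : ℤ, Even k ∧ ∀ i, 4 ≤ k - w i := by
    refine ⟨2 * (∑ i, |w i| + 2), by simp, fun i => ?_⟩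
    have h1 := Finset.single_le_sum (f := fun i => |w i|) (fun i _ => abs_nonneg _) (Finset.mem_univ i)
    have h2 := le_abs_self (w i)
    have h3 := abs_nonneg (w i)
    linarith
  choose Γ hΓ hΓ0 using fun i => exists_Gam (m := k - w i) (hk.sub (hev i)) (c i) (fun _ => hkw i)
  obtain ⟨χ, hχ, hs⟩ := kill hB hf hΓ (fun l => by
    have := congrFun hc l
    simpa [hΓ0] using this)
  obtain ⟨g, hg, -⟩ := h.2 _ χ hχ
  have h1 := hi k (fun i => Γ i + (-1 : ℂ) • (DD * g i)) (fun i =>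
    (hΓ i).add ((DD_mf.mul (isMF_of_MForm (g i))).smul (-1) |>.cast (by ring))) (by
      simp only [add_smul, Finset.sum_add_distrib]
      rw [hs]
      funext τ z
      simp only [Pi.add_apply, Finset.sum_apply, Pi.smul_apply', Pi.smul_apply, smul_eq_mul, Pi.mul_apply, Pi.zero_apply, hg τ z, Finset.mul_sum]
      rw [← Finset.sum_add_distrib]
      refine Finset.sum_eq_zero fun i _ => ?_
      ring)
  intro i
  have h2 := congrArg c0 (h1 i)
  have h3 := DD_mf.mul (isMF_of_MForm (g i))
  have e : (12 : ℤ) + (k - 12 - w i) = k - w i := by ring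
  rw [e] at h3
  rw [c0_add (hΓ i) (h3.smul _), c0_smul h3, c0_mul DD_mf (isMF_of_MForm (g i)), c0_DD, hΓ0] at h2
  have h4 : c0 0 = 0 := by
    have := c0_smul (IsMF.zero 0) 0
    simpa using this
  rw [h4] at h2
  simpa using h2

end

section
/-! ### Taylor expansion of series -/

lemma ps_unique {c d : ℕ → ℂ} {F : ℂ → ℂ} (h : ∀ s, HasSum (fun m => s ^ m * c m) (F s))
    (h' : ∀ s, HasSum (fun m => s ^ m * d m) (F s)) : c = d := by
  have h1 : HasFPowerSeriesAt F (FormalMultilinearSeries.ofScalars ℂ c) 0 := by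
    rw [hasFPowerSeriesAt_iff]
    refine Filter.Eventually.of_forall fun z => ?_
    simpa using h z
  have h2 : HasFPowerSeriesAt F (FormalMultilinearSeries.ofScalars ℂ d) 0 := by
    rw [hasFPowerSeriesAt_iff]
    refine Filter.Eventually.of_forall fun z => ?_
    simpa using h' z
  have h3 := h1.eq_formalMultilinearSeries h2
  funext n
  have := congrArg (fun p => FormalMultilinearSeries.coeff p n) h3
  simpa using this

lemma taylor_split {J : Type*} {e α : J → ℂ} (hs : ∀ R : ℝ, Summable (fun j => ‖e j‖ * Real.exp (R * ‖α j‖)))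
    {F : ℂ → ℂ} (h : ∀ s, HasSum (fun j => e j * Complex.exp (s * α j)) (F s)) :
    (∀ m : ℕ, Summable (fun j => (α j ^ m / m.factorial) * e j)) ∧
    ∀ s, HasSum (fun m : ℕ => s ^ m * ∑' j, (α j ^ m / m.factorial) * e j) (F s) := by
  have key : ∀ s : ℂ, Summable (fun p : J × ℕ => e p.1 * ((s * α p.1) ^ p.2 / p.2.factorial)) := by
    intro s
    refine Summable.of_norm ?_
    rw [summable_prod_of_nonneg (fun _ => norm_nonneg _)]
    have e1 : ∀ j, HasSum (fun m : ℕ => ‖e j * ((s * α j) ^ m / m.factorial)‖) (‖e j‖ * Real.exp (‖s‖ * ‖α j‖)) := by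
      intro j
      have := (NormedSpace.expSeries_div_hasSum_exp (𝔸 := ℝ) (‖s‖ * ‖α j‖)).mul_left ‖e j‖
      rw [← Real.exp_eq_exp_ℝ] at this
      refine this.congr_fun fun m => ?_
      simp [mul_pow]
    refine ⟨fun j => (e1 j).summable, ?_⟩
    refine (hs ‖s‖).congr fun j => ?_
    exact (e1 j).tsum_eq.symm
  have h1 : ∀ m : ℕ, Summable (fun j => (α j ^ m / m.factorial) * e j) := by
    intro m
    have := (key 1).prod_symm.prod_factor m
    refine this.congr fun j => ?_
    simp [mul_comm]
  refine ⟨h1, fun s => ?_⟩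
  have h2 := (key s).hasSum
  have h3 := h2.prod_fiberwise (g := fun j => e j * Complex.exp (s * α j)) (fun j => by
    have := (NormedSpace.expSeries_div_hasSum_exp (𝔸 := ℂ) (s * α j)).mul_left (e j)
    rw [← Complex.exp_eq_exp_ℂ] at this
    exact this)
  rw [h3.unique (h s)] at h2
  have h4 : HasSum (fun p : ℕ × J => e p.2 * ((s * α p.2) ^ p.1 / p.1.factorial)) (F s) :=
    (Equiv.prodComm ℕ J).hasSum_iff.mpr h2
  refine h4.prod_fiberwise (fun m => ?_)
  have := (h1 m).hasSum.mul_left (s ^ m)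
  refine this.congr_fun fun j => ?_
  simp only [mul_pow]; ring

lemma hasSum_fiber {J K : Type*} (pr : J → K) (c : J → ℂ) (e : K → ℂ) {v : ℂ} (h : HasSum (fun j => c j * e (pr j)) v) :
    HasSum (fun k => (∑' j : {j // pr j = k}, c j) * e k) v := by
  have h1 := (Equiv.sigmaFiberEquiv pr).hasSum_iff.mpr h
  refine h1.sigma (fun k => ?_)
  have h2 := h1.summable.sigma_factor k
  have h3 := h2.hasSum
  convert! h3 using 1
  rw [← tsum_mul_right]
  refine tsum_congr fun j => ?_
  simp [Equiv.sigmaFiberEquiv, j.2]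

end

section
/-! ### products of theta functions with an auxiliary variable -/

variable {B : Matrix (Fin 24) (Fin 24) ℤ}

def qf (B : Matrix (Fin 24) (Fin 24) ℤ) (l : LV) : ℕ := (pairZ B l l / 2).toNat

lemma qf_eq (hB : IsLeech B) (l : LV) : (pairZ B l l : ℂ) = 2 * (qf B l : ℂ) := by
  obtain ⟨m, hm⟩ := half_norm hB l
  have h0 := pairZ_posdef_nonneg hB l
  have : pairZ B l l = 2 * (qf B l : ℤ) := by
    unfold qf; omega
  rw [this]; push_cast; ring

def nnJ (B : Matrix (Fin 24) (Fin 24) ℤ) {N : ℕ} (j : Fin N → LV) : ℕ := ∑ i, qf B (j i)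
def llJ {N : ℕ} (a : Fin N → ℤ) (j : Fin N → LV) : LV := ∑ i, a i • j i
def alJ (B : Matrix (Fin 24) (Fin 24) ℤ) {N : ℕ} (b : Fin N → ℂ) (y : CV) (j : Fin N → LV) : ℂ :=
  2 * π * Complex.I * ∑ i, b i * pairC B (liftC (j i)) y

lemma pairC_llJ {N : ℕ} (a : Fin N → ℤ) (j : Fin N → LV) (z : CV) :
    pairC B (liftC (llJ a j)) z = ∑ i, (a i : ℂ) * pairC B (liftC (j i)) z := by
  unfold llJ
  have : ∀ s : Finset (Fin N), pairC B (liftC (∑ i ∈ s, a i • j i)) z = ∑ i ∈ s, (a i : ℂ) * pairC B (liftC (j i)) z := by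
    intro s
    classical
    induction s using Finset.induction_on with
    | empty => simp [liftC_zero, pairC_zero_left]
    | insert x s hx ih =>
      rw [Finset.sum_insert hx, Finset.sum_insert hx, liftC_add, pairC_add_left, ih, liftC_smul, pairC_smul_left]
  exact this _

def HH (B : Matrix (Fin 24) (Fin 24) ℤ) {N : ℕ} (a : Fin N → ℤ) (b : Fin N → ℂ) (y : CV) (τ : ℍ) (z : CV) (s : ℂ) : ℂ :=
  ∏ i, thetaLeech B τ ((a i : ℂ) • z + (s * b i) • y)

lemma HH_term (hB : IsLeech B) {N : ℕ} (a : Fin N → ℤ) (b : Fin N → ℂ) (y : CV) (τ : ℍ) (z : CV) (s : ℂ) (j : Fin N → LV) :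
    ∏ i, (eC ((pairZ B (j i) (j i) : ℂ) * τ / 2) * eC (pairC B (liftC (j i)) ((a i : ℂ) • z + (s * b i) • y))) =
    fterm B (nnJ B j) (llJ a j) τ z * Complex.exp (s * alJ B b y j) := by
  have e1 : Complex.exp (s * alJ B b y j) = eC (∑ i, s * b i * pairC B (liftC (j i)) y) := by
    unfold eC alJ
    congr 1
    rw [Finset.mul_sum, Finset.mul_sum, Finset.mul_sum]
    refine Finset.sum_congr rfl fun i _ => ?_
    ring
  rw [e1]
  unfold fterm
  rw [pairC_llJ, nnJ, mul_assoc, ← eC_add, ← Finset.sum_add_distrib, Finset.prod_mul_distrib, ← eC_sum, ← eC_sum]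
  congr 2
  · push_cast
    rw [Finset.sum_mul]
    refine Finset.sum_congr rfl fun i _ => ?_
    rw [qf_eq hB]; ring
  · refine Finset.sum_congr rfl fun i _ => ?_
    rw [pairC_add_right, pairC_smul_right, pairC_smul_right]

lemma HH_hasSum (hB : IsLeech B) {N : ℕ} (a : Fin N → ℤ) (b : Fin N → ℂ) (y : CV) (τ : ℍ) (z : CV) (s : ℂ) :
    HasSum (fun j : Fin N → LV => fterm B (nnJ B j) (llJ a j) τ z * Complex.exp (s * alJ B b y j)) (HH B a b y τ z s) := by
  have h := (hasSum_pi_prod N (fun i (l : LV) => eC ((pairZ B l l : ℂ) * τ / 2) * eC (pairC B (liftC l) ((a i : ℂ) • z + (s * b i) • y)))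
    (fun i => theta_norm_summable hB τ _)).2
  unfold HH
  simp only [thetaLeech_eq]
  refine h.congr_fun fun j => ?_
  rw [HH_term hB]

lemma HH_abs (hB : IsLeech B) {N : ℕ} (a : Fin N → ℤ) (b : Fin N → ℂ) (y : CV) (τ : ℍ) (z : CV) (R : ℝ) :
    Summable (fun j : Fin N → LV => ‖fterm B (nnJ B j) (llJ a j) τ z‖ * Real.exp (R * ‖alJ B b y j‖)) := by
  set C : ℝ := ∑ i, ‖(B.map (Int.cast : ℤ → ℂ)).mulVec y i‖ with hC
  have h := (hasSum_pi_prod N (fun i (l : LV) => ((‖eC ((pairZ B l l : ℂ) * τ / 2)‖ * 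
      Real.exp ((zsize B ((a i : ℂ) • z) + |R| * (2 * π * (‖b i‖ * C))) * n1 l) : ℝ) : ℂ)) (fun i => by
    simpa only [Complex.norm_real, Real.norm_eq_abs, abs_mul, abs_norm, Real.abs_exp] using theta_abs hB τ _)).1
  refine Summable.of_nonneg_of_le (fun _ => by positivity) (fun j => ?_) h
  have e0 := HH_term hB a b y τ z 0 j
  simp only [zero_mul, Complex.exp_zero, mul_one, zero_smul, add_zero] at e0
  rw [← e0, norm_prod, norm_prod]
  have e1 : ‖alJ B b y j‖ ≤ ∑ i, (2 * π * (‖b i‖ * C)) * n1 (j i) := by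
    unfold alJ
    rw [norm_mul]
    have : ‖(2 * π * Complex.I : ℂ)‖ = 2 * π := by simp [abs_of_pos Real.pi_pos]
    rw [this]
    simp only [mul_assoc]
    rw [← Finset.mul_sum, ← Finset.mul_sum]
    have : ‖∑ i, b i * pairC B (liftC (j i)) y‖ ≤ ∑ i, ‖b i‖ * (C * n1 (j i)) := by
      refine (norm_sum_le _ _).trans (Finset.sum_le_sum fun i _ => ?_)
      rw [norm_mul]
      exact mul_le_mul_of_nonneg_left (pairC_bound y (j i)) (norm_nonneg _)
    have hp := Real.pi_pos
    gcongr
  have e2 : Real.exp (R * ‖alJ B b y j‖) ≤ ∏ i, Real.exp (|R| * (2 * π * (‖b i‖ * C)) * n1 (j i)) := by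
    rw [← Real.exp_sum]
    apply Real.exp_le_exp.mpr
    calc R * ‖alJ B b y j‖ ≤ |R| * ‖alJ B b y j‖ := mul_le_mul_of_nonneg_right (le_abs_self R) (norm_nonneg _)
      _ ≤ |R| * ∑ i, (2 * π * (‖b i‖ * C)) * n1 (j i) := mul_le_mul_of_nonneg_left e1 (abs_nonneg _)
      _ = _ := by rw [Finset.mul_sum]; refine Finset.sum_congr rfl fun i _ => by ring
  refine (mul_le_mul_of_nonneg_left e2 (Finset.prod_nonneg fun _ _ => norm_nonneg _)).trans ?_
  rw [← Finset.prod_mul_distrib]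
  refine Finset.prod_le_prod (fun i _ => by positivity) fun i _ => ?_
  rw [Complex.norm_real, Real.norm_eq_abs, abs_mul, abs_norm, Real.abs_exp, norm_mul, mul_assoc, add_mul, Real.exp_add]
  refine mul_le_mul_of_nonneg_left ?_ (norm_nonneg _)
  exact mul_le_mul_of_nonneg_right (eC_pair_le (j i) _) (Real.exp_pos _).le

/-! functional equations -/
variable {N : ℕ} {a : Fin N → ℤ} {b : Fin N → ℂ} {t : ℕ}

lemma HH_conway (hB : IsLeech B) {σ} (hσ : σ ∈ ConwayGroup B) (y : CV) (τ : ℍ) (z : CV) (s : ℂ) :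
    HH B a b (actC σ y) τ (actC σ z) s = HH B a b y τ z s := by
  unfold HH
  refine Finset.prod_congr rfl fun i _ => ?_
  rw [← actC_smul, ← actC_smul, ← actC_add, theta_conway hB hσ]

lemma HH_quasi (hB : IsLeech B) (h1 : ∑ i, (a i) ^ 2 = (t : ℤ)) (h2 : ∑ i, (a i : ℂ) * b i = 0) (y : CV) (x x' : LV) (τ : ℍ) (z : CV) (s : ℂ) :
    HH B a b y τ (z + (τ : ℂ) • liftC x + liftC x') s =
      eC (t * (-((pairZ B x x : ℂ) * τ / 2) - pairC B (liftC x) z)) * HH B a b y τ z s := by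
  have h1' : ∑ i, ((a i : ℂ)) ^ 2 = (t : ℂ) := by exact_mod_cast congrArg (Int.cast : ℤ → ℂ) h1
  unfold HH
  have : ∀ i, thetaLeech B τ ((a i : ℂ) • (z + (τ : ℂ) • liftC x + liftC x') + (s * b i) • y) =
      eC ((a i : ℂ) ^ 2 * (-((pairZ B x x : ℂ) * τ / 2) - pairC B (liftC x) z) - ((a i : ℂ) * b i) * (s * pairC B (liftC x) y)) *
        thetaLeech B τ ((a i : ℂ) • z + (s * b i) • y) := by
    intro i
    have e : (a i : ℂ) • (z + (τ : ℂ) • liftC x + liftC x') + (s * b i) • y =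
        ((a i : ℂ) • z + (s * b i) • y) + (τ : ℂ) • liftC (a i • x) + liftC (a i • x') := by
      rw [liftC_smul, liftC_smul, smul_add, smul_add, smul_comm (a i : ℂ) (τ : ℂ)]; abel
    rw [e, theta_quasi hB]
    congr 2
    rw [pairZ_smul_left, pairZ_smul_right, liftC_smul, pairC_smul_left, pairC_add_right, pairC_smul_right, pairC_smul_right]
    push_cast; ring
  rw [Finset.prod_congr rfl fun i _ => this i, Finset.prod_mul_distrib, ← eC_sum, Finset.sum_sub_distrib, ← Finset.sum_mul, ← Finset.sum_mul,
    h1', h2, zero_mul, sub_zero]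

lemma HH_mod (hB : IsLeech B) (h1 : ∑ i, (a i) ^ 2 = (t : ℤ)) (h2 : ∑ i, (a i : ℂ) * b i = 0) (h3 : ∑ i, b i ^ 2 = 0)
    (y : CV) (A : SL(2, ℤ)) (τ : ℍ) (z : CV) (s : ℂ) :
    HH B a b y (A • τ) ((jfactor A τ)⁻¹ • z) s =
      jfactor A τ ^ (12 * N) * eC (t * slc A * pairC B z z / (2 * jfactor A τ)) * HH B a b y τ z (jfactor A τ * s) := by
  have h1' : ∑ i, ((a i : ℂ)) ^ 2 = (t : ℂ) := by exact_mod_cast congrArg (Int.cast : ℤ → ℂ) h1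
  have hj := jfactor_ne A τ
  unfold HH
  generalize hjj : jfactor A τ = J at *
  have : ∀ i, thetaLeech B (A • τ) ((a i : ℂ) • (J⁻¹ • z) + (s * b i) • y) =
      J ^ 12 * eC ((a i : ℂ) ^ 2 * (slc A * pairC B z z / (2 * J)) + (a i * b i) * (2 * s * slc A * pairC B z y / 2) + b i ^ 2 * (J * s ^ 2 * slc A * pairC B y y / 2)) *
        thetaLeech B τ ((a i : ℂ) • z + (J * s * b i) • y) := by
    intro i
    have e : (a i : ℂ) • (J⁻¹ • z) + (s * b i) • y = J⁻¹ • ((a i : ℂ) • z + (J * s * b i) • y) := by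
      rw [smul_add, smul_comm, smul_smul J⁻¹ (J * s * b i)]
      congr 2; field_simp
    have hm := theta_modular hB A τ ((a i : ℂ) • z + (J * s * b i) • y)
    rw [hjj] at hm
    rw [e, hm]
    congr 1
    congr 1
    congr 1
    simp only [pairC_add_left, pairC_add_right, pairC_smul_left, pairC_smul_right, pairC_comm hB.1 y z]
    push_cast
    field_simp
    ring
  rw [Finset.prod_congr rfl fun i _ => this i, Finset.prod_mul_distrib, Finset.prod_mul_distrib, ← eC_sum, Finset.sum_add_distrib, Finset.sum_add_distrib,
    ← Finset.sum_mul, ← Finset.sum_mul, ← Finset.sum_mul, h1', h2, h3, zero_mul, zero_mul, add_zero, add_zero]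
  rw [Finset.prod_const, Finset.card_univ, Fintype.card_fin, ← pow_mul]
  congr 3
  ring

end

section
/-! ### many Jacobi forms -/

variable {B : Matrix (Fin 24) (Fin 24) ℤ}

lemma avg_forms (hB : IsLeech B) {N : ℕ} {a : Fin N → ℤ} {b : Fin N → ℂ} {t : ℕ}
    (h1 : ∑ i, (a i) ^ 2 = (t : ℤ)) (h2 : ∑ i, (a i : ℂ) * b i = 0) (h3 : ∑ i, b i ^ 2 = 0) (y : CV) :
    ∃ Φ : ℕ → FF, (∀ m : ℕ, IsWeakJacobiForm B ((12 * N : ℕ) + (m : ℤ)) t (Φ m)) ∧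
      ∀ τ z s, HasSum (fun m => s ^ m * Φ m τ z) (∑ σ ∈ (conway_finite hB).toFinset, HH B a b (actC σ y) τ z s) := by
  set S := (conway_finite hB).toFinset with hS
  have hmem : ∀ σ, σ ∈ S ↔ σ ∈ ConwayGroup B := fun σ => by simp [hS]
  have hT := fun (σ : Matrix (Fin 24) (Fin 24) ℤ) (τ : ℍ) (z : CV) =>
    taylor_split (HH_abs hB a b (actC σ y) τ z) (HH_hasSum hB a b (actC σ y) τ z)
  obtain ⟨Φ, hΦ⟩ : ∃ Φ : ℕ → FF, ∀ m τ z, Φ m τ z = ∑ σ ∈ S, ∑' j : Fin N → LV, (alJ B b (actC σ y) j ^ m / m.factorial) * fterm B (nnJ B j) (llJ a j) τ z :=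
    ⟨_, fun _ _ _ => rfl⟩
  have hsum : ∀ τ z s, HasSum (fun m => s ^ m * Φ m τ z) (∑ σ ∈ S, HH B a b (actC σ y) τ z s) := by
    intro τ z s
    have := hasSum_sum (s := S) (fun σ _ => (hT σ τ z).2 s)
    refine this.congr_fun fun m => ?_
    rw [hΦ, Finset.mul_sum]
  refine ⟨Φ, fun m => ?_, hsum⟩
  refine ⟨fun n l => ∑ σ ∈ S, ∑' j : {j : Fin N → LV // (nnJ B j, llJ a j) = (n, l)}, (alJ B b (actC σ y) j ^ m / m.factorial), jf_mk hB ?_ ?_ ?_ ?_⟩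
  · intro ρ hρ τ z
    have e : ∀ s, (∑ σ ∈ S, HH B a b (actC σ y) τ (actC ρ z) s) = ∑ σ ∈ S, HH B a b (actC σ y) τ z s := by
      intro s
      symm
      refine Finset.sum_bij' (fun σ _ => ρ * σ) (fun σ _ => ρ⁻¹ * σ) ?_ ?_ ?_ ?_ ?_
      · intro σ hσ; rw [hmem] at *; exact conway_mul hρ hσ
      · intro σ hσ; rw [hmem] at *; exact conway_mul (conway_inv hρ) hσ
      · intro σ _; rw [← mul_assoc, conway_inv_mul hρ, one_mul]
      · intro σ _; rw [← mul_assoc, conway_mul_inv hρ, one_mul]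
      · intro σ _; rw [actC_mul, HH_conway hB hρ]
    have := ps_unique (c := fun m => Φ m τ (actC ρ z)) (d := fun m => Φ m τ z) (hsum τ (actC ρ z)) (fun s => by rw [e]; exact hsum τ z s)
    exact congrFun this m
  · intro x x' τ z
    have := ps_unique (c := fun m => Φ m τ (z + (τ : ℂ) • liftC x + liftC x'))
      (d := fun m => eC (t * (-((pairZ B x x : ℂ) * τ / 2) - pairC B (liftC x) z)) * Φ m τ z) (hsum τ _) (fun s => by
        simp only [HH_quasi hB h1 h2]
        rw [← Finset.mul_sum]
        refine ((hsum τ z s).mul_left _).congr_fun fun m => ?_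
        ring)
    exact congrFun this m
  · intro A τ z
    have := ps_unique (c := fun m => Φ m (A • τ) ((jfactor A τ)⁻¹ • z))
      (d := fun m => jfactor A τ ^ (12 * N) * eC (t * slc A * pairC B z z / (2 * jfactor A τ)) * (jfactor A τ ^ m * Φ m τ z)) (hsum _ _) (fun s => by
        simp only [HH_mod hB h1 h2 h3]
        rw [← Finset.mul_sum]
        refine ((hsum τ z (jfactor A τ * s)).mul_left _).congr_fun fun m => ?_
        rw [mul_pow]; ring)
    have := congrFun this m
    rw [this, ← Nat.cast_add, zpow_natCast, pow_add]
    ring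
  · intro τ z
    rw [hΦ]
    have := hasSum_sum (s := S) (fun σ _ => hasSum_fiber (fun j : Fin N → LV => (nnJ B j, llJ a j)) (fun j => alJ B b (actC σ y) j ^ m / m.factorial)
      (fun p => fterm B p.1 p.2 τ z) ((hT σ τ z).1 m).hasSum)
    refine this.congr_fun fun p => ?_
    rw [Finset.sum_mul]

lemma coeffZ_unique (hB : IsLeech B) {d d' : LV → ℂ} {F : CV → ℂ} (h : ∀ z, HasSum (fun l => d l * eC (pairC B (liftC l) z)) (F z))
    (h' : ∀ z, HasSum (fun l => d' l * eC (pairC B (liftC l) z)) (F z)) : d = d' := by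
  have key : ∀ (d : LV → ℂ), (∀ z, HasSum (fun l => d l * eC (pairC B (liftC l) z)) (F z)) →
      ∀ (τ : ℍ) (z : CV), HasSum (fun p : ℕ × LV => (if p.1 = 0 then d p.2 else 0) * fterm B p.1 p.2 τ z) (F z) := by
    intro d h τ z
    have hi : Function.Injective (fun l : LV => ((0 : ℕ), l)) := fun x y h => by simpa using h
    have := (hi.hasSum_iff (f := fun p : ℕ × LV => (if p.1 = 0 then d p.2 else 0) * fterm B p.1 p.2 τ z) (a := F z) (fun p hp => by
      have : p.1 ≠ 0 := fun h0 => hp ⟨p.2, by rw [← h0]⟩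
      simp [this])).mp
    apply this
    refine (h z).congr_fun fun l => ?_
    simp [fterm, eC_zero]
  have := coeff_unique hB (φ := fun _ z => F z) (f := fun n l => if n = 0 then d l else 0) (g := fun n l => if n = 0 then d' l else 0) (key d h) (key d' h')
  funext l
  simpa using congrFun (congrFun this 0) l

lemma eC_I (x : ℝ) : eC (x * Complex.I) = ((Real.exp (-2 * π * x) : ℝ) : ℂ) := by
  unfold eC
  push_cast
  congr 1
  linear_combination (2 * π * x : ℂ) * Complex.I_sq

lemma theta_pos (hB : IsLeech B) (r : ℝ) (v : LV) : thetaLeech B UpperHalfPlane.I (Complex.I • ((r : ℂ) • liftC v)) ≠ 0 := by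
  have h := theta_hasSum hB UpperHalfPlane.I (Complex.I • ((r : ℂ) • liftC v))
  have e : ∀ l : LV, eC ((pairZ B l l : ℂ) * (UpperHalfPlane.I : ℍ) / 2) * eC (pairC B (liftC l) (Complex.I • ((r : ℂ) • liftC v))) =
      ((Real.exp (-2 * π * (pairZ B l l / 2)) * Real.exp (-2 * π * (r * pairZ B l v)) : ℝ) : ℂ) := by
    intro l
    rw [Complex.ofReal_mul, ← eC_I, ← eC_I, pairC_smul_right, pairC_smul_right, pairC_lift, UpperHalfPlane.coe_I]
    push_cast
    congr 2 <;> ring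
  simp only [e] at h
  intro h0
  rw [h0] at h
  have h1 : HasSum (fun l : LV => Real.exp (-2 * π * (pairZ B l l / 2)) * Real.exp (-2 * π * (r * pairZ B l v))) 0 := by
    rw [← Complex.ofReal_zero] at h
    exact Complex.hasSum_ofReal.mp h
  have := h1.summable.tsum_pos (fun l => by positivity) 0 (by positivity)
  rw [h1.tsum_eq] at this
  exact lt_irrefl _ this

lemma theta_pow_coeff (hB : IsLeech B) (t : ℕ) : ∃ p : LV → ℂ, (∀ l, p l ≠ 0) ∧
    ∀ z, HasSum (fun l => p l * eC (pairC B (liftC l) z)) (thetaLeech B UpperHalfPlane.I z ^ (t + 1)) := by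
  have h : ∀ z, HasSum (fun j : Fin (t + 1) → LV => ((Real.exp (-2 * π * nnJ B j) : ℝ) : ℂ) * eC (pairC B (liftC (llJ (fun _ => 1) j)) z))
      (thetaLeech B UpperHalfPlane.I z ^ (t + 1)) := by
    intro z
    have := HH_hasSum hB (fun _ : Fin (t + 1) => 1) (fun _ => 0) 0 UpperHalfPlane.I z 0
    simp only [HH, zero_mul, Complex.exp_zero, mul_one, zero_smul, add_zero, Int.cast_one, one_smul, Finset.prod_const, Finset.card_univ, Fintype.card_fin] at this
    refine this.congr_fun fun j => ?_
    unfold fterm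
    rw [UpperHalfPlane.coe_I, ← eC_I]
    norm_cast
  refine ⟨_, ?_, fun z => hasSum_fiber (llJ (fun _ : Fin (t + 1) => 1)) _ (fun l => eC (pairC B (liftC l) z)) (h z)⟩
  intro l
  have h0 := (h 0).summable
  simp only [pairC_zero_right, eC_zero, mul_one] at h0
  have h1 : Summable (fun j : Fin (t + 1) → LV => Real.exp (-2 * π * nnJ B j)) := by exact_mod_cast h0
  have h2 := (h1.subtype {j | llJ (fun _ : Fin (t + 1) => 1) j = l}).tsum_pos (fun j => (Real.exp_pos _).le) ⟨Fin.cons l 0, by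
    change llJ _ _ = l
    simp [llJ, Fin.sum_univ_succ]⟩ (Real.exp_pos _)
  rw [← Complex.ofReal_tsum]
  exact Complex.ofReal_ne_zero.mpr h2.ne'

end

section
/-! ### rank lower bound -/

variable {B : Matrix (Fin 24) (Fin 24) ℤ}

lemma psi_mem (hB : IsLeech B) {t : ℕ} (W : Submodule ℂ (CV → ℂ)) [FiniteDimensional ℂ W]
    (hW : ∀ k ψ, IsWeakJacobiForm B k (t + 1) ψ → ψ UpperHalfPlane.I ∈ W) (v : LV) :
    (fun z => ∑ σ ∈ (conway_finite hB).toFinset,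
      thetaLeech B UpperHalfPlane.I (z + ((t + 1 : ℝ)⁻¹ : ℂ) • liftC (σ.mulVec v)) ^ (t + 1)) ∈ W := by
  set M := t * (t + 1) with hM
  set a : Fin ((t + 1) + M) → ℤ := Fin.addCases (fun _ => 1) (fun _ => 0) with ha
  set b : Fin ((t + 1) + M) → ℂ := Fin.addCases (Fin.cons (-(t : ℂ)) (fun _ => 1)) (fun _ => Complex.I) with hb
  have h1 : ∑ i, (a i) ^ 2 = ((t + 1 : ℕ) : ℤ) := by
    rw [Fin.sum_univ_add]; simp [ha]
  have h2 : ∑ i, (a i : ℂ) * b i = 0 := by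
    rw [Fin.sum_univ_add]; simp [ha, hb, Fin.sum_univ_succ]
  have h3 : ∑ i, b i ^ 2 = 0 := by
    rw [Fin.sum_univ_add]; simp [hb, Fin.sum_univ_succ, hM]; ring
  set y : CV := ((t + 1 : ℝ)⁻¹ : ℂ) • liftC v with hy
  obtain ⟨Φ, hΦ, hs⟩ := avg_forms hB h1 h2 h3 y
  have hcl := W.closed_of_finiteDimensional
  have h4 : HasSum (fun m => Φ m UpperHalfPlane.I) (fun z => ∑ σ ∈ (conway_finite hB).toFinset, HH B a b (actC σ y) UpperHalfPlane.I z 1) := by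
    rw [Pi.hasSum]
    intro z
    simpa using hs UpperHalfPlane.I z 1
  have h5 : (fun z => ∑ σ ∈ (conway_finite hB).toFinset, HH B a b (actC σ y) UpperHalfPlane.I z 1) ∈ W :=
    hcl.mem_of_tendsto h4 (Filter.Eventually.of_forall fun s => W.sum_mem fun m _ => hW _ _ (hΦ m))
  have hC0 : thetaLeech B UpperHalfPlane.I (Complex.I • y) ^ M ≠ 0 := by
    refine pow_ne_zero _ ?_
    have := theta_pos hB (t + 1 : ℝ)⁻¹ v
    rw [hy]
    convert! this using 4
    push_cast; rfl
  have h6 : ∀ σ ∈ (conway_finite hB).toFinset, ∀ z, HH B a b (actC σ y) UpperHalfPlane.I z 1 =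
      thetaLeech B UpperHalfPlane.I (Complex.I • y) ^ M * thetaLeech B UpperHalfPlane.I (z + ((t + 1 : ℝ)⁻¹ : ℂ) • liftC (σ.mulVec v)) ^ (t + 1) := by
    intro σ hσ z
    have hσ' : σ ∈ ConwayGroup B := by simpa using hσ
    have ey : actC σ y = ((t + 1 : ℝ)⁻¹ : ℂ) • liftC (σ.mulVec v) := by rw [hy, actC_smul, actC_lift]
    unfold HH
    rw [Fin.prod_univ_add, mul_comm]
    congr 1
    · simp only [ha, hb, Fin.addCases_right, Int.cast_zero, zero_smul, zero_add, one_mul]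
      rw [← actC_smul, theta_conway hB hσ']
      simp
    · simp only [ha, hb, Fin.addCases_left, Int.cast_one, one_smul, one_mul]
      rw [Fin.prod_univ_succ]
      simp only [Fin.cons_zero, Fin.cons_succ, one_smul]
      have e0 : z + (-(t : ℂ)) • actC σ y = (z + actC σ y) + ((UpperHalfPlane.I : ℍ) : ℂ) • liftC 0 + liftC (-(σ.mulVec v)) := by
        have : liftC (-(σ.mulVec v)) = -((t + 1 : ℂ) • actC σ y) := by
          rw [liftC_neg, ey, smul_smul]
          have : (t + 1 : ℂ) ≠ 0 := by exact_mod_cast Nat.succ_ne_zero t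
          have e : (t + 1 : ℂ) * (((t + 1 : ℝ)⁻¹ : ℝ) : ℂ) = 1 := by push_cast; field_simp
          first
            | rw [e, one_smul]
            | (push_cast; rw [mul_inv_cancel₀ this, one_smul])
        rw [this, liftC_zero, smul_zero]
        module
      rw [e0, theta_quasi hB, ← ey]
      simp [pairZ_zero_left, liftC_zero, pairC_zero_left, eC_zero]
      ring
  have h7 := W.smul_mem (thetaLeech B UpperHalfPlane.I (Complex.I • y) ^ M)⁻¹ h5
  convert! h7 using 1
  funext z
  rw [Pi.smul_apply, smul_eq_mul, Finset.mul_sum]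
  refine Finset.sum_congr rfl fun σ hσ => ?_
  rw [h6 σ hσ z, inv_mul_cancel_left₀ hC0]

lemma eC_eq_one {x : ℂ} (h : eC x = 1) : ∃ n : ℤ, x = n := by
  unfold eC at h
  rw [Complex.exp_eq_one_iff] at h
  obtain ⟨n, hn⟩ := h
  refine ⟨n, ?_⟩
  have : (2 * π * Complex.I : ℂ) ≠ 0 := by simp [Real.pi_ne_zero]
  exact mul_left_cancel₀ this (by rw [hn]; ring)

/-- the character attached to a lattice vector -/
def chX (B : Matrix (Fin 24) (Fin 24) ℤ) (t : ℕ) (x : LV) : Multiplicative LV →* ℂ where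
  toFun v := eC (((t : ℝ)⁻¹ : ℂ) * pairC B (liftC x) (liftC v.toAdd))
  map_one' := by simp [liftC_zero, pairC_zero_right, eC_zero]
  map_mul' v u := by rw [toAdd_mul, liftC_add, pairC_add_right, mul_add, eC_add]

lemma chX_inj (hB : IsLeech B) {t : ℕ} (ht : 1 ≤ t) {x x' : LV} (h : chX B t x = chX B t x') : ∃ w : LV, x' - x = (t : ℤ) • w := by
  have h1 : ∀ v : LV, ∃ n : ℤ, pairZ B (x' - x) v = t * n := by
    intro v
    have h2 := DFunLike.congr_fun h (Multiplicative.ofAdd v)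
    simp only [chX, MonoidHom.coe_mk, OneHom.coe_mk, toAdd_ofAdd] at h2
    have h3 : eC (((t : ℝ)⁻¹ : ℂ) * pairC B (liftC (x' - x)) (liftC v)) = 1 := by
      rw [sub_eq_add_neg, liftC_add, pairC_add_left, mul_add, eC_add, ← h2, ← eC_add, ← mul_add, ← pairC_add_left, liftC_neg, add_neg_cancel,
        pairC_zero_left, mul_zero, eC_zero]
    obtain ⟨n, hn⟩ := eC_eq_one h3
    refine ⟨n, ?_⟩
    rw [pairC_lift] at hn
    have ht' : (t : ℂ) ≠ 0 := by exact_mod_cast (by omega : t ≠ 0)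
    have : (pairZ B (x' - x) v : ℂ) = t * n := by
      rw [← hn]
      push_cast
      field_simp
    exact_mod_cast this
  choose u hu using fun i => h1 (Pi.single i 1)
  have h4 : (x' - x) ᵥ* B = (t : ℤ) • u := by
    funext i
    have := hu i
    unfold pairZ at this
    rw [dotProduct_mulVec, dotProduct_single, mul_one] at this
    rw [this]; simp
  have hdet : IsUnit B.det := by rw [hB.2.1]; exact isUnit_one
  refine ⟨u ᵥ* B⁻¹, ?_⟩
  have h5 : ((x' - x) ᵥ* B) ᵥ* B⁻¹ = x' - x := by
    rw [vecMul_vecMul, mul_nonsing_inv _ hdet, vecMul_one]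
  rw [← h5, h4, smul_vecMul]

lemma lower (hB : IsLeech B) {t n : ℕ} (ht : 1 ≤ t) {w : Fin n → ℤ} {φ : Fin n → FF} (hφ : ∀ i, IsWeakJacobiForm B (w i) t (φ i))
    (hgen : ∀ k ψ, IsWeakJacobiForm B k t ψ → ∃ c : Fin n → ℂ, ∀ z, ψ UpperHalfPlane.I z = ∑ i, c i * φ i UpperHalfPlane.I z) :
    sRank B t ≤ n := by
  classical
  obtain ⟨t', rfl⟩ : ∃ t', t = t' + 1 := ⟨t - 1, by omega⟩
  set S := (conway_finite hB).toFinset with hS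
  have hmem : ∀ σ, σ ∈ S ↔ σ ∈ ConwayGroup B := fun σ => by simp [hS]
  -- coefficients of the generators
  have hd : ∀ i, ∃ d : LV → ℂ, ∀ z, HasSum (fun l => d l * eC (pairC B (liftC l) z)) (φ i UpperHalfPlane.I z) := by
    intro i
    obtain ⟨f, hf⟩ := hφ i
    refine ⟨_, fun z => hasSum_fiber (Prod.snd : ℕ × LV → LV) (fun p => f p.1 p.2 * eC (p.1 * ((UpperHalfPlane.I : ℍ) : ℂ))) (fun l => eC (pairC B (liftC l) z)) ?_⟩
    refine (hf.expansion UpperHalfPlane.I z).congr_fun fun p => ?_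
    unfold fterm; ring
  choose d hd using hd
  obtain ⟨p, hp0, hp⟩ := theta_pow_coeff hB t'
  set W := Submodule.span ℂ (Set.range fun i => φ i UpperHalfPlane.I) with hW
  have hWf : FiniteDimensional ℂ W := FiniteDimensional.span_of_finite ℂ (Set.finite_range _)
  have hmW : ∀ k ψ, IsWeakJacobiForm B k (t' + 1) ψ → ψ UpperHalfPlane.I ∈ W := by
    intro k ψ h
    obtain ⟨c, hc⟩ := hgen k ψ h
    rw [hW, Submodule.mem_span_range_iff_exists_fun]
    refine ⟨c, ?_⟩
    funext z
    simp [hc z]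
  have hcoef : ∀ v : LV, ∃ c : Fin n → ℂ, ∀ l, p l * ∑ σ ∈ S, chX B (t' + 1) (σ⁻¹.mulVec l) (Multiplicative.ofAdd v) = ∑ i, c i * d i l := by
    intro v
    have h1 := psi_mem hB W hmW v
    rw [hW, Submodule.mem_span_range_iff_exists_fun] at h1
    obtain ⟨c, hc⟩ := h1
    refine ⟨c, fun l => ?_⟩
    refine congrFun (coeffZ_unique hB (d := fun l => p l * ∑ σ ∈ S, chX B (t' + 1) (σ⁻¹.mulVec l) (Multiplicative.ofAdd v))
      (d' := fun l => ∑ i, c i * d i l) (F := fun z => ∑ σ ∈ S, thetaLeech B UpperHalfPlane.I (z + ((t' + 1 : ℝ)⁻¹ : ℂ) • liftC (σ.mulVec v)) ^ (t' + 1)) ?_ ?_) l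
    · intro z
      have := hasSum_sum (s := S) (fun σ _ => hp (z + ((t' + 1 : ℝ)⁻¹ : ℂ) • liftC (σ.mulVec v)))
      refine this.congr_fun fun l => ?_
      rw [Finset.mul_sum, Finset.sum_mul]
      refine Finset.sum_congr rfl fun σ hσ => ?_
      have hσ' := conway_inv ((hmem σ).mp hσ)
      have e : pairC B (liftC (σ⁻¹.mulVec l)) (liftC v) = pairC B (liftC l) (liftC (σ.mulVec v)) := by
        rw [pairC_lift, pairC_lift, ← pairZ_act hσ' l (σ.mulVec v), mulVec_mulVec, conway_inv_mul ((hmem σ).mp hσ), one_mulVec]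
      rw [pairC_add_right, pairC_smul_right, eC_add]
      simp only [chX, MonoidHom.coe_mk, OneHom.coe_mk, toAdd_ofAdd]
      rw [e]
      push_cast
      ring
    · intro z
      have := hasSum_sum (s := Finset.univ) (fun i _ => (hd i z).mul_left (c i))
      have e := congrFun hc z
      simp only [Finset.sum_apply, Pi.smul_apply, smul_eq_mul] at e
      rw [← e]
      refine this.congr_fun fun l => ?_
      rw [Finset.sum_mul]
      refine Finset.sum_congr rfl fun i _ => by ring
  choose c hc using hcoef
  by_contra! hn
  have : Finite (minimalSet B (t' + 1)) := min_finite hB _ ht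
  let _ := Fintype.ofFinite (Quot (fun v u : minimalSet B (t' + 1) => conjModT B (t' + 1) v.1 u.1))
  obtain ⟨r, hr⟩ : ∃ r : Quot (fun v u : minimalSet B (t' + 1) => conjModT B (t' + 1) v.1 u.1) → LV,
      ∀ q q', conjModT B (t' + 1) (r q) (r q') → q = q' := by
    refine ⟨fun q => q.out.1, fun q q' h => ?_⟩
    rw [← Quot.out_eq q, ← Quot.out_eq q']
    exact Quot.sound h
  have hdep : ¬ LinearIndependent ℂ (fun q => fun i => d i (r q)) := fun h => by
    have := h.fintype_card_le_finrank
    rw [Module.finrank_fintype_fun_eq_card, Fintype.card_fin, ← Nat.card_eq_fintype_card] at this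
    exact absurd hn (not_lt.mpr this)
  obtain ⟨e, he, q0, hq0⟩ := Fintype.not_linearIndependent_iff.mp hdep
  have he' : ∀ i, ∑ q, e q * d i (r q) = 0 := fun i => by
    have := congrFun he i
    simpa using this
  set F : (Multiplicative LV →* ℂ) →₀ ℂ := ∑ q, ∑ σ ∈ S, Finsupp.single (chX B (t' + 1) (σ⁻¹.mulVec (r q))) (e q * p (r q)) with hF
  have hF0 : F = 0 := by
    have hli := linearIndependent_monoidHom (Multiplicative LV) ℂ
    rw [linearIndependent_iff] at hli
    refine hli F ?_
    rw [hF, map_sum]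
    simp only [map_sum, Finsupp.linearCombination_single]
    funext v
    simp only [Finset.sum_apply, Pi.smul_apply, smul_eq_mul, Pi.zero_apply]
    have : ∀ q, ∑ σ ∈ S, e q * p (r q) * chX B (t' + 1) (σ⁻¹.mulVec (r q)) v = ∑ i, c v.toAdd i * (e q * d i (r q)) := by
      intro q
      have h1 := hc v.toAdd (r q)
      rw [ofAdd_toAdd] at h1
      rw [← Finset.mul_sum, mul_assoc, h1, Finset.mul_sum]
      refine Finset.sum_congr rfl fun i _ => by ring
    rw [Finset.sum_congr rfl fun q _ => this q, Finset.sum_comm]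
    refine Finset.sum_eq_zero fun i _ => ?_
    rw [← Finset.mul_sum, he', mul_zero]
  have h1 := DFunLike.congr_fun hF0 (chX B (t' + 1) (r q0))
  rw [hF] at h1
  simp only [Finsupp.finsetSum_apply, Finsupp.single_apply, Finsupp.coe_zero, Pi.zero_apply] at h1
  rw [Finset.sum_eq_single q0] at h1
  · rw [← Finset.sum_filter, Finset.sum_const, nsmul_eq_mul] at h1
    have h2 : (S.filter fun σ => chX B (t' + 1) (σ⁻¹.mulVec (r q0)) = chX B (t' + 1) (r q0)).card ≠ 0 := by
      refine Finset.card_ne_zero.mpr ⟨1, ?_⟩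
      rw [Finset.mem_filter, hmem]
      exact ⟨conway_one, by simp⟩
    rcases mul_eq_zero.mp h1 with h | h
    · exact h2 (by exact_mod_cast h)
    · exact mul_ne_zero hq0 (hp0 _) h
  · intro q _ hq
    refine Finset.sum_eq_zero fun σ hσ => ?_
    rw [if_neg]
    intro h
    obtain ⟨u, hu⟩ := chX_inj hB ht h
    exact hq (hr q0 q ⟨σ⁻¹, conway_inv ((hmem σ).mp hσ), u, hu⟩).symm
  · simp

end

/-- Theorem (Sun–Wang): For every `t ≥ 1`, the space `J^{w,Co₀}_{*,Λ,t}` of Conway invariant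
weak Jacobi forms of integral weight and index `t` is a free module of rank `s(t)` over
`M_*(SL₂(ℤ)) = ℂ[E₄,E₆]`; the `q⁰`-terms of any set of free generators are `ℂ`-linear
combinations of the basic Conway orbits of index `t` (i.e. supported on `S_t`) and are
linearly independent over `ℂ`; and `J^{Co₀}_{*,Λ,t}` is also a free module of the same rank
`s(t)` over `ℂ[E₄,E₆]`. -/
theorem conway_weak_jacobi_free_of_rank_s
    (B : Matrix (Fin 24) (Fin 24) ℤ) (hB : IsLeech B) (t : ℕ) (ht : 1 ≤ t) :
    (∃ (w : Fin (sRank B t) → ℤ) (φ : Fin (sRank B t) → UpperHalfPlane → CV → ℂ),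
      FreelyGenerates (fun k ψ => IsWeakJacobiForm B k t ψ) w φ) ∧
    (∀ (n : ℕ) (w : Fin n → ℤ) (φ : Fin n → UpperHalfPlane → CV → ℂ)
        (f : Fin n → ℕ → LV → ℂ),
      (∀ i, IsJacobiFormWith B (w i) t (φ i) (f i)) →
      FreelyGenerates (fun k ψ => IsWeakJacobiForm B k t ψ) w φ →
      (∀ (i : Fin n) (ℓ : LV), f i 0 ℓ ≠ 0 → ℓ ∈ minimalSet B t) ∧
        LinearIndependent ℂ (fun i : Fin n => f i 0)) ∧
    (∃ (w : Fin (sRank B t) → ℤ) (φ : Fin (sRank B t) → UpperHalfPlane → CV → ℂ),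
      FreelyGenerates (fun k ψ => IsHolJacobiForm B k t ψ) w φ) := by
  refine ⟨?_, ?_, ?_⟩
  · obtain ⟨n, w, φ, hn, h⟩ := exists_free (gmod_weak hB ht) (sRank B t)
      (fun n w φ h hi => upper hB ht h hi)
    have hl : sRank B t ≤ n := by
      refine lower hB ht h.1 ?_
      intro k ψ hψ
      obtain ⟨g, e⟩ := (h.2 k ψ hψ).exists
      refine ⟨fun i => g i UpperHalfPlane.I, fun z => ?_⟩
      have := e UpperHalfPlane.I z
      simpa [Finset.sum_apply] using this
    obtain rfl : n = sRank B t := le_antisymm hn hl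
    exact ⟨w, φ, h⟩
  · intro n w φ f hf h
    exact ⟨fun i l hl => supp_min hB ht (hf i) l hl, claim2 hB ht hf h⟩
  · obtain ⟨n, w, φ, hn, h⟩ := exists_free (gmod_hol hB ht) (sRank B t)
      (fun n w φ h hi => upper hB ht (fun i => hol_weak (h i)) hi)
    have hl : sRank B t ≤ n := by
      refine lower hB ht (fun i => hol_weak (h.1 i)) ?_
      intro k ψ hψ
      obtain ⟨N, hN⟩ := weak_to_hol hB t ht
      obtain ⟨g, e⟩ := (h.2 _ _ (hN k ψ hψ)).exists
      refine ⟨fun i => (DD UpperHalfPlane.I ^ N)⁻¹ * g i UpperHalfPlane.I, fun z => ?_⟩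
      have := e UpperHalfPlane.I z
      have h0 : DD UpperHalfPlane.I ^ N ≠ 0 := pow_ne_zero _ (DD_ne _)
      simp only [mul_assoc]
      rw [← Finset.mul_sum, eq_inv_mul_iff_mul_eq₀ h0]
      simpa [Finset.sum_apply] using this
    obtain rfl : n = sRank B t := le_antisymm hn hl
    exact ⟨w, φ, h⟩

end
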